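/- arXiv:2412.13938 — 3 statements merged into one kernel-verified Lean document; each statement's English description precedes it below -/
import Mathlib

section
/- If an element x_{ik+m} of a local greedy subsequence has a positive fingerprint, i.e., x_{ik+m} ∉ [x_{m-1}, x_{(i-1)k+m}), then x_{ik+m} is an endpoint of an optimal solution, and the next k* greedy steps form an optimal partition. -/
open Set

/-- The closed clockwise arc `[a, b]` on a circularly ordered boundary. -/
def arcCC {α : Type*} [CircularOrder α] (a b : α) : Set α := {x | Btw.btw a x b}

/-- The half-open clockwise arc `(a, b]`. -/
def arcOC {α : Type*} [CircularOrder α] (a b : α) : Set α := {x | Btw.btw a x b ∧ x ≠ a}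

/-- The half-open clockwise arc `[a, b)`. -/
def arcCO {α : Type*} [CircularOrder α] (a b : α) : Set α := {x | Btw.btw a x b ∧ x ≠ b}

/-- Cyclic successor of an index. -/
def nextIdx {k : ℕ} (i : Fin k) : Fin k := ⟨(i.val + 1) % k, Nat.mod_lt _ i.pos⟩

/-- `y 0, …, y (k-1)` partitions the circular boundary into `k` visible intervals:
each consecutive interval is visible and the intervals cover the whole boundary. -/
def IsPartition {α : Type*} [CircularOrder α] (Vis : α → α → Prop) {k : ℕ}
    (y : Fin k → α) : Prop :=
  (∀ i : Fin k, Vis (y i) (y (nextIdx i))) ∧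
    (⋃ i : Fin k, arcCC (y i) (y (nextIdx i))) = Set.univ

/-- An optimal solution: a partition into visible intervals of minimum size. -/
def IsOptimalPartition {α : Type*} [CircularOrder α] (Vis : α → α → Prop) {k : ℕ}
    (y : Fin k → α) : Prop :=
  IsPartition Vis y ∧ ∀ (m : ℕ) (z : Fin m → α), IsPartition Vis z → k ≤ m


theorem cut_linear {α : Type*} [CircularOrder α] (o : α) :
    ∃ _ : LinearOrder α, ∀ a b c : α, a ≤ b → b ≤ c → Btw.btw a b c := by
  classical
  have tr : ∀ a b c : α, SBtw.sbtw o a b → SBtw.sbtw o b c →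
      SBtw.sbtw a b c ∧ SBtw.sbtw o a c := by
    intro a b c h1 h2
    have h3 : SBtw.sbtw c o b := h2.cyclic_right
    have h4 : SBtw.sbtw c a b := h3.trans_left h1
    refine ⟨h4.cyclic_left, ?_⟩
    exact h1.trans_right h2
  have btwl : ∀ a b : α, Btw.btw a a b := btw_refl_left
  let L : LinearOrder α :=
    { le := fun a b => a = o ∨ a = b ∨ SBtw.sbtw o a b
      le_refl := fun a => Or.inr (Or.inl rfl)
      le_trans := by
        rintro a b c (h | h | h) (h' | h' | h')
        · exact Or.inl h
        · exact Or.inl h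
        · exact Or.inl h
        · exact Or.inl (h.trans h')
        · exact Or.inr (Or.inl (h.trans h'))
        · subst h; exact Or.inr (Or.inr h')
        · subst h'; exact absurd h sbtw_irrefl_left_right
        · subst h'; exact Or.inr (Or.inr h)
        · exact Or.inr (Or.inr (tr a b c h h').2)
      le_antisymm := by
        rintro a b (h | h | h) (h' | h' | h')
        · rw [h, h']
        · exact h'.symm
        · subst h; exact absurd h' sbtw_irrefl_left_right
        · exact h
        · exact h
        · exact h
        · subst h'; exact absurd h sbtw_irrefl_left_right
        · exact h'.symm
        · exact absurd h'.btw.cyclic_left h.not_btw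
      le_total := by
        intro a b
        by_cases h1 : a = o
        · exact Or.inl (Or.inl h1)
        by_cases h2 : b = o
        · exact Or.inr (Or.inl h2)
        by_cases h3 : a = b
        · exact Or.inl (Or.inr (Or.inl h3))
        by_cases h : SBtw.sbtw o a b
        · exact Or.inl (Or.inr (Or.inr h))
        · refine Or.inr (Or.inr (Or.inr ?_))
          rw [sbtw_iff_not_btw, not_not] at h
          rw [sbtw_iff_not_btw]
          intro h'
          rcases btw_antisymm h h'.cyclic_right with e | e | e
          · exact h3 e.symm
          · exact h1 e
          · exact h2 e.symm
      toDecidableLE := Classical.decRel _ }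
  refine ⟨L, ?_⟩
  intro a b c hab hbc
  have hab' : a = o ∨ a = b ∨ SBtw.sbtw o a b := hab
  have hbc' : b = o ∨ b = c ∨ SBtw.sbtw o b c := hbc
  rcases hab' with h | h | h
  · subst h
    rcases hbc' with h' | h' | h'
    · subst h'; exact btwl _ _
    · subst h'; exact (btwl _ _).cyclic_right
    · exact h'.btw
  · subst h; exact btwl _ _
  · rcases hbc' with h' | h' | h'
    · subst h'; exact absurd h sbtw_irrefl_left_right
    · subst h'; exact (btwl _ _).cyclic_right
    · exact (tr a b c h h').1.btw

/-- The universal cover of a circular order. -/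
theorem exists_cover.{u} {α : Type u} [CircularOrder α] (o : α) :
    ∃ (β : Type u) (_ : LinearOrder β) (T : β → β) (π : β → α),
      StrictMono T ∧ (∀ x, x < T x) ∧ (∀ x, π (T x) = π x) ∧
      (∀ x a, ∃ b, x ≤ b ∧ b < T x ∧ π b = a) ∧
      (∀ x b c, x ≤ b → b < c → c < T x → π b ≠ π c) ∧
      (∀ a b c, a ≤ b → b ≤ c → c ≤ T a → Btw.btw (π a) (π b) (π c)) ∧
      (∀ a, ∃ b, π b = a) := by
  obtain ⟨L, hL⟩ := cut_linear o
  refine ⟨ℤ ×ₗ α, inferInstance, fun x => toLex ((ofLex x).1 + 1, (ofLex x).2),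
    fun x => (ofLex x).2, ?_, ?_, ?_, ?_, ?_, ?_, fun a => ⟨toLex (0, a), rfl⟩⟩
  · rintro ⟨n, a⟩ ⟨n', a'⟩ h
    replace h : n < n' ∨ n = n' ∧ a < a' := (Prod.Lex.lt_iff).1 h
    refine (Prod.Lex.lt_iff).2 ?_
    rcases h with h | h
    · left; have : n < n' := h; show n + 1 < n' + 1; omega
    · right; exact ⟨congrArg (· + 1) h.1, h.2⟩
  · rintro ⟨n, a⟩
    refine (Prod.Lex.lt_iff).2 ?_
    left; show n < n + 1; omega
  · intro x; rfl
  · rintro ⟨n, a⟩ a'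
    rcases le_or_gt a a' with h | h
    · refine ⟨toLex (n, a'), ?_, ?_, rfl⟩
      · refine (Prod.Lex.le_iff).2 ?_; right; exact ⟨rfl, h⟩
      · refine (Prod.Lex.lt_iff).2 ?_; left; show n < n + 1; omega
    · refine ⟨toLex (n + 1, a'), ?_, ?_, rfl⟩
      · refine (Prod.Lex.le_iff).2 ?_; left; show n < n + 1; omega
      · refine (Prod.Lex.lt_iff).2 ?_; right; exact ⟨rfl, h⟩
  · rintro ⟨n, a⟩ ⟨n1, b⟩ ⟨n2, c⟩ h1 h2 h3 h4
    replace h1 : n < n1 ∨ n = n1 ∧ a ≤ b := (Prod.Lex.le_iff).1 h1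
    replace h2 : n1 < n2 ∨ n1 = n2 ∧ b < c := (Prod.Lex.lt_iff).1 h2
    replace h3 : n2 < n + 1 ∨ n2 = n + 1 ∧ c < a := (Prod.Lex.lt_iff).1 h3
    replace h4 : b = c := h4
    subst h4
    rcases h1 with h1 | h1 <;> rcases h2 with h2 | h2 <;> rcases h3 with h3 | h3
    · omega
    · omega
    · omega
    · exact lt_irrefl _ h2.2
    · omega
    · exact not_lt.2 h1.2 h3.2
    · exact lt_irrefl _ h2.2
    · exact lt_irrefl _ h2.2
  · rintro ⟨n, a⟩ ⟨n1, b⟩ ⟨n2, c⟩ h1 h2 h3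
    replace h1 : n < n1 ∨ n = n1 ∧ a ≤ b := (Prod.Lex.le_iff).1 h1
    replace h2 : n1 < n2 ∨ n1 = n2 ∧ b ≤ c := (Prod.Lex.le_iff).1 h2
    replace h3 : n2 < n + 1 ∨ n2 = n + 1 ∧ c ≤ a := (Prod.Lex.le_iff).1 h3
    show Btw.btw a b c
    rcases h1 with h1 | h1 <;> rcases h2 with h2 | h2 <;> rcases h3 with h3 | h3
    · omega
    · omega
    · omega
    · exact (hL b c a h2.2 h3.2).cyclic_right
    · omega
    · exact (hL c a b h3.2 h1.2).cyclic_left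
    · exact hL a b c h1.2 h2.2
    · omega

/-- The lift of the greedy map to the cover. -/
theorem exists_greedy_lift {α β : Type*} [CircularOrder α] [LinearOrder β]
    (T : β → β) (π : β → α) (hT : StrictMono T)
    (hπT : ∀ x, π (T x) = π x)
    (hsurj : ∀ x a, ∃ b, x ≤ b ∧ b < T x ∧ π b = a)
    (hinj : ∀ x b c, x ≤ b → b < c → c < T x → π b ≠ π c)
    (hbtw : ∀ a b c, a ≤ b → b ≤ c → c ≤ T a → Btw.btw (π a) (π b) (π c))
    (Vis : α → α → Prop) (G : α → α)
    (hMono : ∀ a b c d : α, arcCC a b ⊆ arcCC c d → Vis c d → Vis a b)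
    (hVisG : ∀ x : α, Vis x (G x))
    (hGmax : ∀ x y : α, Vis x y → Btw.btw x y (G x))
    (hGne : ∀ x : α, G x ≠ x) :
    ∃ g : β → β, Monotone g ∧ (∀ x, x < g x) ∧ (∀ x, g x < T x) ∧ (∀ x, g (T x) = T (g x)) ∧
      (∀ x, π (g x) = G (π x)) ∧
      (∀ x y, x < y → y < T x → Vis (π x) (π y) → y ≤ g x) ∧
      (∀ x y, x < y → y ≤ g x → Vis (π x) (π y)) := by
  have hconv : ∀ a b c, a < c → c < T a → a ≤ b → b < T a →
      Btw.btw (π a) (π b) (π c) → b ≤ c := by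
    intro a b c h1 h2 h3 h4 h5
    by_contra h6
    push Not at h6
    have h7 := hbtw a c b h1.le h6.le h4.le
    rcases btw_antisymm h5 h7.cyclic_left with e | e | e
    · exact hinj a a b le_rfl (h1.trans h6) h4 e
    · exact hinj a c b h1.le h6 h4 e.symm
    · exact hinj a a c le_rfl h1 h2 e.symm
  choose g hg1 hg2 hg3 using fun x => hsurj x (G (π x))
  have hlt : ∀ x, x < g x := by
    intro x
    refine lt_of_le_of_ne (hg1 x) ?_
    intro h
    apply hGne (π x)
    rw [← hg3 x, ← h]
  have hmax : ∀ x y, x < y → y < T x → Vis (π x) (π y) → y ≤ g x := by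
    intro x y h1 h2 h3
    apply hconv x y (g x) (hlt x) (hg2 x) h1.le h2
    rw [hg3]
    exact hGmax _ _ h3
  have hsub : ∀ x y, x ≤ y → y < g x → Vis (π y) (π (g x)) := by
    intro x y h1 h2
    apply hMono _ _ (π x) (π (g x)) _ (by rw [hg3]; exact hVisG _)
    intro a ha
    obtain ⟨b, hb1, hb2, rfl⟩ := hsurj y a
    have : b ≤ g x := hconv y b (g x) h2 ((hg2 x).trans_le (hT.monotone h1)) hb1 hb2 ha
    exact hbtw x b (g x) (h1.trans hb1) this (hg2 x).le
  refine ⟨g, ?_, hlt, hg2, ?_, hg3, hmax, ?_⟩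
  · intro x y h
    rcases le_or_gt (g x) y with h1 | h1
    · exact h1.trans (hlt y).le
    · exact hmax y (g x) h1 ((hg2 x).trans_le (hT.monotone h)) (hsub x y h h1)
  · intro x
    have e : π (g (T x)) = π (T (g x)) := by rw [hg3, hπT, hπT, hg3]
    have l1 : T x < T (g x) := hT (hlt x)
    have l2 : T (g x) < T (T x) := hT (hg2 x)
    rcases lt_trichotomy (g (T x)) (T (g x)) with h | h | h
    · exact absurd e (hinj (T x) _ _ (hlt _).le h l2)
    · exact h
    · exact absurd e.symm (hinj (T x) _ _ l1.le h (hg2 _))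
  · intro x y h1 h2
    apply hMono _ _ (π x) (π (g x)) _ (by rw [hg3]; exact hVisG _)
    intro a ha
    obtain ⟨b, hb1, hb2, rfl⟩ := hsurj x a
    have : b ≤ y := hconv x b y h1 (h2.trans_lt (hg2 x)) hb1 hb2 ha
    exact hbtw x b (g x) hb1 (this.trans h2) (hg2 x).le

/-- If the greedy sequence from `q` completes a revolution in exactly `s` steps (and not
before), then it yields a partition with `s` intervals. -/
theorem greedy_partition {α β : Type*} [CircularOrder α] [LinearOrder β]
    (T : β → β) (π : β → α)
    (hπT : ∀ x, π (T x) = π x)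
    (hsurj : ∀ x a, ∃ b, x ≤ b ∧ b < T x ∧ π b = a)
    (hbtw : ∀ a b c, a ≤ b → b ≤ c → c ≤ T a → Btw.btw (π a) (π b) (π c))
    (Vis : α → α → Prop) (g : β → β) (hlt : ∀ x, x < g x) (hgT : ∀ x, g x < T x)
    (hvis : ∀ x y, x < y → y ≤ g x → Vis (π x) (π y))
    (Q : ℕ → β) (hQ : ∀ n, Q (n + 1) = g (Q n)) (s : ℕ)
    (hs : T (Q 0) ≤ Q s) (hmin : ∀ j, j < s → Q j < T (Q 0)) :
    IsPartition Vis (fun t : Fin s => π (Q t.val)) := by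
  have hmono : StrictMono Q := strictMono_nat_of_lt_succ fun n => by rw [hQ]; exact hlt _
  have hTlt : ∀ x, x < T x := fun x => (hlt x).trans (hgT x)
  have hs2 : 2 ≤ s := by
    by_contra h
    have : s = 0 ∨ s = 1 := by omega
    rcases this with rfl | rfl
    · exact absurd (hTlt (Q 0)) (not_lt.2 hs)
    · rw [hQ 0] at hs
      exact absurd (hgT (Q 0)) (not_lt.2 hs)
  have hnext : ∀ t : Fin s, ∃ c, Q t.val < c ∧ c ≤ g (Q t.val) ∧ π (Q (nextIdx t).val) = π c ∧
      (t.val + 1 < s → c = Q (t.val + 1)) ∧ (t.val + 1 = s → c = T (Q 0)) := by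
    rintro ⟨t, ht⟩
    by_cases h : t + 1 < s
    · refine ⟨Q (t + 1), hmono (Nat.lt_succ_self _), (hQ t).le, ?_, fun _ => rfl, fun h' => ?_⟩
      · simp [nextIdx, Nat.mod_eq_of_lt h]
      · simp at h'; omega
    · have h1 : t + 1 = s := by omega
      refine ⟨T (Q 0), hmin t ht, ?_, ?_, fun h' => absurd h' h, fun _ => rfl⟩
      · show T (Q 0) ≤ g (Q t)
        rw [← hQ, h1]; exact hs
      · simp [nextIdx, h1, hπT]
  constructor
  · intro t
    obtain ⟨c, h1, h2, h3, -⟩ := hnext t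
    show Vis (π (Q t.val)) (π (Q (nextIdx t).val))
    rw [h3]
    exact hvis _ _ h1 h2
  · rw [Set.eq_univ_iff_forall]
    intro a
    obtain ⟨b, hb1, hb2, rfl⟩ := hsurj (Q 0) a
    have hex : ∃ n, b < Q n := ⟨s, hb2.trans_le hs⟩
    classical
    let n := Nat.find hex
    have hn : b < Q n := Nat.find_spec hex
    have hns : n ≤ s := Nat.find_min' hex (hb2.trans_le hs)
    have hn0 : n ≠ 0 := by
      intro h
      rw [h] at hn
      exact not_lt.2 hb1 hn
    have hn1 : Q (n - 1) ≤ b := not_lt.1 (Nat.find_min hex (show n - 1 < n by omega))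
    rw [Set.mem_iUnion]
    refine ⟨⟨n - 1, by omega⟩, ?_⟩
    obtain ⟨c, h1, h2, h3, h4, h5⟩ := hnext ⟨n - 1, by omega⟩
    show Btw.btw (π (Q (n - 1))) (π b) (π (Q (nextIdx _).val))
    rw [h3]
    refine hbtw _ _ _ hn1 ?_ (h2.trans (hgT _).le)
    by_cases h : n < s
    · rw [h4 (by simp; omega)]
      simp only
      rw [Nat.sub_add_cancel (by omega)]
      exact hn.le
    · rw [h5 (by simp; omega)]
      exact hb2.le

/-- A partition lifts to a point that completes a revolution. -/
theorem partition_lift {α β : Type*} [CircularOrder α] [LinearOrder β]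
    (T : β → β) (π : β → α)
    (hsurj : ∀ x a, ∃ b, x ≤ b ∧ b < T x ∧ π b = a)
    (hinj : ∀ x b c, x ≤ b → b < c → c < T x → π b ≠ π c)
    (Vis : α → α → Prop) (hVne : ∀ a, ¬ Vis a a) (g : β → β) (hg : Monotone g)
    (hmax : ∀ x y, x < y → y < T x → Vis (π x) (π y) → y ≤ g x)
    {s : ℕ} (hs : 0 < s) (y : Fin s → α) (hy : IsPartition Vis y) (x : β) :
    ∃ p, x ≤ p ∧ p < T x ∧ T p ≤ g^[s] p := by
  obtain ⟨p, hp1, hp2, hp3⟩ := hsurj x (y ⟨0, hs⟩)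
  refine ⟨p, hp1, hp2, ?_⟩
  have key : ∀ j : ℕ, ∃ q, p ≤ q ∧ (0 < j → p < q) ∧ q ≤ g^[j] p ∧
      π q = y ⟨j % s, Nat.mod_lt _ hs⟩ := by
    intro j
    induction j with
    | zero => exact ⟨p, le_rfl, fun h => absurd h (lt_irrefl _), le_rfl, by simp [hp3]⟩
    | succ j ih =>
      obtain ⟨q, h1, -, h2, h3⟩ := ih
      have hv := hy.1 ⟨j % s, Nat.mod_lt _ hs⟩
      have e : nextIdx (⟨j % s, Nat.mod_lt _ hs⟩ : Fin s) = ⟨(j + 1) % s, Nat.mod_lt _ hs⟩ := by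
        simp [nextIdx]
      rw [e, ← h3] at hv
      obtain ⟨r, r1, r2, r3⟩ := hsurj q (y ⟨(j + 1) % s, Nat.mod_lt _ hs⟩)
      rw [← r3] at hv
      have hqr : q < r := lt_of_le_of_ne r1 (by rintro rfl; exact hVne _ hv)
      refine ⟨r, h1.trans r1, fun _ => h1.trans_lt hqr, ?_, r3⟩
      rw [Function.iterate_succ_apply']
      exact (hmax q r hqr r2 hv).trans (hg h2)
  obtain ⟨q, h1, h2, h3, h4⟩ := key s
  refine le_trans ?_ h3
  by_contra h
  push Not at h
  refine hinj p p q le_rfl (h2 hs) h ?_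
  rw [hp3, h4]
  simp

/--
Positive fingerprint implies optimality.  Let `xs` be a greedy
sequence on the circular boundary of a non-star-shaped simple polygon with `k` steps in
the first revolution, and let `k*` be the optimal partition size.  If an element
`xs (i·k + m)` of the `m`-th local greedy subsequence has a positive fingerprint, i.e.
`xs (i·k + m) ∉ [xs (m-1), xs ((i-1)·k + m))`, then `xs (i·k + m)` is an endpoint of an
optimal solution, and the next `k*` greedy steps form an optimal partition.
-/
theorem positive_fingerprint_implies_optimal {α : Type*} [CircularOrder α]
    (Vis : α → α → Prop) (G : α → α)
    (hMono : ∀ a b c d : α, arcCC a b ⊆ arcCC c d → Vis c d → Vis a b)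
    (hVisG : ∀ x : α, Vis x (G x))
    (hGmax : ∀ x y : α, Vis x y → Btw.btw x y (G x))
    (hGne : ∀ x : α, G x ≠ x)
    (xs : ℕ → α) (hstep : ∀ n : ℕ, xs (n + 1) = G (xs n))
    (k : ℕ) (hk : xs (k + 1) ∈ arcCO (xs 0) (xs 1))
    (hkmin : ∀ j : ℕ, xs (j + 1) ∈ arcCO (xs 0) (xs 1) → k ≤ j)
    {kstar : ℕ} (y : Fin kstar → α) (hy : IsOptimalPartition Vis y)
    (m i : ℕ) (hm1 : 1 ≤ m) (hmk : m ≤ k) (hi : 1 ≤ i)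
    (hfp : xs (i * k + m) ∉ arcCO (xs (m - 1)) (xs ((i - 1) * k + m))) :
    (∃ (z : Fin kstar → α) (j : Fin kstar),
        IsOptimalPartition Vis z ∧ z j = xs (i * k + m)) ∧
      IsOptimalPartition Vis (fun t : Fin kstar => xs (i * k + m + t.val)) := by
  classical
  suffices hmain : IsOptimalPartition Vis (fun t : Fin kstar => xs (i * k + m + t.val)) by
    have hpos : 0 < kstar := by
      rcases Nat.eq_zero_or_pos kstar with h | h
      · subst h
        have := hy.1.2
        have h2 : xs 0 ∈ (Set.univ : Set α) := Set.mem_univ _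
        rw [← this, Set.mem_iUnion] at h2
        exact h2.choose.elim0
      · exact h
    exact ⟨⟨_, ⟨0, hpos⟩, hmain, by simp⟩, hmain⟩
  refine ⟨?_, hy.2⟩
  have hpos : 0 < kstar := by
    rcases Nat.eq_zero_or_pos kstar with h | h
    · subst h
      have := hy.1.2
      have h2 : xs 0 ∈ (Set.univ : Set α) := Set.mem_univ _
      rw [← this, Set.mem_iUnion] at h2
      exact h2.choose.elim0
    · exact h
  by_cases hstar : ∃ a, Vis a a
  · obtain ⟨a, ha⟩ := hstar
    have hall : ∀ b c, Vis b c := fun b c =>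
      hMono b c a a (fun x _ => btw_refl_left_right a x) ha
    have h1 : kstar ≤ 1 := by
      refine hy.2 1 (fun _ => a) ⟨fun _ => ha, ?_⟩
      rw [Set.eq_univ_iff_forall]
      intro x
      exact Set.mem_iUnion.2 ⟨0, btw_refl_left_right a x⟩
    have h2 : kstar = 1 := by omega
    subst h2
    refine ⟨fun _ => hall _ _, ?_⟩
    rw [Set.eq_univ_iff_forall]
    intro x
    refine Set.mem_iUnion.2 ⟨0, ?_⟩
    have e : nextIdx (0 : Fin 1) = 0 := Subsingleton.elim _ _
    rw [e]
    exact btw_refl_left_right _ x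
  have hVne : ∀ a, ¬ Vis a a := fun a ha => hstar ⟨a, ha⟩
  obtain ⟨β, hβ, T, π, hT, hxT, hπT, hsurj, hinj, hbtw, hone⟩ := exists_cover (xs 0)
  obtain ⟨g, hg, hlt, hgT, hgTcomm, hπg, hmax, hvis⟩ :=
    exists_greedy_lift T π hT hπT hsurj hinj hbtw Vis G hMono hVisG hGmax hGne
  obtain ⟨x0, hx0⟩ := hone (xs 0)
  obtain ⟨X, hX⟩ : ∃ X : ℕ → β, X = fun n => g^[n] x0 := ⟨_, rfl⟩
  have X0 : X 0 = x0 := by rw [hX]; rfl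
  have XS : ∀ n, X (n + 1) = g (X n) := fun n => by
    rw [hX]; exact Function.iterate_succ_apply' g n x0
  have Xadd : ∀ n j, g^[j] (X n) = X (n + j) := fun n j => by
    rw [hX]; show g^[j] (g^[n] x0) = g^[n + j] x0
    rw [add_comm, Function.iterate_add_apply]
  have Xpi : ∀ n, π (X n) = xs n := by
    intro n
    induction n with
    | zero => rw [X0, hx0]
    | succ n ih => rw [XS, hπg, ih, hstep]
  have Xmono : StrictMono X := strictMono_nat_of_lt_succ fun n => by rw [XS]; exact hlt _
  have gT : ∀ n x, g^[n] (T x) = T (g^[n] x) := by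
    intro n x
    exact (Function.Commute.iterate_left (show Function.Commute g T from hgTcomm) n) x
  -- membership in the first arc
  have mem_iff : ∀ b, X 0 ≤ b → b < T (X 0) → (π b ∈ arcCO (xs 0) (xs 1) ↔ b < X 1) := by
    intro b h1 h2
    have e1 : X 1 < T (X 0) := by rw [XS 0]; exact hgT _
    have e0 : X 0 < X 1 := Xmono Nat.zero_lt_one
    rw [← Xpi 0, ← Xpi 1]
    constructor
    · rintro ⟨h3, h4⟩
      by_contra h5
      push Not at h5
      have h6 : X 1 < b := lt_of_le_of_ne h5 (by rintro rfl; exact h4 rfl)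
      have h7 := hbtw (X 0) (X 1) b e0.le h6.le h2.le
      rcases btw_antisymm h3 h7.cyclic_left with e | e | e
      · exact hinj (X 0) (X 0) b le_rfl (e0.trans h6) h2 e
      · exact h4 e
      · exact hinj (X 0) (X 0) (X 1) le_rfl e0 e1 e.symm
    · intro h3
      exact ⟨hbtw _ _ _ h1 h3.le e1.le, hinj (X 0) b (X 1) h1 h3 e1⟩
  have hA2 : T (X 0) ≤ X (k + 1) := by
    by_contra h
    push Not at h
    have h1 := (mem_iff (X (k + 1)) (Xmono.monotone (Nat.zero_le _)) h).1 (by rw [Xpi]; exact hk)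
    exact absurd (Xmono.lt_iff_lt.1 h1) (by omega)
  have hA1 : X k < T (X 0) := by
    by_contra h
    push Not at h
    have hex : ∃ n, T (X 0) ≤ X n := ⟨k, h⟩
    obtain ⟨N, hN⟩ : ∃ N, N = Nat.find hex := ⟨_, rfl⟩
    have hN1 : T (X 0) ≤ X N := hN ▸ Nat.find_spec hex
    have hN2 : N ≤ k := hN ▸ Nat.find_min' hex h
    have hN3 : ∀ j, j < N → X j < T (X 0) := fun j hj =>
      not_le.1 (Nat.find_min hex (hN ▸ hj))
    have hN0 : N ≠ 0 := by
      rintro rfl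
      exact not_lt.2 hN1 (hxT _)
    obtain ⟨M, rfl⟩ : ∃ M, N = M + 1 := ⟨N - 1, by omega⟩
    have hM : X (M + 1) ≤ T (X 1) := by
      rw [XS, XS 0, ← hgTcomm]
      exact hg (hN3 M (by omega)).le
    rcases lt_or_eq_of_le hM with hM | hM
    · have : xs (M + 1) ∈ arcCO (xs 0) (xs 1) := by
        rw [← Xpi (M + 1), ← Xpi 0, ← Xpi 1, ← hπT (X 0), ← hπT (X 1)]
        have e1 : X 1 < T (X 0) := by rw [XS 0]; exact hgT _
        exact ⟨hbtw _ _ _ hN1 hM.le (hT e1).le, hinj (T (X 0)) _ _ hN1 hM (hT e1)⟩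
      have := hkmin M this
      omega
    · have hM0 : M ≠ 0 := by
        rintro rfl
        exact absurd (hxT (X 1)) (by rw [← hM]; exact lt_irrefl _)
      have hper : ∀ n, X (n + 1 + M) = T (X (n + 1)) := by
        intro n
        have e := Xadd (M + 1) n
        rw [hM, gT, Xadd] at e
        rw [show n + 1 + M = M + 1 + n by omega, ← e, add_comm 1 n]
      have hno : ∀ n, 1 ≤ n → xs n ∉ arcCO (xs 0) (xs 1) := by
        intro n
        induction n using Nat.strong_induction_on with
        | _ n ih =>
          intro hn hmem
          by_cases hnM : n < M + 1
          · rw [← Xpi n, mem_iff _ (Xmono.monotone (Nat.zero_le _)) (hN3 n hnM)] at hmem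
            exact absurd (Xmono.lt_iff_lt.1 hmem) (by omega)
          · apply ih (n - M) (by omega) (by omega)
            have e := hper (n - M - 1)
            rw [show n - M - 1 + 1 + M = n by omega, show n - M - 1 + 1 = n - M by omega] at e
            rw [← Xpi (n - M), ← hπT, ← e, Xpi]
            exact hmem
      exact hno (k + 1) (by omega) hk
  -- partitions from greedy revolutions
  have hpart : ∀ n s, T (X n) ≤ X (n + s) → ∃ s', s' ≤ s ∧
      IsPartition Vis (fun t : Fin s' => xs (n + t.val)) := by
    intro n s h
    have hex : ∃ j, T (X n) ≤ X (n + j) := ⟨s, h⟩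
    refine ⟨Nat.find hex, Nat.find_min' hex h, ?_⟩
    have := greedy_partition T π hπT hsurj hbtw Vis g hlt hgT hvis (fun j => X (n + j))
      (fun j => XS (n + j)) (Nat.find hex) (Nat.find_spec hex)
      (fun j hj => not_le.1 (Nat.find_min hex hj))
    simpa only [Xpi] using this
  suffices hfin : T (X (i * k + m)) ≤ X (i * k + m + kstar) by
    obtain ⟨s', h1, h2⟩ := hpart _ _ hfin
    have h3 := hy.2 _ _ h2
    have h4 : s' = kstar := by omega
    subst h4
    exact h2
  have hle : kstar ≤ k + 1 := by
    obtain ⟨s', h1, h2⟩ := hpart 0 (k + 1) (by rw [zero_add]; exact hA2)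
    have h3 := hy.2 _ _ h2
    omega
  obtain ⟨p0, hp1, hp2, hp3⟩ :=
    partition_lift T π hsurj hinj Vis hVne g hg hmax hpos y hy.1 (X 0)
  have giter : ∀ n, Monotone g^[n] := fun n => hg.iterate n
  have gcomm : ∀ n j x, g^[n] (g^[j] x) = g^[j] (g^[n] x) := fun n j x => by
    rw [← Function.iterate_add_apply, add_comm, Function.iterate_add_apply]
  obtain ⟨p, hpa, hpb, hpc⟩ : ∃ p, T (X 0) ≤ p ∧ p ≤ T (X 1) ∧ T p ≤ g^[kstar] p := by
    have hex : ∃ l, T (X 0) ≤ g^[l] p0 := by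
      refine ⟨k + 1, hA2.trans ?_⟩
      have := giter (k + 1) hp1
      rwa [Xadd, zero_add] at this
    obtain ⟨l, hl⟩ : ∃ l, l = Nat.find hex := ⟨_, rfl⟩
    have h1 : T (X 0) ≤ g^[l] p0 := hl ▸ Nat.find_spec hex
    have h0 : l ≠ 0 := by
      rintro rfl
      exact not_lt.2 h1 hp2
    obtain ⟨l', rfl⟩ : ∃ l', l = l' + 1 := ⟨l - 1, by omega⟩
    have h2 : g^[l'] p0 < T (X 0) :=
      not_le.1 (Nat.find_min hex (hl ▸ Nat.lt_succ_self l'))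
    refine ⟨_, h1, ?_, ?_⟩
    · rw [Function.iterate_succ_apply', XS 0, ← hgTcomm]
      exact hg h2.le
    · rw [← gT, gcomm]
      exact giter _ hp3
  have hge : k ≤ kstar := by
    have h1 : T (T (X 0)) ≤ T (X (1 + kstar)) := by
      rw [← Xadd, ← gT]
      exact (hT.monotone hpa).trans (hpc.trans (giter _ hpb))
    have h2 := hT.le_iff_le.1 h1
    have h3 := Xmono.lt_iff_lt.1 (hA1.trans_le h2)
    omega
  rcases (show kstar = k + 1 ∨ kstar = k by omega) with hks | hks
  · have h1 := giter (i * k + m) hA2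
    rw [gT, Xadd, Xadd] at h1
    rw [hks]
    rw [zero_add] at h1
    rwa [add_comm (k + 1)] at h1
  · rw [hks] at hpc ⊢
    obtain ⟨i', rfl⟩ : ∃ i', i = i' + 1 := ⟨i - 1, by omega⟩
    obtain ⟨m', rfl⟩ : ∃ m', m = m' + 1 := ⟨m - 1, by omega⟩
    simp only [Nat.add_sub_cancel] at hfp
    have hTit : ∀ n, Monotone T^[n] := fun n => hT.monotone.iterate n
    have gTT : ∀ j n x, g^[n] (T^[j] x) = T^[j] (g^[n] x) := by
      intro j n x
      exact (Function.Commute.iterate_iterate (show Function.Commute g T from hgTcomm) n j) x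
    -- lower bound
    have hlow : ∀ j, T^[j] (g^[m'] p) ≤ T (X (j * k + (m' + 1))) := by
      intro j
      induction j with
      | zero =>
        have := giter m' hpb
        rw [gT, Xadd] at this
        rw [zero_mul, zero_add, add_comm m' 1]
        exact this
      | succ j ih =>
        have h1 := giter k ih
        rw [gT, Xadd, gTT] at h1
        rw [show (j + 1) * k + (m' + 1) = j * k + (m' + 1) + k by ring]
        refine le_trans ?_ h1
        rw [Function.iterate_succ_apply]
        apply hTit
        rw [gcomm, ← gT]
        exact giter _ hpc
    have hdec : ∀ n, X (n + k) ≤ T (X n) := by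
      intro n
      have := giter n hA1.le
      rw [gT, Xadd, Xadd, zero_add, add_comm] at this
      exact this
    have hup : ∀ j, X (j * k + (m' + 1)) ≤ T^[j] (X (m' + 1)) := by
      intro j
      induction j with
      | zero => simp
      | succ j ih =>
        rw [show (j + 1) * k + (m' + 1) = j * k + (m' + 1) + k by ring,
          Function.iterate_succ_apply']
        exact (hdec _).trans (hT.monotone ih)
    have eidx : (i' + 1) * k + (m' + 1) = i' * k + (m' + 1) + k := by ring
    have hb0 : T^[i' + 1] (X m') ≤ X ((i' + 1) * k + (m' + 1)) := by
      have h1 := hlow (i' + 1)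
      have h2 := hTit (i' + 1) (giter m' hpa)
      rw [gT, Xadd, zero_add] at h2
      have h3 := h2.trans h1
      rw [← Function.iterate_succ_apply, Function.iterate_succ_apply'] at h3
      exact hT.le_iff_le.1 h3
    have hb2 : T (X (i' * k + (m' + 1))) ≤ T^[i' + 1] (X (m' + 1)) := by
      rw [Function.iterate_succ_apply']
      exact hT.monotone (hup i')
    have hb3 : T^[i' + 1] (X (m' + 1)) < T (T^[i' + 1] (X m')) := by
      rw [← Function.iterate_succ_apply' T (i' + 1), Function.iterate_succ_apply T (i' + 1)]
      exact (hT.iterate (i' + 1)) (by rw [XS]; exact hgT _)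
    have hπTT : ∀ j x, π (T^[j] x) = π x := by
      intro j x
      induction j with
      | zero => rfl
      | succ j ih => rw [Function.iterate_succ_apply', hπT, ih]
    have hEq : X ((i' + 1) * k + (m' + 1)) = T (X (i' * k + (m' + 1))) := by
      have hle' : X ((i' + 1) * k + (m' + 1)) ≤ T (X (i' * k + (m' + 1))) := by
        rw [eidx]; exact hdec _
      by_contra hne
      have hlt' := lt_of_le_of_ne hle' hne
      apply hfp
      rw [← Xpi ((i' + 1) * k + (m' + 1)), ← Xpi m', ← Xpi (i' * k + (m' + 1)),
        ← hπTT (i' + 1) (X m'), ← hπT (X (i' * k + (m' + 1)))]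
      exact ⟨hbtw _ _ _ hb0 hlt'.le (hb2.trans hb3.le),
        hinj _ _ _ hb0 hlt' (hb2.trans_lt hb3)⟩
    have h1 := congrArg g^[k] hEq
    rw [gT, Xadd, Xadd, ← eidx] at h1
    exact h1.ge
end

section
/- Let P be a simple polygon and a, b ∈ ∂P. The feasible region F([a,b]), consisting of all points of P that see every point of the boundary chain [a,b], is connected; moreover, for every convex subset C of P, the intersection C ∩ F([a,b]) is convex. -/
open Set

/-- Cyclic successor of an index. -/
def finNext {n : ℕ} (i : Fin n) : Fin n := ⟨(i.val + 1) % n, Nat.mod_lt _ i.pos⟩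

/-- A simple polygon in the plane, given by its cyclic list of vertices: consecutive
vertices are joined by segments (the edges), non-adjacent edges are disjoint, and
adjacent edges meet exactly in their shared vertex. -/
structure SimplePolygon where
  n : ℕ
  three_le : 3 ≤ n
  vtx : Fin n → ℝ × ℝ
  inj : Function.Injective vtx
  nonadj : ∀ i j : Fin n, j ≠ i → j ≠ finNext i → i ≠ finNext j →
    Disjoint (segment ℝ (vtx i) (vtx (finNext i)))
             (segment ℝ (vtx j) (vtx (finNext j)))
  adj : ∀ i : Fin n,
    segment ℝ (vtx i) (vtx (finNext i)) ∩
        segment ℝ (vtx (finNext i)) (vtx (finNext (finNext i)))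
      = {vtx (finNext i)}

/-- The boundary `∂P` of the polygon: the union of its edges. -/
def SimplePolygon.boundary (Q : SimplePolygon) : Set (ℝ × ℝ) :=
  ⋃ i : Fin Q.n, segment ℝ (Q.vtx i) (Q.vtx (finNext i))

/-- The closed region bounded by the polygon: the boundary together with all points
from which one cannot escape to infinity without crossing the boundary. -/
def SimplePolygon.region (Q : SimplePolygon) : Set (ℝ × ℝ) :=
  Q.boundary ∪ {x | ∀ S : Set (ℝ × ℝ), IsConnected S → Disjoint S Q.boundary →
    x ∈ S → Bornology.IsBounded S}

/-- `g` sees `x` in the polygon `Q`: the segment between them lies in the region. -/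
def SimplePolygon.sees (Q : SimplePolygon) (g x : ℝ × ℝ) : Prop :=
  segment ℝ g x ⊆ Q.region

/-- The visibility polygon of a point `a`: all points of the region visible from `a`. -/
def SimplePolygon.visPoly (Q : SimplePolygon) (a : ℝ × ℝ) : Set (ℝ × ℝ) :=
  {x | x ∈ Q.region ∧ Q.sees a x}

theorem SimplePolygon.npos (Q : SimplePolygon) : 0 < Q.n :=
  lt_of_lt_of_le (by norm_num) Q.three_le

/-- The piecewise-linear parametrization of the boundary: `param t` for `t ∈ [i, i+1]`
interpolates linearly between the `i`-th and `(i+1)`-st vertices (indices mod `n`), so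
`param '' [s, t]` is the clockwise polygonal chain of the boundary from `param s` to
`param t`. -/
noncomputable def SimplePolygon.param (Q : SimplePolygon) (t : ℝ) : ℝ × ℝ :=
  (1 - Int.fract t) • Q.vtx ⟨(⌊t⌋).toNat % Q.n, Nat.mod_lt _ Q.npos⟩ +
    Int.fract t • Q.vtx (finNext ⟨(⌊t⌋).toNat % Q.n, Nat.mod_lt _ Q.npos⟩)

/-- Signed area (orientation determinant). -/
def orD (a b c : ℝ × ℝ) : ℝ := (b.1 - a.1) * (c.2 - a.2) - (b.2 - a.2) * (c.1 - a.1)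

/-- Closed triangle (positively oriented). -/
def triT (g h x : ℝ × ℝ) : Set (ℝ × ℝ) := {y | 0 ≤ orD g h y ∧ 0 ≤ orD h x y ∧ 0 ≤ orD x g y}

/-- Points outside `R` escape to infinity outside `R`. -/
def EscR (R : Set (ℝ × ℝ)) : Prop := ∀ q, q ∉ R → ∃ S : Set (ℝ × ℝ), IsPreconnected S ∧ q ∈ S ∧
  (∀ y ∈ S, y ∉ R) ∧ ¬ Bornology.IsBounded S

lemma orD_sum (g h x y : ℝ × ℝ) : orD g h y + orD h x y + orD x g y = orD g h x := by
  simp only [orD]; ring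

lemma orD_rot (a b c : ℝ × ℝ) : orD b c a = orD a b c := by simp only [orD]; ring

lemma orD_swap (a b c : ℝ × ℝ) : orD b a c = - orD a b c := by simp only [orD]; ring

lemma orD_lin (a b p q : ℝ × ℝ) (θ : ℝ) :
    orD a b (p + θ • (q - p)) = orD a b p + θ * (orD a b q - orD a b p) := by
  simp only [orD, Prod.fst_add, Prod.snd_add, Prod.smul_fst, Prod.smul_snd, Prod.fst_sub,
    Prod.snd_sub, smul_eq_mul]; ring

lemma orD_cont (a b : ℝ × ℝ) : Continuous (orD a b) := by
  unfold orD; fun_prop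

lemma mem_seg {p q z : ℝ × ℝ} : z ∈ segment ℝ p q ↔
    ∃ θ : ℝ, 0 ≤ θ ∧ θ ≤ 1 ∧ z = p + θ • (q - p) := by
  rw [segment_eq_image']
  constructor
  · rintro ⟨θ, ⟨h0, h1⟩, rfl⟩; exact ⟨θ, h0, h1, rfl⟩
  · rintro ⟨θ, h0, h1, rfl⟩; exact ⟨θ, ⟨h0, h1⟩, rfl⟩

lemma orD_seg {a b z : ℝ × ℝ} (h : z ∈ segment ℝ a b) : orD a b z = 0 := by
  obtain ⟨θ, _, _, rfl⟩ := mem_seg.1 h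
  rw [orD_lin]; simp only [orD]; ring

lemma triT_rot (g h x : ℝ × ℝ) : triT h x g = triT g h x := by
  ext y; simp only [triT, mem_setOf_eq]; tauto

lemma triT_closed (g h x : ℝ × ℝ) : IsClosed (triT g h x) :=
  (isClosed_le continuous_const (orD_cont _ _)).inter
    ((isClosed_le continuous_const (orD_cont _ _)).inter
      (isClosed_le continuous_const (orD_cont _ _)))

lemma triT_side {g h x y : ℝ × ℝ} (hD : 0 < orD g h x) (hy : y ∈ triT g h x)
    (h0 : orD g h y = 0) : y ∈ segment ℝ g h := by
  have hs := orD_sum g h x y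
  obtain ⟨h1, h2, h3⟩ := hy
  rw [mem_seg]
  refine ⟨orD x g y / orD g h x, by positivity, ?_, ?_⟩
  · rw [div_le_one hD]; linarith
  · have hne := hD.ne'
    ext
    · simp only [Prod.fst_add, Prod.smul_fst, Prod.fst_sub, smul_eq_mul]
      field_simp
      simp only [orD] at *
      linear_combination (x.1 - g.1) * h0
    · simp only [Prod.snd_add, Prod.smul_snd, Prod.snd_sub, smul_eq_mul]
      field_simp
      simp only [orD] at *
      linear_combination (x.2 - g.2) * h0

lemma triT_side2 {g h x y : ℝ × ℝ} (hD : 0 < orD g h x) (hy : y ∈ triT g h x)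
    (h0 : orD h x y = 0) : y ∈ segment ℝ h x :=
  triT_side (by rwa [orD_rot]) (by rwa [triT_rot]) h0

lemma triT_side3 {g h x y : ℝ × ℝ} (hD : 0 < orD g h x) (hy : y ∈ triT g h x)
    (h0 : orD x g y = 0) : y ∈ segment ℝ x g :=
  triT_side (x := h) (by rw [← orD_rot, ← orD_rot] at hD; rwa [orD_rot, orD_rot, orD_rot] at hD)
    (by rwa [triT_rot, triT_rot]) h0

lemma triT_sub_hull {g h x : ℝ × ℝ} (hD : 0 < orD g h x) :
    triT g h x ⊆ convexHull ℝ {g, h, x} := by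
  rintro y ⟨h1, h2, h3⟩
  have hs := orD_sum g h x y
  have hne := hD.ne'
  have e : y = (orD h x y / orD g h x) • g + (orD x g y / orD g h x) • h
      + (orD g h y / orD g h x) • x := by
    ext
    · simp only [Prod.fst_add, Prod.smul_fst, smul_eq_mul]
      field_simp
      simp only [orD]; ring
    · simp only [Prod.snd_add, Prod.smul_snd, smul_eq_mul]
      field_simp
      simp only [orD]; ring
  have hg : g ∈ convexHull ℝ ({g, h, x} : Set (ℝ × ℝ)) := subset_convexHull _ _ (by simp)
  have hh : h ∈ convexHull ℝ ({g, h, x} : Set (ℝ × ℝ)) := subset_convexHull _ _ (by simp)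
  have hx : x ∈ convexHull ℝ ({g, h, x} : Set (ℝ × ℝ)) := subset_convexHull _ _ (by simp)
  rw [convexHull_insert (by simp), convexHull_pair, segment_eq_image', ← segment_eq_image',
    mem_convexJoin]
  by_cases hz : orD x g y + orD g h y = 0
  · have a1 : orD x g y = 0 := by linarith
    have a2 : orD g h y = 0 := by linarith
    have a3 : orD h x y = orD g h x := by linarith
    refine ⟨g, rfl, h, left_mem_segment _ _ _, ?_⟩
    rw [a1, a2, a3] at e
    simp [hne] at e
    rw [e]; exact left_mem_segment _ _ _
  · have hp : 0 < orD x g y + orD g h y := lt_of_le_of_ne (by linarith) (Ne.symm hz)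
    refine ⟨g, rfl, h + (orD g h y / (orD x g y + orD g h y)) • (x - h),
      mem_seg.2 ⟨_, by positivity, by rw [div_le_one hp]; linarith, rfl⟩,
      mem_seg.2 ⟨(orD x g y + orD g h y) / orD g h x, by positivity,
        by rw [div_le_one hD]; linarith, ?_⟩⟩
    rw [smul_sub, smul_add, smul_smul]
    have e1 : (orD x g y + orD g h y) / orD g h x * (orD g h y / (orD x g y + orD g h y))
      = orD g h y / orD g h x := by field_simp
    have e2 : (orD h x y / orD g h x) = 1 - (orD x g y + orD g h y) / orD g h x := by
      field_simp; linarith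
    rw [e1]
    conv_lhs => rw [e, e2]
    rw [add_div]; module

lemma triT_bdd {g h x : ℝ × ℝ} (hD : 0 < orD g h x) : Bornology.IsBounded (triT g h x) :=
  (isBounded_convexHull.2 (Set.toFinite _).isBounded).subset (triT_sub_hull hD)

lemma triT_lin {g h x p q : ℝ × ℝ} (hp : p ∈ triT g h x) (hq : q ∈ triT g h x) {θ : ℝ}
    (h0 : 0 ≤ θ) (h1 : θ ≤ 1) : p + θ • (q - p) ∈ triT g h x := by
  obtain ⟨a1, a2, a3⟩ := hp
  obtain ⟨b1, b2, b3⟩ := hq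
  refine ⟨?_, ?_, ?_⟩ <;> rw [orD_lin] <;> nlinarith

lemma triT_g {g h x : ℝ × ℝ} (hD : 0 < orD g h x) : g ∈ triT g h x := by
  refine ⟨?_, ?_, ?_⟩ <;> simp only [orD] at * <;> linarith

lemma triT_h {g h x : ℝ × ℝ} (hD : 0 < orD g h x) : h ∈ triT g h x := by
  refine ⟨?_, ?_, ?_⟩ <;> simp only [orD] at * <;> linarith

lemma triT_x {g h x : ℝ × ℝ} (hD : 0 < orD g h x) : x ∈ triT g h x := by
  refine ⟨?_, ?_, ?_⟩ <;> simp only [orD] at * <;> linarith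

lemma triT_seg {g h x y : ℝ × ℝ} (hD : 0 < orD g h x) (hy : y ∈ segment ℝ g h) :
    y ∈ triT g h x := by
  obtain ⟨θ, h0, h1, rfl⟩ := mem_seg.1 hy
  exact triT_lin (triT_g hD) (triT_h hD) h0 h1

lemma fill_aux {R V1 V2 : Set (ℝ × ℝ)} (hE : EscR R) (o1 : IsOpen V1) (o2 : IsOpen V2)
    (hd : Disjoint V1 V2) (hb : Bornology.IsBounded V1) (hc : ∀ y, y ∉ R → y ∈ V1 ∪ V2)
    {q : ℝ × ℝ} (hq : q ∈ V1) : q ∈ R := by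
  by_contra hqR
  obtain ⟨S, hS, hqS, hSR, hSb⟩ := hE q hqR
  exact hSb (hb.subset (hS.subset_left_of_subset_union o1 o2 hd (fun y hy => hc y (hSR y hy))
    ⟨q, hqS, hq⟩))

/-- interior of triangle -/
lemma tri_strict {R : Set (ℝ × ℝ)} {g h x y : ℝ × ℝ} (hD : 0 < orD g h x)
    (hg : segment ℝ g x ⊆ R) (hh : segment ℝ h x ⊆ R) (hy : y ∈ triT g h x) (hyR : y ∉ R) :
    0 < orD h x y ∧ 0 < orD x g y := by
  refine ⟨lt_of_le_of_ne hy.2.1 fun e => hyR (hh (triT_side2 hD hy e.symm)),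
    lt_of_le_of_ne hy.2.2 fun e => hyR (hg ?_)⟩
  rw [segment_symm]; exact triT_side3 hD hy e.symm

lemma fill_tri {R : Set (ℝ × ℝ)} (hE : EscR R) {g h x : ℝ × ℝ} (hD : 0 < orD g h x)
    (hg : segment ℝ g x ⊆ R) (hh : segment ℝ h x ⊆ R) (hgh : segment ℝ g h ⊆ R) :
    triT g h x ⊆ R := by
  intro q hq
  by_contra hqR
  have key : ∀ y, y ∈ triT g h x → y ∉ R → 0 < orD g h y ∧ 0 < orD h x y ∧ 0 < orD x g y := by
    intro y hy hyR
    exact ⟨lt_of_le_of_ne hy.1 fun e => hyR (hgh (triT_side hD hy e.symm)),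
      tri_strict hD hg hh hy hyR⟩
  refine hqR (fill_aux (V1 := {y | 0 < orD g h y ∧ 0 < orD h x y ∧ 0 < orD x g y})
    (V2 := (triT g h x)ᶜ) hE ?_ (triT_closed _ _ _).isOpen_compl ?_ ?_ ?_ (key q hq hqR))
  · exact (isOpen_lt continuous_const (orD_cont _ _)).inter
      ((isOpen_lt continuous_const (orD_cont _ _)).inter
        (isOpen_lt continuous_const (orD_cont _ _)))
  · rw [Set.disjoint_left]
    rintro y ⟨h1, h2, h3⟩ hy
    exact hy ⟨h1.le, h2.le, h3.le⟩
  · exact (triT_bdd hD).subset fun y hy => ⟨hy.1.le, hy.2.1.le, hy.2.2.le⟩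
  · intro y hyR
    by_cases hy : y ∈ triT g h x
    · exact Or.inl (key y hy hyR)
    · exact Or.inr hy

lemma fill_diff {R : Set (ℝ × ℝ)} (hE : EscR R) {g h x x' : ℝ × ℝ} (hD : 0 < orD g h x)
    (hD' : 0 < orD g h x')
    (hg : segment ℝ g x ⊆ R) (hh : segment ℝ h x ⊆ R)
    (hg' : segment ℝ g x' ⊆ R) (hh' : segment ℝ h x' ⊆ R) {q : ℝ × ℝ}
    (hq : q ∈ triT g h x) (hqR : q ∉ R) : q ∈ triT g h x' := by
  by_contra hq'
  have key : ∀ y, y ∉ R → y ∈ triT g h x → y ∉ triT g h x' →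
      0 < orD g h y ∧ 0 < orD h x y ∧ 0 < orD x g y := by
    intro y hyR hy hy'
    exact ⟨lt_of_le_of_ne hy.1 fun e => hy' (triT_seg hD' (triT_side hD hy e.symm)),
      tri_strict hD hg hh hy hyR⟩
  refine hqR (fill_aux (V1 := {y | 0 < orD g h y ∧ 0 < orD h x y ∧ 0 < orD x g y} ∩
      (triT g h x')ᶜ)
    (V2 := (triT g h x ∩ ({y | orD h x' y ≤ 0} ∪ {y | orD x' g y ≤ 0}))ᶜ) hE ?_ ?_ ?_ ?_ ?_
      ⟨key q hqR hq hq', hq'⟩)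
  · exact ((isOpen_lt continuous_const (orD_cont _ _)).inter
      ((isOpen_lt continuous_const (orD_cont _ _)).inter
        (isOpen_lt continuous_const (orD_cont _ _)))).inter (triT_closed _ _ _).isOpen_compl
  · exact ((triT_closed _ _ _).inter ((isClosed_le (orD_cont _ _) continuous_const).union
      (isClosed_le (orD_cont _ _) continuous_const))).isOpen_compl
  · rw [Set.disjoint_left]
    rintro y ⟨⟨h1, h2, h3⟩, h4⟩ hy
    refine hy ⟨⟨h1.le, h2.le, h3.le⟩, ?_⟩
    by_contra hc
    simp only [mem_union, mem_setOf_eq, not_or, not_le] at hc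
    exact h4 ⟨h1.le, hc.1.le, hc.2.le⟩
  · exact (triT_bdd hD).subset fun y hy => ⟨hy.1.1.le, hy.1.2.1.le, hy.1.2.2.le⟩
  · intro y hyR
    by_cases hy : y ∈ (triT g h x ∩ ({y | orD h x' y ≤ 0} ∪ {y | orD x' g y ≤ 0}))
    · left
      have hy' : y ∉ triT g h x' := by
        intro hy'
        have := tri_strict hD' hg' hh' hy' hyR
        rcases hy.2 with h1 | h1 <;> simp only [mem_setOf_eq] at h1 <;> linarith
      exact ⟨key y hyR hy.1 hy', hy'⟩
    · exact Or.inr hy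

lemma fill_opp {R : Set (ℝ × ℝ)} (hE : EscR R) {g h x x' : ℝ × ℝ} (hD : 0 < orD g h x)
    (hD' : orD g h x' < 0)
    (hg : segment ℝ g x ⊆ R) (hh : segment ℝ h x ⊆ R)
    (hg' : segment ℝ g x' ⊆ R) (hh' : segment ℝ h x' ⊆ R) : segment ℝ g h ⊆ R := by
  intro q hq
  have hD2 : 0 < orD h g x' := by rw [orD_swap]; linarith
  by_contra hqR
  have hsub : ∀ y, ((0 ≤ orD g h y ∧ (orD h x y ≤ 0 ∨ orD x g y ≤ 0)) ∨
      (0 ≤ orD h g y ∧ (orD g x' y ≤ 0 ∨ orD x' h y ≤ 0))) ∨ 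
      (y ∈ triT g h x ∪ triT h g x') := by
    intro y
    by_contra hc
    simp only [not_or, not_and, not_le, mem_union, triT, mem_setOf_eq] at hc
    obtain ⟨⟨h1, h2⟩, h3, h4⟩ := hc
    rcases le_total 0 (orD g h y) with h5 | h5
    · exact absurd (h3 h5 (h1 h5).1.le) (not_lt.2 (h1 h5).2.le)
    · have h6 : 0 ≤ orD h g y := by rw [orD_swap]; linarith
      exact absurd (h4 h6 (h2 h6).1.le) (not_lt.2 (h2 h6).2.le)
  have hcl : IsClosed {y | (0 ≤ orD g h y ∧ (orD h x y ≤ 0 ∨ orD x g y ≤ 0)) ∨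
      (0 ≤ orD h g y ∧ (orD g x' y ≤ 0 ∨ orD x' h y ≤ 0))} :=
    ((isClosed_le continuous_const (orD_cont _ _)).inter
      ((isClosed_le (orD_cont _ _) continuous_const).union
        (isClosed_le (orD_cont _ _) continuous_const))).union
    ((isClosed_le continuous_const (orD_cont _ _)).inter
      ((isClosed_le (orD_cont _ _) continuous_const).union
        (isClosed_le (orD_cont _ _) continuous_const)))
  have key : ∀ y, y ∉ R → y ∈ triT g h x ∪ triT h g x' →
      y ∈ {y | (0 ≤ orD g h y ∧ (orD h x y ≤ 0 ∨ orD x g y ≤ 0)) ∨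
      (0 ≤ orD h g y ∧ (orD g x' y ≤ 0 ∨ orD x' h y ≤ 0))}ᶜ := by
    intro y hyR hy hc
    have c1 : y ∈ triT g h x → 0 < orD h x y ∧ 0 < orD x g y :=
      fun h1 => tri_strict hD hg hh h1 hyR
    have c2 : y ∈ triT h g x' → 0 < orD g x' y ∧ 0 < orD x' h y :=
      fun h1 => tri_strict hD2 hh' hg' h1 hyR
    have e := orD_swap g h y
    rcases hc with ⟨h1, h2⟩ | ⟨h1, h2⟩
    · have hy' : y ∈ triT g h x := by
        rcases hy with hy | hy
        · exact hy
        · have : orD h g y = 0 := le_antisymm (by linarith) hy.1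
          refine triT_seg hD ?_
          rw [segment_symm]; exact triT_side hD2 hy this
      rcases h2 with h2 | h2 <;> linarith [(c1 hy').1, (c1 hy').2]
    · have hy' : y ∈ triT h g x' := by
        rcases hy with hy | hy
        · have : orD g h y = 0 := le_antisymm (by linarith) hy.1
          refine triT_seg hD2 ?_
          rw [segment_symm]; exact triT_side hD hy this
        · exact hy
      rcases h2 with h2 | h2 <;> linarith [(c2 hy').1, (c2 hy').2]
  refine hqR (fill_aux (V2 := (triT g h x ∪ triT h g x')ᶜ) hE hcl.isOpen_compl
    ((triT_closed _ _ _).union (triT_closed _ _ _)).isOpen_compl ?_ ?_ ?_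
    (key q hqR (Or.inl (triT_seg hD hq))))
  · rw [Set.disjoint_left]
    intro y h1 h2
    exact (hsub y).elim h1 h2
  · exact ((triT_bdd hD).union (triT_bdd hD2)).subset fun y hy => (hsub y).resolve_left hy
  · intro y hyR
    by_cases hy : y ∈ triT g h x ∪ triT h g x'
    · exact Or.inl (key y hyR hy)
    · exact Or.inr hy

lemma col_wbtw {g h x : ℝ × ℝ} (hD : orD g h x = 0) :
    h ∈ segment ℝ g x ∨ x ∈ segment ℝ h g ∨ g ∈ segment ℝ x h := by
  have hc : Collinear ℝ ({g, h, x} : Set (ℝ × ℝ)) := by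
    by_cases hgh : g = h
    · subst hgh
      simpa using collinear_pair ℝ g x
    rw [collinear_iff_of_mem (p₀ := g) (by simp)]
    refine ⟨h - g, ?_⟩
    intro p hp
    simp only [mem_insert_iff, mem_singleton_iff] at hp
    rcases hp with rfl | rfl | rfl
    · exact ⟨0, by simp⟩
    · exact ⟨1, by simp⟩
    · by_cases h1 : h.1 - g.1 = 0
      · have h2 : h.2 - g.2 ≠ 0 := by
          intro h2
          exact hgh (Prod.ext (by linarith) (by linarith))
        refine ⟨(p.2 - g.2) / (h.2 - g.2), ?_⟩
        have : (h.2 - g.2) * (p.1 - g.1) = 0 := by simp only [orD, h1] at hD; linarith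
        have : p.1 - g.1 = 0 := (mul_eq_zero.1 this).resolve_left h2
        ext
        · simp [h1]; linarith
        · simp; field_simp; ring
      · refine ⟨(p.1 - g.1) / (h.1 - g.1), ?_⟩
        simp only [orD] at hD
        ext
        · simp; field_simp; ring
        · simp; field_simp; linarith
  simpa only [← mem_segment_iff_wbtw] using hc.wbtw_or_wbtw_or_wbtw

lemma col_seg {R : Set (ℝ × ℝ)} {g h x : ℝ × ℝ} (hD : orD g h x = 0)
    (hg : segment ℝ g x ⊆ R) (hh : segment ℝ h x ⊆ R) : segment ℝ g h ⊆ R := by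
  rcases col_wbtw hD with h1 | h1 | h1
  · exact ((convex_segment _ _).segment_subset (left_mem_segment _ _ _) h1).trans hg
  · intro z hz
    rw [segment_symm] at hz
    obtain ⟨θ, a, b, rfl⟩ := mem_seg.1 h1
    obtain ⟨φ, c, d, rfl⟩ := mem_seg.1 hz
    rcases le_total φ θ with hl | hl
    · refine hh (mem_seg.2 ?_)
      by_cases hθ : θ = 0
      · exact ⟨0, le_rfl, zero_le_one, by rw [show φ = 0 by linarith]; simp⟩
      · have : 0 < θ := lt_of_le_of_ne a (Ne.symm hθ)
        refine ⟨φ / θ, by positivity, by rw [div_le_one this]; exact hl, ?_⟩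
        rw [add_sub_cancel_left, smul_smul]
        congr 2; field_simp
    · refine hg (mem_seg.2 ?_)
      by_cases hθ : θ = 1
      · exact ⟨0, le_rfl, zero_le_one, by rw [show φ = 1 by linarith]; simp⟩
      · have : 0 < 1 - θ := sub_pos.2 (lt_of_le_of_ne b hθ)
        refine ⟨(1 - φ) / (1 - θ), div_nonneg (by linarith) this.le,
          by rw [div_le_one this]; linarith, ?_⟩
        have e : h + θ • (g - h) - g = (1 - θ) • (h - g) := by module
        rw [e, smul_smul, div_mul_cancel₀ _ this.ne']
        module
  · rw [segment_symm ℝ h x] at hh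
    exact ((convex_segment _ _).segment_subset h1 (right_mem_segment _ _ _)).trans hh

lemma loc_conv {R : Set (ℝ × ℝ)} (hE : EscR R) {g h x p : ℝ × ℝ}
    (hg : segment ℝ g x ⊆ R) (hh : segment ℝ h x ⊆ R) (hgh : segment ℝ g h ⊆ R)
    (hp : p ∈ segment ℝ g h) : segment ℝ p x ⊆ R := by
  rcases lt_trichotomy (orD g h x) 0 with hD | hD | hD
  · have hD2 : 0 < orD h g x := by rw [orD_swap]; linarith
    rw [segment_symm] at hgh hp
    intro z hz
    obtain ⟨θ, a, b, rfl⟩ := mem_seg.1 hz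
    exact fill_tri hE hD2 hh hg hgh (triT_lin (triT_seg hD2 hp) (triT_x hD2) a b)
  · rcases col_wbtw hD with h1 | h1 | h1
    · exact ((convex_segment _ _).segment_subset ((convex_segment _ _).segment_subset
        (left_mem_segment _ _ _) h1 hp) (right_mem_segment _ _ _)).trans hg
    · rw [segment_symm] at h1
      exact ((convex_segment _ _).segment_subset hp h1).trans hgh
    · rw [segment_symm] at h1
      exact ((convex_segment _ _).segment_subset ((convex_segment _ _).segment_subset
        h1 (left_mem_segment _ _ _) hp) (right_mem_segment _ _ _)).trans hh
  · intro z hz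
    obtain ⟨θ, a, b, rfl⟩ := mem_seg.1 hz
    exact fill_tri hE hD hg hh hgh (triT_lin (triT_seg hD hp) (triT_x hD) a b)

lemma push_pt {R : Set (ℝ × ℝ)} (hc : IsClosed R) {p x : ℝ × ℝ} (hp : p ∉ R) :
    ∃ ε : ℝ, 0 < ε ∧ ε ≤ 1 ∧ p + ε • (x - p) ∉ R := by
  have hcont : Continuous fun ε : ℝ => p + ε • (x - p) := by fun_prop
  have ho : IsOpen ((fun ε : ℝ => p + ε • (x - p)) ⁻¹' Rᶜ) := hc.isOpen_compl.preimage hcont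
  obtain ⟨δ, hδ, hb⟩ := Metric.isOpen_iff.1 ho 0 (by simpa using hp)
  refine ⟨min (δ / 2) 1, by positivity, min_le_right _ _, ?_⟩
  refine hb (a := min (δ / 2) 1) ?_
  rw [Metric.mem_ball, Real.dist_eq, sub_zero, abs_of_pos (by positivity)]
  exact (min_le_left _ _).trans_lt (by linarith)

lemma exists_mid {R X : Set (ℝ × ℝ)} (hc : IsClosed R) (hE : EscR R) {g h x0 : ℝ × ℝ}
    (hx0 : x0 ∈ X) (hg : ∀ x ∈ X, segment ℝ g x ⊆ R) (hh : ∀ x ∈ X, segment ℝ h x ⊆ R)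
    (hgh : ¬ segment ℝ g h ⊆ R) (hD : 0 < orD g h x0) :
    ∃ p, p ∈ R ∧ (∀ x ∈ X, segment ℝ p x ⊆ R) ∧ |orD p h x0| < |orD g h x0| ∧
      |orD g p x0| < |orD g h x0| := by
  have hpos : ∀ x ∈ X, 0 < orD g h x := by
    intro x hx
    by_contra hn
    rcases lt_or_eq_of_le (not_lt.1 hn) with h1 | h1
    · exact hgh (fill_opp hE hD h1 (hg _ hx0) (hh _ hx0) (hg _ hx) (hh _ hx))
    · exact hgh (col_seg h1 (hg _ hx) (hh _ hx))
  obtain ⟨r, hr, hrR⟩ := Set.not_subset.1 hgh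
  obtain ⟨ε, e0, e1, he⟩ := push_pt (x := x0) hc hrR
  have hrT := triT_seg hD hr
  set O := triT g h x0 \ R with hO
  have hOsub : ∀ x ∈ X, closure O ⊆ triT g h x := by
    intro x hx
    refine closure_minimal ?_ (triT_closed _ _ _)
    intro q hq
    exact fill_diff hE hD (hpos x hx) (hg _ hx0) (hh _ hx0) (hg _ hx) (hh _ hx) hq.1 hq.2
  have hwO : r + ε • (x0 - r) ∈ O := ⟨triT_lin hrT (triT_x hD) e0.le e1, he⟩
  have hcomp : IsCompact (closure O) :=
    ((triT_bdd hD).subset diff_subset).isCompact_closure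
  obtain ⟨p, hpO, hmax⟩ := hcomp.exists_isMaxOn ⟨_, subset_closure hwO⟩
    (orD_cont g h).continuousOn
  have hmax' : ∀ z ∈ O, orD g h z ≤ orD g h p := fun z hz => hmax (subset_closure hz)
  have hpT := hOsub x0 hx0 hpO
  have hp0 : 0 < orD g h p := by
    have := hmax' _ hwO
    rw [orD_lin, orD_seg hr] at this
    have : 0 < ε * orD g h x0 := by positivity
    linarith
  have htop : ∀ x ∈ X, orD g h p < orD g h x ∨ p ∈ segment ℝ h x := by
    intro x hx
    have h1 := hOsub x hx hpO
    have h2 := orD_sum g h x p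
    by_cases h3 : orD h x p = 0
    · exact Or.inr (triT_side2 (hpos x hx) h1 h3)
    · left
      have := lt_of_le_of_ne h1.2.1 (Ne.symm h3)
      linarith [h1.2.2]
  have hpR : p ∈ R := by
    by_contra hpR
    rcases htop x0 hx0 with h1 | h1
    · obtain ⟨δ, d0, d1, hd⟩ := push_pt (x := x0) hc hpR
      have := hmax' _ ⟨triT_lin hpT (triT_x hD) d0.le d1, hd⟩
      rw [orD_lin] at this
      nlinarith
    · exact hpR (hh _ hx0 h1)
  refine ⟨p, hpR, ?_, ?_, ?_⟩
  · intro x hx z hz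
    rcases htop x hx with h1 | h1
    · by_contra hzR
      obtain ⟨θ, a, b, rfl⟩ := mem_seg.1 hz
      have hzT := triT_lin (hOsub x hx hpO) (triT_x (hpos x hx)) a b
      have := hmax' _ ⟨fill_diff hE (hpos x hx) hD (hg _ hx) (hh _ hx) (hg _ hx0) (hh _ hx0)
        hzT hzR, hzR⟩
      rw [orD_lin] at this
      have hθ : θ = 0 := by
        by_contra hne
        have : 0 < θ := lt_of_le_of_ne a (Ne.symm hne)
        nlinarith
      rw [hθ] at hzR
      simp at hzR
      exact hzR hpR
    · exact hh _ hx ((convex_segment _ _).segment_subset h1 (right_mem_segment _ _ _) hz)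
  · have h2 := orD_sum g h x0 p
    rw [← orD_rot p h x0, abs_of_nonneg hpT.2.1, abs_of_pos hD]
    linarith [hpT.2.2]
  · have h2 := orD_sum g h x0 p
    rw [← orD_rot g p x0, ← orD_rot p x0 g, abs_of_nonneg hpT.2.2, abs_of_pos hD]
    linarith [hpT.2.1]

lemma feas_preconn {R X : Set (ℝ × ℝ)} (hc : IsCompact R) (hE : EscR R) (hX : X.Nonempty) :
    IsPreconnected {g | g ∈ R ∧ ∀ x ∈ X, segment ℝ g x ⊆ R} := by
  obtain ⟨x0, hx0⟩ := hX
  set F := {g | g ∈ R ∧ ∀ x ∈ X, segment ℝ g x ⊆ R} with hF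
  have hFcl : IsClosed F := by
    have : F = R ∩ ⋂ x ∈ X, ⋂ θ ∈ Set.Icc (0:ℝ) 1, {g : ℝ × ℝ | g + θ • (x - g) ∈ R} := by
      ext g
      simp only [hF, mem_setOf_eq, mem_inter_iff, mem_iInter]
      refine and_congr_right fun _ => forall₂_congr fun x _ => ?_
      constructor
      · intro h θ hθ; exact h (mem_seg.2 ⟨θ, hθ.1, hθ.2, rfl⟩)
      · intro h z hz
        obtain ⟨θ, a, b, rfl⟩ := mem_seg.1 hz
        exact h θ ⟨a, b⟩
    rw [this]
    refine hc.isClosed.inter (isClosed_biInter fun x _ => isClosed_biInter fun θ _ => ?_)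
    exact hc.isClosed.preimage (f := fun g : ℝ × ℝ => g + θ • (x - g)) (by fun_prop)
  have hFc : IsCompact F := hc.of_isClosed_subset hFcl fun g hg => hg.1
  rw [isPreconnected_closed_iff]
  intro A B hA hB hcov hFA hFB
  by_contra hno
  have hno' : ∀ p ∈ F, p ∈ A → p ∉ B := fun p h1 h2 h3 => hno ⟨p, h1, h2, h3⟩
  obtain ⟨⟨g, h⟩, ⟨⟨hgF, hgA⟩, ⟨hhF, hhB⟩⟩, hmin⟩ :=
    ((hFc.inter_right hA).prod (hFc.inter_right hB)).exists_isMinOn (hFA.prod hFB)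
    (f := fun q : (ℝ × ℝ) × (ℝ × ℝ) => |orD q.1 q.2 x0|)
    (by unfold orD; fun_prop)
  simp only at hgF hgA hhF hhB
  have hmin' : ∀ p q, p ∈ F → p ∈ A → q ∈ F → q ∈ B → |orD g h x0| ≤ |orD p q x0| :=
    fun p q h1 h2 h3 h4 => hmin (a := (p, q)) ⟨⟨h1, h2⟩, ⟨h3, h4⟩⟩
  have hgh : ¬ segment ℝ g h ⊆ R := by
    intro hgh
    have hsF : segment ℝ g h ⊆ F := fun p hp =>
      ⟨hgh hp, fun x hx => loc_conv hE (hgF.2 x hx) (hhF.2 x hx) hgh hp⟩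
    obtain ⟨p, h1, h2, h3⟩ := isPreconnected_closed_iff.1
      (convex_segment g h).isPreconnected A B hA hB (hsF.trans hcov)
      ⟨g, left_mem_segment _ _ _, hgA⟩ ⟨h, right_mem_segment _ _ _, hhB⟩
    exact hno' p (hsF h1) h2 h3
  have hex : ∃ p, p ∈ R ∧ (∀ x ∈ X, segment ℝ p x ⊆ R) ∧ |orD p h x0| < |orD g h x0| ∧
      |orD g p x0| < |orD g h x0| := by
    rcases lt_trichotomy (orD g h x0) 0 with hD | hD | hD
    · have hD2 : 0 < orD h g x0 := by rw [orD_swap]; linarith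
      obtain ⟨p, h1, h2, h3, h4⟩ := exists_mid hc.isClosed hE hx0 hhF.2 hgF.2
        (by rwa [segment_symm]) hD2
      rw [orD_swap g h, orD_swap g p, abs_neg, abs_neg] at h3
      rw [orD_swap g h, orD_swap p h, abs_neg, abs_neg] at h4
      exact ⟨p, h1, h2, h4, h3⟩
    · exact absurd (col_seg hD (hgF.2 _ hx0) (hhF.2 _ hx0)) hgh
    · exact exists_mid hc.isClosed hE hx0 hgF.2 hhF.2 hgh hD
  obtain ⟨p, h1, h2, h3, h4⟩ := hex
  have hpF : p ∈ F := ⟨h1, h2⟩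
  rcases hcov hpF with hpA | hpB
  · exact absurd (hmin' p h hpF hpA hhF hhB) (not_le.2 h3)
  · exact absurd (hmin' g p hgF hgA hpF hpB) (not_le.2 h4)

lemma SimplePolygon.boundary_compact (Q : SimplePolygon) : IsCompact Q.boundary := by
  unfold SimplePolygon.boundary
  refine isCompact_iUnion fun i => ?_
  rw [segment_eq_image']
  exact isCompact_Icc.image (by fun_prop)

lemma SimplePolygon.not_region {Q : SimplePolygon} {x : ℝ × ℝ} (hx : x ∉ Q.region) :
    x ∉ Q.boundary ∧ ∃ S : Set (ℝ × ℝ), IsConnected S ∧ Disjoint S Q.boundary ∧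
      x ∈ S ∧ ¬ Bornology.IsBounded S := by
  simp only [SimplePolygon.region, mem_union, not_or, mem_setOf_eq] at hx
  refine ⟨hx.1, ?_⟩
  have := hx.2
  push Not at this
  exact this

lemma SimplePolygon.esc (Q : SimplePolygon) : EscR Q.region := by
  intro q hq
  obtain ⟨_, S, h1, h2, h3, h4⟩ := SimplePolygon.not_region hq
  refine ⟨S, h1.isPreconnected, h3, ?_, h4⟩
  intro y hy hyR
  rcases hyR with h5 | h5
  · exact Set.disjoint_left.1 h2 hy h5
  · exact h4 (h5 S h1 h2 hy)

lemma SimplePolygon.region_compact (Q : SimplePolygon) : IsCompact Q.region := by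
  refine Metric.isCompact_of_isClosed_isBounded ?_ ?_
  · rw [← isOpen_compl_iff, Metric.isOpen_iff]
    intro x hx
    obtain ⟨h0, S, h1, h2, h3, h4⟩ := SimplePolygon.not_region hx
    obtain ⟨δ, hδ, hb⟩ := Metric.isOpen_iff.1 Q.boundary_compact.isClosed.isOpen_compl x h0
    refine ⟨δ, hδ, ?_⟩
    intro y hy hyR
    rcases hyR with h5 | h5
    · exact hb hy h5
    · refine h4 ((h5 (S ∪ Metric.ball x δ) ?_ ?_ (Or.inr hy)).subset subset_union_left)
      · exact h1.union ⟨x, h3, Metric.mem_ball_self hδ⟩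
          ((convex_ball x δ).isConnected ⟨x, Metric.mem_ball_self hδ⟩)
      · rw [disjoint_union_left]
        exact ⟨h2, Set.disjoint_left.2 fun z hz => hb hz⟩
  · obtain ⟨M, hM0, hM⟩ := Q.boundary_compact.isBounded.exists_pos_norm_le
    rw [isBounded_iff_forall_norm_le]
    refine ⟨M, ?_⟩
    intro x hx
    by_contra hn
    rw [not_le] at hn
    rcases hx with h5 | h5
    · exact absurd (hM x h5) (not_le.2 hn)
    · have hb := h5 ((fun c : ℝ => c • x) '' Set.Ici 1) ?_ ?_ ⟨1, by simp, by simp⟩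
      · obtain ⟨K, hK⟩ := isBounded_iff_forall_norm_le.1 hb
        have hxp : 0 < ‖x‖ := hM0.trans hn
        have := hK (((max K 0 + 1) / ‖x‖ + 1) • x) ⟨_, by
          simp only [mem_Ici]
          have : 0 ≤ (max K 0 + 1) / ‖x‖ := by positivity
          linarith, rfl⟩
        rw [norm_smul, Real.norm_of_nonneg (by positivity), add_mul, div_mul_cancel₀ _ hxp.ne']
          at this
        linarith [le_max_left K 0]
      · exact (convex_Ici (1:ℝ)).isConnected ⟨1, by simp⟩ |>.image _ (by fun_prop)
      · rw [Set.disjoint_left]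
        rintro _ ⟨c, hc, rfl⟩ hcb
        have := hM _ hcb
        simp only [mem_Ici] at hc
        simp only [norm_smul] at this
        rw [Real.norm_of_nonneg (by linarith)] at this
        nlinarith

/--
Let `P` be a simple polygon and let `[a,b]` be a polygonal chain of
its boundary (parametrized as `param '' [s,t]`).  The feasible region `F([a,b])`,
consisting of all points of `P` that see every point of the chain, is connected;
moreover, for every convex subset `C` of `P`, the intersection `C ∩ F([a,b])` is convex.
-/
theorem feasible_region_connected_and_locally_convex (Q : SimplePolygon)
    (s t : ℝ) (hs : 0 ≤ s) (hst : s ≤ t)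
    (F : Set (ℝ × ℝ))
    (hF : F = {g | g ∈ Q.region ∧
      ∀ x ∈ Q.param '' Set.Icc s t, segment ℝ g x ⊆ Q.region}) :
    IsPreconnected F ∧
      ∀ C : Set (ℝ × ℝ), C ⊆ Q.region → Convex ℝ C → Convex ℝ (C ∩ F) := by
  subst hF
  refine ⟨feas_preconn Q.region_compact Q.esc ⟨_, s, ⟨le_rfl, hst⟩, rfl⟩, ?_⟩
  intro C hC hconv
  rw [convex_iff_segment_subset]
  rintro g ⟨hgC, hgF⟩ h ⟨hhC, hhF⟩ p hp
  have hsub : segment ℝ g h ⊆ C := hconv.segment_subset hgC hhC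
  exact ⟨hsub hp, hC (hsub hp), fun x hx =>
    loc_conv Q.esc (hgF.2 x hx) (hhF.2 x hx) (hsub.trans hC) hp⟩
end

section
/- Each pocket of a visibility polygon has exactly one window: for a point a on the boundary of a simple polygon P, every connected component of P minus the visibility polygon VP(P,a) is attached to the visibility polygon along exactly one line segment (window). -/
open Set

/-- `W` is a window of the pocket `R` of the visibility polygon of `a`: a maximal
nondegenerate line segment lying on the common boundary of `R` and the visibility
polygon that is not part of the polygon's boundary. -/
def IsWindow (Q : SimplePolygon) (a : ℝ × ℝ) (R W : Set (ℝ × ℝ)) : Prop :=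
  (∃ u v : ℝ × ℝ, u ≠ v ∧ W = segment ℝ u v) ∧
    W ⊆ closure R ∧ W ⊆ closure (Q.visPoly a) ∧ ¬ W ⊆ Q.boundary ∧
    ∀ W' : Set (ℝ × ℝ),
      ((∃ u v : ℝ × ℝ, u ≠ v ∧ W' = segment ℝ u v) ∧
        W' ⊆ closure R ∧ W' ⊆ closure (Q.visPoly a) ∧ ¬ W' ⊆ Q.boundary) →
      W ⊆ W' → W' = W


/-- cross product -/
def cr (u v : ℝ × ℝ) : ℝ := u.1 * v.2 - u.2 * v.1

/-- a point of the plane as a complex number -/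
def toC (u : ℝ × ℝ) : ℂ := ⟨u.1, u.2⟩

lemma toC_cont : Continuous toC := by
  have : toC = fun u : ℝ × ℝ => ((u.1 : ℂ) + (u.2 : ℂ) * Complex.I) := by
    funext u; apply Complex.ext <;> simp [toC]
  rw [this]; fun_prop

lemma toC_sub (u v : ℝ × ℝ) : toC (u - v) = toC u - toC v := by
  apply Complex.ext <;> simp [toC]

lemma toC_ne {u v : ℝ × ℝ} (h : u ≠ v) : toC (u - v) ≠ 0 := by
  intro h0
  apply h
  have h1 := congrArg Complex.re h0
  have h2 := congrArg Complex.im h0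
  simp [toC] at h1 h2
  ext <;> linarith

lemma norm_toC_ge (u : ℝ × ℝ) : ‖u‖ ≤ ‖toC u‖ := by
  rw [Prod.norm_def]
  exact max_le (Complex.abs_re_le_norm (toC u)) (Complex.abs_im_le_norm (toC u))

lemma norm_toC_le (u : ℝ × ℝ) : ‖toC u‖ ≤ 2 * ‖u‖ := by
  have := Complex.norm_le_abs_re_add_abs_im (toC u)
  have h1 : |(toC u).re| ≤ ‖u‖ := norm_fst_le u
  have h2 : |(toC u).im| ≤ ‖u‖ := norm_snd_le u
  linarith

lemma log_exists {U : Set (ℝ × ℝ)} (hU : IsOpen U) (hc : IsPreconnected U) {z z' : ℝ × ℝ}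
    (hz : z ∈ U) (hz' : z' ∈ U) :
    ∃ L : ℝ × ℝ → ℂ, ContinuousOn L Uᶜ ∧
      ∀ x ∈ Uᶜ, Complex.exp (L x) = toC (x - z) / toC (x - z') := by
  refine hc.induction₂ (fun z z' => ∃ L : ℝ × ℝ → ℂ, ContinuousOn L Uᶜ ∧
      ∀ x ∈ Uᶜ, Complex.exp (L x) = toC (x - z) / toC (x - z')) ?_ ?_ ?_ hz hz'
  · intro z hz
    obtain ⟨r, hr, hrU⟩ := Metric.isOpen_iff.1 hU z hz
    have h1 : ∀ᶠ y in nhdsWithin z U, y ∈ Metric.ball z (r/4) :=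
      mem_nhdsWithin_of_mem_nhds (Metric.ball_mem_nhds z (by linarith))
    filter_upwards [h1] with y hy
    have hslit : ∀ x ∈ Uᶜ, toC (x - z) / toC (x - y) ∈ Complex.slitPlane ∧ toC (x-y) ≠ 0 := by
      intro x hx
      have hxz : r ≤ ‖x - z‖ := by
        by_contra hlt
        exact hx (hrU (by rw [Metric.mem_ball, dist_eq_norm]; linarith))
      have hyz : ‖y - z‖ < r / 4 := by rw [← dist_eq_norm]; exact hy
      have hxy : 3 * r / 4 < ‖x - y‖ := by
        have := norm_sub_le_norm_sub_add_norm_sub x y z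
        linarith
      have hne : toC (x - y) ≠ 0 := by
        apply toC_ne; rintro rfl; simp at hxy; linarith
      have hpos : 0 < ‖toC (x-y)‖ := norm_pos_iff.2 hne
      refine ⟨?_, hne⟩
      have hf : toC (x - z) / toC (x - y) = 1 + toC (y - z) / toC (x - y) := by
        field_simp
        simp only [toC_sub]; ring
      have hsm : ‖toC (y - z) / toC (x - y)‖ < 1 := by
        rw [norm_div, div_lt_one hpos]
        have := norm_toC_le (y - z)
        have := norm_toC_ge (x - y)
        linarith
      rw [hf]
      left
      have := (abs_le.1 (Complex.abs_re_le_norm (toC (y - z) / toC (x - y)))).1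
      simp only [Complex.add_re, Complex.one_re]
      linarith
    refine ⟨fun x => Complex.log (toC (x - z) / toC (x - y)), ?_, ?_⟩
    · apply ContinuousOn.clog
      · apply ContinuousOn.div
        · exact (toC_cont.comp (by fun_prop)).continuousOn
        · exact (toC_cont.comp (by fun_prop)).continuousOn
        · intro x hx; exact (hslit x hx).2
      · intro x hx; exact (hslit x hx).1
    · intro x hx
      exact Complex.exp_log (Complex.slitPlane_ne_zero (hslit x hx).1)
  · rintro x y z hx hy hz ⟨L, hL, hL'⟩ ⟨M, hM, hM'⟩
    refine ⟨fun w => L w + M w, hL.add hM, ?_⟩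
    intro w hw
    have : toC (w - y) ≠ 0 := toC_ne (by rintro rfl; exact hw hy)
    rw [Complex.exp_add, hL' w hw, hM' w hw]
    field_simp
  · rintro x y hx hy ⟨L, hL, hL'⟩
    refine ⟨fun w => -L w, hL.neg, ?_⟩
    intro w hw
    rw [Complex.exp_neg, hL' w hw, inv_div]

lemma const_of_exp {T : Set (ℝ × ℝ)} (hT : IsPreconnected T) {g : ℝ × ℝ → ℂ}
    (hg : ContinuousOn g T) (h1 : ∀ x ∈ T, Complex.exp (g x) = 1) {x y : ℝ × ℝ}
    (hx : x ∈ T) (hy : y ∈ T) : g x = g y := by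
  refine hT.induction₂ (fun x y => g x = g y) ?_ ?_ ?_ hx hy
  · intro x hx
    have := (hg x hx) (Metric.ball_mem_nhds (g x) one_pos)
    filter_upwards [this, self_mem_nhdsWithin] with y hy hyT
    have hy' : ‖g y - g x‖ < 1 := by rw [← dist_eq_norm]; exact hy
    have him := Complex.abs_im_le_norm (g y - g x)
    have hpi := Real.pi_gt_three
    have h0 : Complex.exp (g y - g x) = 1 := by rw [Complex.exp_sub, h1 x hx, h1 y hyT]; simp
    have h2 := Complex.log_exp (x := g y - g x) (by have := (abs_le.1 him).1; linarith)
      (by have := (abs_le.1 him).2; linarith)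
    rw [h0, Complex.log_one] at h2
    exact (sub_eq_zero.1 h2.symm).symm
  · intro x y z _ _ _ h h'; exact h.trans h'
  · intro x y _ _ h; exact h.symm

lemma im_quot (x z z' : ℝ × ℝ) (h : x ≠ z') :
    ∃ c > 0, (toC (x - z) / toC (x - z')).im = c * cr (x - z) (z' - z) := by
  refine ⟨(Complex.normSq (toC (x-z')))⁻¹, inv_pos.2 (Complex.normSq_pos.2 (toC_ne h)), ?_⟩
  rw [Complex.div_im]
  simp [toC, cr]
  ring

/-- Topological crossing lemma. -/
lemma crossing {U : Set (ℝ × ℝ)} (hU : IsOpen U) (hc : IsPreconnected U) {z z' p p1 : ℝ × ℝ}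
    (hz : z ∈ U) (hz' : z' ∈ U) {T : Set (ℝ × ℝ)} (hT : IsPreconnected T) (hTU : T ⊆ Uᶜ)
    (hTz : Disjoint T (segment ℝ z z')) (hp : p ∈ T) (hp1 : p1 ∈ T)
    (hseg : segment ℝ p p1 ⊆ Uᶜ)
    (h1 : cr (p - z) (z' - z) * cr (p1 - z) (z' - z) < 0)
    (h2 : cr (z - p) (p1 - p) * cr (z' - p) (p1 - p) < 0) : False := by
  obtain ⟨L, hL, hL'⟩ := log_exists hU hc hz hz'
  set f : ℝ × ℝ → ℂ := fun x => toC (x - z) / toC (x - z') with hf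
  have hne : ∀ x ∈ Uᶜ, x ≠ z ∧ x ≠ z' := by
    intro x hx
    constructor <;> rintro rfl <;> contradiction
  have hf0 : ∀ x ∈ Uᶜ, f x ≠ 0 := fun x hx => div_ne_zero (toC_ne (hne x hx).1) (toC_ne (hne x hx).2)
  have hfc : ContinuousOn f Uᶜ := by
    apply ContinuousOn.div
    · exact (toC_cont.comp (by fun_prop)).continuousOn
    · exact (toC_cont.comp (by fun_prop)).continuousOn
    · intro x hx; exact toC_ne (hne x hx).2
  have real_case : ∀ x ∈ Uᶜ, (f x).im = 0 → x - z = (f x).re • (x - z') := by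
    intro x hx him
    have e : toC (x - z) = ((f x).re : ℂ) * toC (x - z') := by
      have : f x = ((f x).re : ℂ) := Complex.ext (by simp) (by simp [him])
      rw [← this, hf]
      field_simp [toC_ne (hne x hx).2]
    have e1 := congrArg Complex.re e
    have e2 := congrArg Complex.im e
    simp [toC] at e1 e2
    ext
    · simpa using e1
    · simpa using e2
  have hT1 : ∀ x ∈ T, f x ∈ Complex.slitPlane := by
    intro x hx
    by_contra hns
    rw [Complex.mem_slitPlane_iff, not_or, not_lt, not_not] at hns
    have hr := real_case x (hTU hx) hns.2
    set r := (f x).re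
    have hr1 : 0 < 1 - r := by linarith [hns.1]
    refine Set.disjoint_left.1 hTz hx ⟨1/(1-r), -r/(1-r), by positivity, div_nonneg (by linarith [hns.1]) hr1.le, by field_simp; ring, ?_⟩
    have h11 := congrArg Prod.fst hr
    have h12 := congrArg Prod.snd hr
    simp at h11 h12
    ext
    · simp; field_simp; linarith
    · simp; field_simp; linarith
  have hS1 : ∀ x ∈ segment ℝ p p1, - f x ∈ Complex.slitPlane := by
    intro x hx
    by_contra hns
    rw [Complex.mem_slitPlane_iff, not_or, not_lt, not_not] at hns
    simp at hns
    have hr := real_case x (hseg hx) hns.2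
    have hr0 : (f x).re ≠ 0 := by
      intro h0
      exact hf0 x (hseg hx) (Complex.ext h0 hns.2)
    set r := (f x).re
    have hrp : 0 < r := lt_of_le_of_ne hns.1 (Ne.symm hr0)
    obtain ⟨α, β, hα, hβ, hab, rfl⟩ := hx
    have hα' : α = 1 - β := by linarith
    subst hα'
    have h11 := congrArg Prod.fst hr
    have h12 := congrArg Prod.snd hr
    simp at h11 h12
    have key : cr (z - p) (p1 - p) = r * cr (z' - p) (p1 - p) := by
      simp [cr]
      linear_combination (-(p1.2-p.2)) * h11 + (p1.1-p.1) * h12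
    rw [key] at h2
    nlinarith [mul_self_nonneg (cr (z' - p) (p1 - p)), mul_nonneg hrp.le (mul_self_nonneg (cr (z' - p) (p1 - p)))]
  have c1 := const_of_exp hT (g := fun x => L x - Complex.log (f x))
    ((hL.mono hTU).sub ((hfc.mono hTU).clog hT1))
    (fun x hx => by rw [Complex.exp_sub, hL' x (hTU hx), Complex.exp_log (hf0 x (hTU hx))]; exact div_self (hf0 x (hTU hx)))
    hp hp1
  have c2 := const_of_exp (convex_segment p p1).isPreconnected
    (g := fun x => L x - (Complex.log (- f x) + Real.pi * Complex.I))
    ((hL.mono hseg).sub ((((hfc.mono hseg).neg).clog hS1).add continuousOn_const))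
    (fun x hx => by
      rw [Complex.exp_sub, hL' x (hseg hx), Complex.exp_add, Complex.exp_pi_mul_I,
        Complex.exp_log (neg_ne_zero.2 (hf0 x (hseg hx)))]
      have := hf0 x (hseg hx)
      change f x / _ = 1
      field_simp)
    (left_mem_segment ℝ p p1) (right_mem_segment ℝ p p1)
  have e1 := congrArg Complex.im c1
  have e2 := congrArg Complex.im c2
  simp [Complex.log_im] at e1 e2
  have hpos : ∀ x ∈ Uᶜ, 0 < cr (x - z) (z' - z) → 0 < (f x).im := by
    intro x hx h
    obtain ⟨c, hc, e⟩ := im_quot x z z' (hne x hx).2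
    rw [hf]; simp only; rw [e]; positivity
  have hneg : ∀ x ∈ Uᶜ, cr (x - z) (z' - z) < 0 → (f x).im < 0 := by
    intro x hx h
    obtain ⟨c, hc, e⟩ := im_quot x z z' (hne x hx).2
    rw [hf]; simp only; rw [e]; exact mul_neg_of_pos_of_neg hc h
  have hpi := Real.pi_pos
  rcases mul_neg_iff.1 h1 with ⟨ha, hb⟩ | ⟨ha, hb⟩
  · have A := Complex.arg_neg_eq_arg_sub_pi_of_im_pos (hpos p (hTU hp) ha)
    have B := Complex.arg_neg_eq_arg_add_pi_of_im_neg (hneg p1 (hTU hp1) hb)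
    rw [A, B] at e2
    linarith
  · have A := Complex.arg_neg_eq_arg_sub_pi_of_im_pos (hpos p1 (hTU hp1) hb)
    have B := Complex.arg_neg_eq_arg_add_pi_of_im_neg (hneg p (hTU hp) ha)
    rw [A, B] at e2
    linarith


lemma segment_isCompact (u v : ℝ × ℝ) : IsCompact (segment ℝ u v) := by
  rw [segment_eq_image_lineMap]
  exact isCompact_Icc.image (AffineMap.lineMap_continuous)

lemma SimplePolygon.region_conn (Q : SimplePolygon) {S : Set (ℝ × ℝ)} (hS : IsPreconnected S)
    (hd : Disjoint S Q.boundary) {x y : ℝ × ℝ} (hx : x ∈ S) (hy : y ∈ S) (h : x ∈ Q.region) :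
    y ∈ Q.region := by
  rcases h with h | h
  · exact absurd h (Set.disjoint_left.1 hd hx)
  · right
    intro S' hS' hd' hy'
    refine (h (S ∪ S') ⟨⟨x, Or.inl hx⟩, hS.union y hy hy' hS'.isPreconnected⟩
      (Set.disjoint_union_left.2 ⟨hd, hd'⟩) (Or.inl hx)).subset subset_union_right

lemma outside_conn (r : ℝ) (hr : 0 < r) :
    IsPreconnected {x : ℝ × ℝ | r < x.1 ∨ r < x.2 ∨ x.1 < -r ∨ x.2 < -r} := by
  have h1 : Convex ℝ {x : ℝ × ℝ | r < x.1} := convex_halfSpace_gt (LinearMap.fst ℝ ℝ ℝ).isLinear r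
  have h2 : Convex ℝ {x : ℝ × ℝ | r < x.2} := convex_halfSpace_gt (LinearMap.snd ℝ ℝ ℝ).isLinear r
  have h3 : Convex ℝ {x : ℝ × ℝ | x.1 < -r} := convex_halfSpace_lt (LinearMap.fst ℝ ℝ ℝ).isLinear _
  have h4 : Convex ℝ {x : ℝ × ℝ | x.2 < -r} := convex_halfSpace_lt (LinearMap.snd ℝ ℝ ℝ).isLinear _
  have a1 := h1.isPreconnected.union (x := (r+1, r+1)) (by simp) (by simp) h2.isPreconnected
  have a2 := a1.union (x := (-r-1, r+1)) (by simp) (by simp) h3.isPreconnected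
  have a3 := a2.union (x := (-r-1, -r-1)) (by simp) (by simp) h4.isPreconnected
  convert a3 using 1
  ext x
  simp [or_assoc]

lemma SimplePolygon.exists_box (Q : SimplePolygon) :
    ∃ r : ℝ, 0 < r ∧ ∀ x ∈ Q.boundary, ‖x‖ ≤ r := by
  obtain ⟨r, hr⟩ := Q.boundary_compact.isBounded.exists_norm_le
  exact ⟨max r 1, by positivity, fun x hx => (hr x hx).trans (le_max_left _ _)⟩

lemma box_norm {r : ℝ} {x : ℝ × ℝ} (hx : ‖x‖ ≤ r) :
    ¬ (r < x.1 ∨ r < x.2 ∨ x.1 < -r ∨ x.2 < -r) := by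
  have h1 := abs_le.1 ((norm_fst_le x).trans hx)
  have h2 := abs_le.1 ((norm_snd_le x).trans hx)
  push Not
  exact ⟨h1.2, h2.2, h1.1, h2.1⟩

lemma norm_box {r : ℝ} {x : ℝ × ℝ} (hx : ¬ (r < x.1 ∨ r < x.2 ∨ x.1 < -r ∨ x.2 < -r)) :
    ‖x‖ ≤ r := by
  push Not at hx
  rw [Prod.norm_def]
  exact max_le (abs_le.2 ⟨hx.2.2.1, hx.1⟩) (abs_le.2 ⟨hx.2.2.2, hx.2.1⟩)

lemma outside_unbounded (r : ℝ) :
    ¬ Bornology.IsBounded {x : ℝ × ℝ | r < x.1 ∨ r < x.2 ∨ x.1 < -r ∨ x.2 < -r} := by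
  intro h
  obtain ⟨C, hC⟩ := h.exists_norm_le
  have := hC (max r C + 1, 0) (Or.inl (by have := le_max_left r C; simp only; linarith))
  have h2 := (norm_fst_le _).trans this
  have h3 := le_max_right r C
  have h4 := le_abs_self (max r C + 1)
  simp only [Real.norm_eq_abs] at h2
  linarith

lemma SimplePolygon.compl_conn (Q : SimplePolygon) : IsPreconnected Q.regionᶜ := by
  obtain ⟨r, hr, hb⟩ := Q.exists_box
  set V := {x : ℝ × ℝ | r < x.1 ∨ r < x.2 ∨ x.1 < -r ∨ x.2 < -r} with hV
  have hVd : Disjoint V Q.boundary :=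
    Set.disjoint_left.2 (fun x hx hx' => box_norm (hb x hx') hx)
  have key : ∀ x ∈ Q.regionᶜ, ∃ S : Set (ℝ × ℝ), IsPreconnected S ∧ S ⊆ Q.regionᶜ ∧ x ∈ S ∧ V ⊆ S := by
    intro x hx
    have hx2 := hx
    simp only [SimplePolygon.region, mem_compl_iff, mem_union, Set.mem_ofPred_eq, not_or, not_forall] at hx
    obtain ⟨hxb, S, hS, hSd, hxS, hSu⟩ := hx
    have hmeet : ∃ y ∈ S, y ∈ V := by
      by_contra hno
      push Not at hno
      exact hSu (isBounded_iff_forall_norm_le.2 ⟨r, fun y hy => norm_box (hno y hy)⟩)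
    obtain ⟨y, hy, hyV⟩ := hmeet
    have hc := hS.isPreconnected.union y hy hyV (outside_conn r hr)
    refine ⟨S ∪ V, hc, ?_, Or.inl hxS, subset_union_right⟩
    intro w hw hwR
    exact hx2 (Q.region_conn hc (Set.disjoint_union_left.2 ⟨hSd, hVd⟩) hw (Or.inl hxS) hwR)
  have hv : ((r+1, 0) : ℝ × ℝ) ∈ V := Or.inl (by simp)
  apply isPreconnected_of_forall (r+1, 0)
  intro x hx
  obtain ⟨S, h1, h2, h3, h4⟩ := key x hx
  exact ⟨S, h2, h4 hv, h3, h1⟩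

lemma SimplePolygon.interior_open (Q : SimplePolygon) : IsOpen (Q.region \ Q.boundary) := by
  rw [Metric.isOpen_iff]
  rintro x ⟨hx, hxb⟩
  obtain ⟨ε, hε, h⟩ := Metric.isOpen_iff.1 Q.boundary_compact.isClosed.isOpen_compl x hxb
  refine ⟨ε, hε, fun y hy => ⟨?_, h hy⟩⟩
  exact Q.region_conn (convex_ball x ε).isPreconnected
    (Set.disjoint_left.2 (fun w hw => h hw)) (Metric.mem_ball_self hε) hy hx

/-- local conicity of a set at a point -/
def ConicAt (S : Set (ℝ × ℝ)) (p : ℝ × ℝ) : Prop :=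
  ∃ ε > 0, ∀ d : ℝ × ℝ, ‖d‖ < ε → ∀ t : ℝ, 0 < t → t ≤ 1 → (p + d ∈ S ↔ p + t • d ∈ S)

lemma conic_segment (u v p : ℝ × ℝ) : ConicAt (segment ℝ u v) p := by
  by_cases hp : p ∈ segment ℝ u v
  · have hp0 := hp
    rw [segment_eq_image'] at hp
    obtain ⟨r, ⟨hr0, hr1⟩, rfl⟩ := hp
    by_cases huv : u = v
    · subst huv
      refine ⟨1, one_pos, fun d _ t ht ht1 => ?_⟩
      simp [ht.ne']
    have hw : 0 < ‖v - u‖ := norm_pos_iff.2 (sub_ne_zero.2 (Ne.symm huv))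
    obtain ⟨m, hm, hm0, hm1⟩ : ∃ m > 0, (r = 0 ∨ m ≤ r) ∧ (r = 1 ∨ m ≤ 1 - r) := by
      rcases hr0.eq_or_lt with h | h
      · exact ⟨1, one_pos, Or.inl h.symm, Or.inr (by linarith)⟩
      · rcases hr1.eq_or_lt with h' | h'
        · exact ⟨1, one_pos, Or.inr (by linarith), Or.inl h'⟩
        · exact ⟨min r (1-r), lt_min h (by linarith), Or.inr (min_le_left _ _), Or.inr (min_le_right _ _)⟩
    refine ⟨m * ‖v - u‖, by positivity, fun d hd t ht ht1 => ⟨fun h => ?_, fun h => ?_⟩⟩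
    · have := (convex_segment u v).add_smul_sub_mem hp0 h ⟨ht.le, ht1⟩
      simpa using this
    · rw [segment_eq_image'] at h
      obtain ⟨s, ⟨hs0, hs1⟩, he⟩ := h
      simp only at he
      have hd' : d = ((s - r) / t) • (v - u) := by
        have : t • d = (s - r) • (v - u) := by
          rw [sub_smul]
          linear_combination (exp := 1) (-he)
        rw [div_eq_inv_mul, mul_smul, ← this, smul_smul, inv_mul_cancel₀ ht.ne', one_smul]
      have hk : |(s - r) / t| < m := by
        rw [hd', norm_smul] at hd
        exact lt_of_mul_lt_mul_right hd hw.le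
      obtain ⟨hk1, hk2⟩ := abs_lt.1 hk
      rw [segment_eq_image']
      refine ⟨r + (s - r)/t, ⟨?_, ?_⟩, ?_⟩
      · rcases hm0 with h | h
        · rw [h]; simp; positivity
        · linarith
      · rcases hm1 with h | h
        · rw [h]
          have : (s - 1)/t ≤ 0 := div_nonpos_of_nonpos_of_nonneg (by linarith) ht.le
          linarith
        · linarith
      · simp only; rw [hd', add_smul]; abel
  · obtain ⟨ε, hε, h⟩ := Metric.isOpen_iff.1 (segment_isCompact u v).isClosed.isOpen_compl p hp
    refine ⟨ε, hε, fun d hd t ht ht1 => ⟨fun h' => absurd h' (h ?_), fun h' => absurd h' (h ?_)⟩⟩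
    · simpa using hd
    · simp [norm_smul, abs_of_pos ht]
      nlinarith [norm_nonneg d]

lemma SimplePolygon.conic_boundary (Q : SimplePolygon) (p : ℝ × ℝ) : ConicAt Q.boundary p := by
  choose ε hε h using fun i : Fin Q.n => conic_segment (Q.vtx i) (Q.vtx (finNext i)) p
  have : ∃ δ > 0, ∀ i, δ ≤ ε i := by
    have hne : (Finset.univ : Finset (Fin Q.n)).Nonempty := ⟨⟨0, by have := Q.three_le; omega⟩, by simp⟩
    obtain ⟨i, _, hi⟩ := Finset.exists_min_image Finset.univ ε hne
    exact ⟨ε i, hε i, fun j => hi j (by simp)⟩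
  obtain ⟨δ, hδ, hle⟩ := this
  refine ⟨δ, hδ, fun d hd t ht ht1 => ?_⟩
  simp only [SimplePolygon.boundary, mem_iUnion]
  exact exists_congr (fun i => h i d (hd.trans_le (hle i)) t ht ht1)

lemma SimplePolygon.conic_region (Q : SimplePolygon) (p : ℝ × ℝ) : ConicAt Q.region p := by
  obtain ⟨ε, hε, h⟩ := Q.conic_boundary p
  refine ⟨ε, hε, fun d hd t ht ht1 => ?_⟩
  by_cases hb : p + d ∈ Q.boundary
  · exact ⟨fun _ => Or.inl ((h d hd t ht ht1).1 hb), fun _ => Or.inl hb⟩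
  · have hc : IsPreconnected ((fun s : ℝ => p + s • d) '' Icc t 1) :=
      isPreconnected_Icc.image _ (by fun_prop)
    have hdj : Disjoint ((fun s : ℝ => p + s • d) '' Icc t 1) Q.boundary := by
      rw [Set.disjoint_left]
      rintro _ ⟨s, ⟨hs, hs1⟩, rfl⟩ hb'
      exact hb ((h d hd s (ht.trans_le hs) hs1).2 hb')
    have m1 : p + d ∈ ((fun s : ℝ => p + s • d) '' Icc t 1) := ⟨1, ⟨ht1, le_rfl⟩, by simp⟩
    have m2 : p + t • d ∈ ((fun s : ℝ => p + s • d) '' Icc t 1) := ⟨t, ⟨le_rfl, ht1⟩, by simp⟩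
    exact ⟨Q.region_conn hc hdj m1 m2, Q.region_conn hc hdj m2 m1⟩


lemma nbhd_box {m d n : ℝ × ℝ} {V : Set (ℝ × ℝ)} (hV : V ∈ nhds m) :
    ∃ ε > 0, ∀ s t : ℝ, |s| < ε → |t| < ε → m + s • d + t • n ∈ V := by
  have hc : ContinuousAt (fun q : ℝ × ℝ => m + q.1 • d + q.2 • n) (0, 0) := by fun_prop
  have : V ∈ nhds ((fun q : ℝ × ℝ => m + q.1 • d + q.2 • n) (0, 0)) := by simpa using hV
  obtain ⟨ε, hε, h⟩ := Metric.mem_nhds_iff.1 (hc this)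
  refine ⟨ε, hε, fun s t hs ht => ?_⟩
  have : ((s, t) : ℝ × ℝ) ∈ Metric.ball ((0 : ℝ), (0 : ℝ)) ε := by
    rw [Metric.mem_ball, Prod.dist_eq]
    simp [hs, ht]
  exact h this

/-- coordinates -/
lemma coord_eq {d n : ℝ × ℝ} (h : cr d n ≠ 0) (m x : ℝ × ℝ) :
    x = m + (cr (x - m) n / cr d n) • d + (cr d (x - m) / cr d n) • n := by
  have h' : d.1 * n.2 - d.2 * n.1 ≠ 0 := h
  ext
  · simp only [Prod.fst_add, Prod.smul_fst, smul_eq_mul]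
    rw [div_mul_eq_mul_div, div_mul_eq_mul_div, add_assoc, ← add_div, ← sub_eq_iff_eq_add', eq_div_iff h]
    simp [cr]; ring
  · simp only [Prod.snd_add, Prod.smul_snd, smul_eq_mul]
    rw [div_mul_eq_mul_div, div_mul_eq_mul_div, add_assoc, ← add_div, ← sub_eq_iff_eq_add', eq_div_iff h]
    simp [cr]; ring

lemma coord_unique {d n : ℝ × ℝ} (h : cr d n ≠ 0) {m : ℝ × ℝ} {s t s' t' : ℝ}
    (he : m + s • d + t • n = m + s' • d + t' • n) : s = s' ∧ t = t' := by
  have e1 := congrArg Prod.fst he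
  have e2 := congrArg Prod.snd he
  simp at e1 e2
  constructor
  · apply mul_right_cancel₀ h
    simp only [cr]
    linear_combination n.2 * e1 - n.1 * e2
  · apply mul_right_cancel₀ h
    simp only [cr]
    linear_combination d.1 * e2 - d.2 * e1

lemma cr_cont_left (n : ℝ × ℝ) : Continuous (fun x => cr x n) := by unfold cr; fun_prop
lemma cr_cont_right (n : ℝ × ℝ) : Continuous (fun x => cr n x) := by unfold cr; fun_prop

lemma coord_nhds {d n : ℝ × ℝ} (h : cr d n ≠ 0) (m : ℝ × ℝ) {ε : ℝ} (hε : 0 < ε) :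
    {x | ∃ s t : ℝ, |s| < ε ∧ |t| < ε ∧ x = m + s • d + t • n} ∈ nhds m := by
  have c1 : ContinuousAt (fun x => cr (x - m) n / cr d n) m := by unfold cr; fun_prop
  have c2 : ContinuousAt (fun x => cr d (x - m) / cr d n) m := by unfold cr; fun_prop
  have b1 := c1 (Metric.ball_mem_nhds _ hε)
  have b2 := c2 (Metric.ball_mem_nhds _ hε)
  filter_upwards [b1, b2] with x h1 h2
  refine ⟨_, _, ?_, ?_, coord_eq h m x⟩
  · simpa [cr, abs_div] using h1
  · simpa [cr, abs_div] using h2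

def Straight (B : Set (ℝ × ℝ)) (m d n : ℝ × ℝ) : Prop :=
  cr d n ≠ 0 ∧ ∃ ε > 0, ∀ s t : ℝ, |s| < ε → |t| < ε → (m + s • d + t • n ∈ B ↔ t = 0)

def Corner (B : Set (ℝ × ℝ)) (m d n : ℝ × ℝ) : Prop :=
  cr d n ≠ 0 ∧ ∃ ε > 0, ∀ s t : ℝ, |s| < ε → |t| < ε →
    (m + s • d + t • n ∈ B ↔ (0 ≤ s ∧ t = 0) ∨ (s = 0 ∧ 0 ≤ t))

def perp (d : ℝ × ℝ) : ℝ × ℝ := (-d.2, d.1)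

lemma cr_perp {d : ℝ × ℝ} (h : d ≠ 0) : cr d (perp d) ≠ 0 := by
  intro h0
  apply h
  simp [cr, perp] at h0
  have h1 : d.1 = 0 := by nlinarith [mul_self_nonneg d.1, mul_self_nonneg d.2]
  have h2 : d.2 = 0 := by nlinarith [mul_self_nonneg d.1, mul_self_nonneg d.2]
  ext <;> simpa

/-- membership in a segment issued from `m` with direction `d`, in coordinates -/
lemma mem_seg_coord {d n : ℝ × ℝ} (h : cr d n ≠ 0) (m : ℝ × ℝ) (α β : ℝ) (hαβ : α ≤ β) (s t : ℝ) :
    m + s • d + t • n ∈ segment ℝ (m + α • d) (m + β • d) ↔ t = 0 ∧ α ≤ s ∧ s ≤ β := by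
  rw [segment_eq_image']
  constructor
  · rintro ⟨r, ⟨hr0, hr1⟩, he⟩
    have he' : m + s • d + t • n = m + (α + r * (β - α)) • d + (0:ℝ) • n := by
      rw [← he]; simp only; module
    obtain ⟨e1, e2⟩ := coord_unique h he'
    refine ⟨e2, ?_, ?_⟩ <;> rw [e1] <;> nlinarith
  · rintro ⟨rfl, h1, h2⟩
    rcases hαβ.eq_or_lt with rfl | hlt
    · refine ⟨0, by simp, ?_⟩
      have : s = α := le_antisymm h2 h1
      simp [this]
    · have hpos : 0 < β - α := by linarith
      refine ⟨(s - α)/(β - α), ⟨div_nonneg (by linarith) hpos.le, (div_le_one hpos).2 (by linarith)⟩, ?_⟩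
      have : m + β • d - (m + α • d) = (β - α) • d := by module
      simp only
      rw [this, smul_smul, div_mul_cancel₀ _ hpos.ne']
      module

namespace SimplePolygon
variable (Q : SimplePolygon)

/-- the `i`-th edge -/
def edge (i : Fin Q.n) : Set (ℝ × ℝ) := segment ℝ (Q.vtx i) (Q.vtx (finNext i))

lemma finNext_inj {k : ℕ} {i j : Fin k} (h : finNext i = finNext j) : i = j := by
  have h1 := congrArg Fin.val h
  simp only [finNext] at h1
  have hi := i.2
  have hj := j.2
  ext
  rcases Nat.lt_or_ge (i.val + 1) k with a | a <;> rcases Nat.lt_or_ge (j.val + 1) k with b | b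
  · rw [Nat.mod_eq_of_lt a, Nat.mod_eq_of_lt b] at h1; omega
  · have : j.val + 1 = k := by omega
    rw [Nat.mod_eq_of_lt a, this, Nat.mod_self] at h1; omega
  · have : i.val + 1 = k := by omega
    rw [Nat.mod_eq_of_lt b, this, Nat.mod_self] at h1; omega
  · omega

lemma finNext_surj {k : ℕ} (i : Fin k) : ∃ j : Fin k, finNext j = i :=
  (Finite.surjective_of_injective (fun _ _ h => finNext_inj h)) i

lemma finNext_ne (i : Fin Q.n) : finNext i ≠ i := by
  intro h
  have h1 := congrArg Fin.val h
  simp only [finNext] at h1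
  have hn := Q.three_le
  have hi := i.2
  rcases Nat.lt_or_ge (i.val + 1) Q.n with a | a
  · rw [Nat.mod_eq_of_lt a] at h1; omega
  · have : i.val + 1 = Q.n := by omega
    rw [this, Nat.mod_self] at h1; omega

lemma edge_other {i j : Fin Q.n} (hij : j ≠ i) {m : ℝ × ℝ} (hm : m ∈ Q.edge i)
    (h1 : m ≠ Q.vtx i) (h2 : m ≠ Q.vtx (finNext i)) : m ∉ Q.edge j := by
  intro hj
  by_cases a : j = finNext i
  · subst a
    have : m ∈ ({Q.vtx (finNext i)} : Set (ℝ × ℝ)) := by rw [← Q.adj i]; exact ⟨hm, hj⟩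
    exact h2 this
  · by_cases b : i = finNext j
    · subst b
      have : m ∈ ({Q.vtx (finNext j)} : Set (ℝ × ℝ)) := by rw [← Q.adj j]; exact ⟨hj, hm⟩
      exact h1 this
    · exact Set.disjoint_left.1 (Q.nonadj i j hij a b) hm hj

lemma vertex_other {i j : Fin Q.n} (hij : j ≠ i) (hij' : j ≠ finNext i) :
    Q.vtx (finNext i) ∉ Q.edge j := by
  intro hj
  by_cases a : j = finNext (finNext i)
  · subst a
    have : Q.vtx (finNext i) ∈ ({Q.vtx (finNext (finNext i))} : Set (ℝ × ℝ)) := by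
      rw [← Q.adj (finNext i)]; exact ⟨left_mem_segment ℝ _ _, hj⟩
    exact Q.finNext_ne _ (Q.inj this).symm
  · by_cases b : finNext i = finNext j
    · exact hij (finNext_inj b).symm
    · exact Set.disjoint_left.1 (Q.nonadj (finNext i) j hij' a b) (left_mem_segment ℝ _ _) hj

lemma local_eq {J : Set (Fin Q.n)} {m : ℝ × ℝ} (h : ∀ j, j ∉ J → m ∉ Q.edge j) :
    ∀ᶠ x in nhds m, (x ∈ Q.boundary ↔ ∃ j ∈ J, x ∈ Q.edge j) := by
  have hcl : IsClosed (⋃ j : {j // j ∉ J}, Q.edge j) :=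
    isClosed_iUnion_of_finite (fun j => (segment_isCompact _ _).isClosed)
  have hm : m ∈ (⋃ j : {j // j ∉ J}, Q.edge j)ᶜ := by
    simp only [mem_compl_iff, mem_iUnion, not_exists]
    exact fun j => h j.1 j.2
  filter_upwards [hcl.isOpen_compl.mem_nhds hm] with x hx
  simp only [mem_compl_iff, mem_iUnion, not_exists] at hx
  constructor
  · intro hb
    obtain ⟨j, hj⟩ := mem_iUnion.1 hb
    by_cases hJ : j ∈ J
    · exact ⟨j, hJ, hj⟩
    · exact absurd hj (hx ⟨j, hJ⟩)
  · rintro ⟨j, _, hj⟩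
    exact mem_iUnion.2 ⟨j, hj⟩

lemma edge_ne (i : Fin Q.n) : Q.vtx (finNext i) - Q.vtx i ≠ 0 := by
  rw [sub_ne_zero]; intro h; exact Q.finNext_ne i (Q.inj h)

lemma straight_edge (i : Fin Q.n) {r : ℝ} (h0 : 0 < r) (h1 : r < 1) :
    Straight Q.boundary (Q.vtx i + r • (Q.vtx (finNext i) - Q.vtx i))
      (Q.vtx (finNext i) - Q.vtx i) (perp (Q.vtx (finNext i) - Q.vtx i)) ∧
    ∀ j, j ≠ i → (Q.vtx i + r • (Q.vtx (finNext i) - Q.vtx i)) ∉ Q.edge j := by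
  set d := Q.vtx (finNext i) - Q.vtx i with hd
  set m := Q.vtx i + r • d with hm
  have hd0 : d ≠ 0 := Q.edge_ne i
  have hcr := cr_perp hd0
  have hu : Q.vtx i = m + (-r) • d := by rw [hm]; module
  have hv : Q.vtx (finNext i) = m + (1 - r) • d := by rw [hm, hd]; module
  have hme : m ∈ Q.edge i := by
    have := (mem_seg_coord hcr m (-r) (1-r) (by linarith) 0 0).2 ⟨rfl, by linarith, by linarith⟩
    rw [edge, hu, hv]
    simpa using this
  have hmu : m ≠ Q.vtx i := by
    rw [hm]; simp [hd0, h0.ne']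
  have hmv : m ≠ Q.vtx (finNext i) := by
    rw [hv]; simp [hd0]; linarith
  have hoth : ∀ j, j ≠ i → m ∉ Q.edge j := fun j hj => Q.edge_other hj hme hmu hmv
  refine ⟨⟨hcr, ?_⟩, hoth⟩
  have hl := Q.local_eq (J := {i}) (m := m) (fun j hj => hoth j hj)
  obtain ⟨ε, hε, hbox⟩ := nbhd_box (d := d) (n := perp d) hl
  refine ⟨min ε (min r (1-r)), lt_min hε (lt_min h0 (by linarith)), fun s t hs ht => ?_⟩
  have hs1 := abs_lt.1 (hs.trans_le ((min_le_right _ _).trans (min_le_left _ _)))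
  have hs2 := abs_lt.1 (hs.trans_le ((min_le_right _ _).trans (min_le_right _ _)))
  have := hbox s t (hs.trans_le (min_le_left _ _)) (ht.trans_le (min_le_left _ _))
  rw [Set.mem_ofPred_eq] at this
  rw [this]
  simp only [mem_singleton_iff, exists_eq_left]
  have e := mem_seg_coord hcr m (-r) (1-r) (by linarith) s t
  rw [edge, hu, hv, e]
  exact ⟨fun h => h.1, fun h => ⟨h, by linarith, by linarith⟩⟩

lemma vertex_model (i : Fin Q.n) : ∃ d n, Straight Q.boundary (Q.vtx (finNext i)) d n ∨
    Corner Q.boundary (Q.vtx (finNext i)) d n := by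
  set m := Q.vtx (finNext i) with hm
  set d := Q.vtx i - m with hd
  set e := Q.vtx (finNext (finNext i)) - m with he
  have hd0 : d ≠ 0 := by
    have := Q.edge_ne i
    rw [hd, hm, ← neg_sub]; exact neg_ne_zero.2 this
  have he0 : e ≠ 0 := Q.edge_ne (finNext i)
  have hu : Q.vtx i = m + (1:ℝ) • d := by rw [hd]; module
  have hw : Q.vtx (finNext (finNext i)) = m + (1:ℝ) • e := by rw [he]; module
  have hm0 : ∀ f : ℝ × ℝ, m = m + (0:ℝ) • f := by intro f; module
  have hoth : ∀ j, j ∉ ({i, finNext i} : Set (Fin Q.n)) → m ∉ Q.edge j := by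
    intro j hj
    simp only [mem_insert_iff, mem_singleton_iff, not_or] at hj
    exact Q.vertex_other hj.1 hj.2
  have hl := Q.local_eq hoth
  have hE1 : Q.edge i = segment ℝ (m + (0:ℝ) • d) (m + (1:ℝ) • d) := by
    rw [← hm0, ← hu, segment_symm, hm]; rfl
  have hE2 : Q.edge (finNext i) = segment ℝ (m + (0:ℝ) • e) (m + (1:ℝ) • e) := by
    rw [← hm0, ← hw, hm]; rfl
  by_cases hcr : cr d e = 0
  · -- collinear
    obtain ⟨c, hc⟩ : ∃ c : ℝ, e = c • d := by
      have hp := cr_perp hd0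
      refine ⟨cr e (perp d) / cr d (perp d), ?_⟩
      have := coord_eq hp 0 e
      simpa [hcr] using this
    have hcneg : c < 0 := by
      by_contra hcn
      have hcp : 0 < c := by
        rcases (not_lt.1 hcn).eq_or_lt with h | h
        · exfalso; apply he0; rw [hc, ← h]; simp
        · exact h
      have hp := cr_perp hd0
      have hq : m + (min 1 c) • d ∈ Q.edge i ∩ Q.edge (finNext i) := by
        constructor
        · rw [hE1]
          have := (mem_seg_coord hp m 0 1 zero_le_one (min 1 c) 0).2
            ⟨rfl, by positivity, min_le_left _ _⟩
          simpa using this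
        · rw [hE2, hc, smul_smul, smul_smul, zero_mul, one_mul]
          have := (mem_seg_coord hp m 0 c hcp.le (min 1 c) 0).2
            ⟨rfl, by positivity, min_le_right _ _⟩
          simpa using this
      have h2 : m + (min 1 c) • d ∈ ({m} : Set (ℝ × ℝ)) := by
        rw [hm, ← Q.adj i]; exact hq
      simp [hd0] at h2
      have : 0 < min 1 c := by positivity
      linarith
    refine ⟨d, perp d, Or.inl ⟨cr_perp hd0, ?_⟩⟩
    obtain ⟨ε, hε, hbox⟩ := nbhd_box (d := d) (n := perp d) hl
    refine ⟨min ε (min 1 (-c)), lt_min hε (lt_min one_pos (by linarith)), fun s t hs ht => ?_⟩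
    have hs1 := abs_lt.1 (hs.trans_le ((min_le_right _ _).trans (min_le_left _ _)))
    have hs2 := abs_lt.1 (hs.trans_le ((min_le_right _ _).trans (min_le_right _ _)))
    have := hbox s t (hs.trans_le (min_le_left _ _)) (ht.trans_le (min_le_left _ _))
    rw [Set.mem_ofPred_eq] at this
    rw [this]
    simp only [mem_insert_iff, mem_singleton_iff, exists_eq_or_imp, exists_eq_left]
    rw [hE1, hE2, hc, smul_smul, smul_smul, zero_mul, one_mul,
      mem_seg_coord (cr_perp hd0) m 0 1 zero_le_one, segment_symm,
      mem_seg_coord (cr_perp hd0) m c 0 hcneg.le]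
    constructor
    · rintro (h | h) <;> exact h.1
    · intro h
      rcases le_total 0 s with h' | h'
      · left; exact ⟨h, h', by linarith⟩
      · right; exact ⟨h, by linarith, h'⟩
  · refine ⟨d, e, Or.inr ⟨hcr, ?_⟩⟩
    have hcr' : cr e d ≠ 0 := by
      intro h; apply hcr; simp only [cr] at h ⊢; linarith
    obtain ⟨ε, hε, hbox⟩ := nbhd_box (d := d) (n := e) hl
    refine ⟨min ε 1, lt_min hε one_pos, fun s t hs ht => ?_⟩
    have hs1 := abs_lt.1 (hs.trans_le (min_le_right _ _))
    have ht1 := abs_lt.1 (ht.trans_le (min_le_right _ _))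
    have := hbox s t (hs.trans_le (min_le_left _ _)) (ht.trans_le (min_le_left _ _))
    rw [Set.mem_ofPred_eq] at this
    rw [this]
    simp only [mem_insert_iff, mem_singleton_iff, exists_eq_or_imp, exists_eq_left]
    rw [hE1, hE2, mem_seg_coord hcr m 0 1 zero_le_one]
    have hsw : m + s • d + t • e = m + t • e + s • d := by module
    rw [hsw, mem_seg_coord hcr' m 0 1 zero_le_one]
    constructor
    · rintro (h | h)
      · left; exact ⟨h.2.1, h.1⟩
      · right; exact ⟨h.1, h.2.1⟩
    · rintro (h | h)
      · left; exact ⟨h.2, h.1, by linarith⟩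
      · right; exact ⟨h.1, h.2, by linarith⟩

lemma model {m : ℝ × ℝ} (hm : m ∈ Q.boundary) :
    ∃ d n, Straight Q.boundary m d n ∨ Corner Q.boundary m d n := by
  obtain ⟨i, hi⟩ := mem_iUnion.1 hm
  rw [segment_eq_image'] at hi
  obtain ⟨r, ⟨hr0, hr1⟩, rfl⟩ := hi
  rcases hr0.eq_or_lt with rfl | h0
  · obtain ⟨j, rfl⟩ := finNext_surj i
    simpa using Q.vertex_model j
  · rcases hr1.eq_or_lt with rfl | h1
    · simpa using Q.vertex_model i
    · exact ⟨_, _, Or.inl (Q.straight_edge i h0 h1).1⟩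

end SimplePolygon


lemma acc {D : Set (ℝ × ℝ)} {q e : ℝ × ℝ} {ε : ℝ} (hε : 0 < ε)
    (h : ∀ τ : ℝ, 0 < τ → τ < ε → q + τ • e ∈ D) : q ∈ closure D := by
  have hc : Filter.Tendsto (fun τ : ℝ => q + τ • e) (nhdsWithin 0 (Ioi 0)) (nhds q) := by
    have : ContinuousAt (fun τ : ℝ => q + τ • e) 0 := by fun_prop
    have h2 := this.tendsto.mono_left (nhdsWithin_le_nhds (s := Ioi 0))
    simpa using h2
  apply mem_closure_of_tendsto hc
  filter_upwards [Ioo_mem_nhdsGT hε] with τ hτ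
  exact h τ hτ.1 hτ.2

/-- `D` swallows every preconnected set missing `B` that it meets -/
def Swallow (B D : Set (ℝ × ℝ)) : Prop :=
  D ⊆ Bᶜ ∧ ∀ S : Set (ℝ × ℝ), IsPreconnected S → Disjoint S B → (S ∩ D).Nonempty → S ⊆ D

lemma swallow_comp {B : Set (ℝ × ℝ)} {y : ℝ × ℝ} (hy : y ∉ B) :
    Swallow B (connectedComponentIn Bᶜ y) := by
  refine ⟨connectedComponentIn_subset _ _, fun S hS hd hne => ?_⟩
  obtain ⟨w, hwS, hwD⟩ := hne
  rw [connectedComponentIn_eq hwD]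
  exact hS.subset_connectedComponentIn hwS (Set.disjoint_left.1 hd)

/-- open box part in coordinates -/
def boxPart (m d n : ℝ × ℝ) (A : Set (ℝ × ℝ)) : Set (ℝ × ℝ) :=
  (fun q : ℝ × ℝ => m + q.1 • d + q.2 • n) '' A

lemma boxPart_conn {m d n : ℝ × ℝ} {A : Set (ℝ × ℝ)} (hA : IsPreconnected A) :
    IsPreconnected (boxPart m d n A) := hA.image _ (by fun_prop)

lemma convex_prod_lt (ε : ℝ) : Convex ℝ {q : ℝ × ℝ | |q.1| < ε ∧ |q.2| < ε} := by
  have : {q : ℝ × ℝ | |q.1| < ε ∧ |q.2| < ε} = Ioo (-ε) ε ×ˢ Ioo (-ε) ε := by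
    ext q; simp [abs_lt]
  rw [this]
  exact (convex_Ioo _ _).prod (convex_Ioo _ _)

lemma cvx_pos2 : Convex ℝ {q : ℝ × ℝ | 0 < q.2} := convex_halfSpace_gt (LinearMap.snd ℝ ℝ ℝ).isLinear 0
lemma cvx_neg2 : Convex ℝ {q : ℝ × ℝ | q.2 < 0} := convex_halfSpace_lt (LinearMap.snd ℝ ℝ ℝ).isLinear 0
lemma cvx_pos1 : Convex ℝ {q : ℝ × ℝ | 0 < q.1} := convex_halfSpace_gt (LinearMap.fst ℝ ℝ ℝ).isLinear 0
lemma cvx_neg1 : Convex ℝ {q : ℝ × ℝ | q.1 < 0} := convex_halfSpace_lt (LinearMap.fst ℝ ℝ ℝ).isLinear 0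

lemma straight_halves {B : Set (ℝ × ℝ)} {m d n : ℝ × ℝ} (h : Straight B m d n) :
    ∃ ε > 0, (∀ s t : ℝ, |s| < ε → |t| < ε → (m + s • d + t • n ∈ B ↔ t = 0)) ∧
      ∀ D, Swallow B D → ∀ s t : ℝ, |s| < ε → |t| < ε → m + s • d + t • n ∈ D →
        ((∀ s' t', |s'| < ε → |t'| < ε → 0 < t' → m + s' • d + t' • n ∈ D) ∨
         (∀ s' t', |s'| < ε → |t'| < ε → t' < 0 → m + s' • d + t' • n ∈ D)) := by
  obtain ⟨hcr, ε, hε, hB⟩ := h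
  refine ⟨ε, hε, hB, fun D hD s t hs ht hst => ?_⟩
  have ht0 : t ≠ 0 := fun h0 => hD.1 hst ((hB s t hs ht).2 h0)
  rcases ht0.lt_or_gt with h | h
  · right
    intro s' t' hs' ht' h'
    apply hD.2 (boxPart m d n ({q : ℝ × ℝ | |q.1| < ε ∧ |q.2| < ε} ∩ {q | q.2 < 0}))
      (boxPart_conn ((convex_prod_lt ε).inter cvx_neg2).isPreconnected) _
      ⟨_, ⟨(s, t), ⟨⟨hs, ht⟩, h⟩, rfl⟩, hst⟩
    · exact ⟨(s', t'), ⟨⟨hs', ht'⟩, h'⟩, rfl⟩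
    · rw [Set.disjoint_left]
      rintro _ ⟨q, ⟨⟨h1, h2⟩, h3⟩, rfl⟩ hb
      exact (ne_of_lt h3) ((hB _ _ h1 h2).1 hb)
  · left
    intro s' t' hs' ht' h'
    apply hD.2 (boxPart m d n ({q : ℝ × ℝ | |q.1| < ε ∧ |q.2| < ε} ∩ {q | 0 < q.2}))
      (boxPart_conn ((convex_prod_lt ε).inter cvx_pos2).isPreconnected) _
      ⟨_, ⟨(s, t), ⟨⟨hs, ht⟩, h⟩, rfl⟩, hst⟩
    · exact ⟨(s', t'), ⟨⟨hs', ht'⟩, h'⟩, rfl⟩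
    · rw [Set.disjoint_left]
      rintro _ ⟨q, ⟨⟨h1, h2⟩, h3⟩, rfl⟩ hb
      exact (ne_of_gt h3) ((hB _ _ h1 h2).1 hb)

lemma straight_acc {B D : Set (ℝ × ℝ)} {m d n : ℝ × ℝ} (h : Straight B m d n) (hD : Swallow B D)
    (hm : m ∈ closure D) : ∀ᶠ x in nhds m, x ∈ B → x ∈ closure D := by
  have hcr := h.1
  obtain ⟨ε, hε, hB, hH⟩ := straight_halves h
  have hV := coord_nhds hcr m hε
  obtain ⟨y, ⟨s, t, hs, ht, rfl⟩, hyD⟩ := mem_closure_iff_nhds.1 hm _ hV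
  filter_upwards [hV] with x hx hxB
  obtain ⟨s', t', hs', ht', rfl⟩ := hx
  have h0 := (hB s' t' hs' ht').1 hxB
  subst h0
  rcases hH D hD s t hs ht hyD with h | h
  · apply acc (e := n) hε
    intro τ h1 h2
    have := h s' τ hs' (by rwa [abs_of_pos h1]) h1
    simpa using this
  · apply acc (e := -n) hε
    intro τ h1 h2
    have := h s' (-τ) hs' (by rwa [abs_neg, abs_of_pos h1]) (by linarith)
    simpa using this

lemma corner_acc {B D : Set (ℝ × ℝ)} {m d n : ℝ × ℝ} (h : Corner B m d n) (hD : Swallow B D)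
    (hm : m ∈ closure D) : ∀ᶠ x in nhds m, x ∈ B → x ∈ closure D := by
  obtain ⟨hcr, ε, hε, hB⟩ := h
  have hV := coord_nhds hcr m hε
  obtain ⟨y, ⟨s, t, hs, ht, rfl⟩, hyD⟩ := mem_closure_iff_nhds.1 hm _ hV
  have hnB := mt (hB s t hs ht).2 (hD.1 hyD)
  filter_upwards [hV] with x hx hxB
  obtain ⟨s', t', hs', ht', rfl⟩ := hx
  have h0 := (hB s' t' hs' ht').1 hxB
  have hs'' := abs_lt.1 hs'
  have ht'' := abs_lt.1 ht'
  set δ := min (ε - |s'|) (ε - |t'|) with hδ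
  have hδp : 0 < δ := lt_min (by linarith) (by linarith)
  have hsmall : ∀ τ : ℝ, |τ| < δ → |s' + τ| < ε ∧ |t' + τ| < ε := by
    intro τ h
    have a1 := h.trans_le (min_le_left _ _)
    have a2 := h.trans_le (min_le_right _ _)
    exact ⟨by have := abs_add_le s' τ; linarith, by have := abs_add_le t' τ; linarith⟩
  by_cases hq : 0 < s ∧ 0 < t
  · have hsub : boxPart m d n ({q : ℝ × ℝ | |q.1| < ε ∧ |q.2| < ε} ∩ ({q | 0 < q.1} ∩ {q | 0 < q.2})) ⊆ D := by
      apply hD.2 _ (boxPart_conn ((convex_prod_lt ε).inter (cvx_pos1.inter cvx_pos2)).isPreconnected)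
      · rw [Set.disjoint_left]
        rintro _ ⟨q, ⟨⟨h1, h2⟩, h3, h4⟩, rfl⟩ hb
        have h3' : 0 < q.1 := h3
        have h4' : 0 < q.2 := h4
        rcases (hB _ _ h1 h2).1 hb with h | h
        · linarith
        · linarith
      · exact ⟨_, ⟨(s, t), ⟨⟨hs, ht⟩, hq⟩, rfl⟩, hyD⟩
    apply acc (e := d + n) hδp
    intro τ h1 h2
    obtain ⟨b1, b2⟩ := hsmall τ (by rwa [abs_of_pos h1])
    apply hsub
    refine ⟨(s' + τ, t' + τ), ⟨⟨b1, b2⟩, ?_, ?_⟩, ?_⟩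
    · show 0 < s' + τ
      rcases h0 with h | h <;> linarith
    · show 0 < t' + τ
      rcases h0 with h | h <;> linarith
    · simp only; module
  · have hst : s < 0 ∨ t < 0 := by
      by_contra hno
      push Not at hno
      apply hnB
      rcases hno.1.eq_or_lt with h | h
      · right; exact ⟨h.symm, hno.2⟩
      · left; refine ⟨h.le, le_antisymm ?_ hno.2⟩
        by_contra hlt
        exact hq ⟨h, not_le.1 hlt⟩
    have hsub : boxPart m d n (({q : ℝ × ℝ | |q.1| < ε ∧ |q.2| < ε} ∩ {q | q.1 < 0}) ∪
        ({q : ℝ × ℝ | |q.1| < ε ∧ |q.2| < ε} ∩ {q | q.2 < 0})) ⊆ D := by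
      have hab : |-(ε/2)| < ε := by rw [abs_neg, abs_of_pos (by linarith)]; linarith
      have hm1 : ((-(ε/2), -(ε/2)) : ℝ × ℝ) ∈ {q : ℝ × ℝ | |q.1| < ε ∧ |q.2| < ε} ∩ {q | q.1 < 0} :=
        ⟨⟨hab, hab⟩, by show -(ε/2) < 0; linarith⟩
      have hm2 : ((-(ε/2), -(ε/2)) : ℝ × ℝ) ∈ {q : ℝ × ℝ | |q.1| < ε ∧ |q.2| < ε} ∩ {q | q.2 < 0} :=
        ⟨⟨hab, hab⟩, by show -(ε/2) < 0; linarith⟩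
      apply hD.2 _ (boxPart_conn (IsPreconnected.union (-(ε/2), -(ε/2)) hm1 hm2
        ((convex_prod_lt ε).inter cvx_neg1).isPreconnected
        ((convex_prod_lt ε).inter cvx_neg2).isPreconnected))
      · rw [Set.disjoint_left]
        rintro _ ⟨q, ⟨⟨h1, h2⟩, h3⟩ | ⟨⟨h1, h2⟩, h3⟩, rfl⟩ hb
        · have h3' : q.1 < 0 := h3
          rcases (hB _ _ h1 h2).1 hb with h | h <;> linarith
        · have h3' : q.2 < 0 := h3
          rcases (hB _ _ h1 h2).1 hb with h | h <;> linarith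
      · refine ⟨_, ⟨(s, t), ?_, rfl⟩, hyD⟩
        rcases hst with h | h
        · exact Or.inl ⟨⟨hs, ht⟩, h⟩
        · exact Or.inr ⟨⟨hs, ht⟩, h⟩
    apply acc (e := -(d + n)) hδp
    intro τ h1 h2
    obtain ⟨b1, b2⟩ := hsmall (-τ) (by rwa [abs_neg, abs_of_pos h1])
    apply hsub
    refine ⟨(s' + -τ, t' + -τ), ?_, ?_⟩
    · rcases h0 with h | h
      · right; exact ⟨⟨b1, b2⟩, by show t' + -τ < 0; linarith⟩
      · left; exact ⟨⟨b1, b2⟩, by show s' + -τ < 0; linarith⟩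
    · simp only; module

lemma x_signs (m d n : ℝ × ℝ) {τ : ℝ} (hτ : 0 < τ) (hcr : cr d n ≠ 0) :
    cr (m + (-τ) • d - (m + (-τ) • n)) (m + τ • n - (m + (-τ) • n)) *
      cr (m + τ • d - (m + (-τ) • n)) (m + τ • n - (m + (-τ) • n)) < 0 ∧
    cr (m + (-τ) • n - (m + (-τ) • d)) (m + τ • d - (m + (-τ) • d)) *
      cr (m + τ • n - (m + (-τ) • d)) (m + τ • d - (m + (-τ) • d)) < 0 := by
  have h0 : 0 < (2 * τ * τ * cr d n) * (2 * τ * τ * cr d n) := mul_self_pos.2 (by positivity)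
  constructor
  · have e : cr (m + (-τ) • d - (m + (-τ) • n)) (m + τ • n - (m + (-τ) • n)) *
      cr (m + τ • d - (m + (-τ) • n)) (m + τ • n - (m + (-τ) • n)) =
      -((2 * τ * τ * cr d n) * (2 * τ * τ * cr d n)) := by
      simp only [cr, Prod.fst_add, Prod.snd_add, Prod.fst_sub, Prod.snd_sub, Prod.smul_fst,
        Prod.smul_snd, smul_eq_mul]; ring
    rw [e]; linarith
  · have e : cr (m + (-τ) • n - (m + (-τ) • d)) (m + τ • d - (m + (-τ) • d)) *
      cr (m + τ • n - (m + (-τ) • d)) (m + τ • d - (m + (-τ) • d)) =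
      -((2 * τ * τ * cr d n) * (2 * τ * τ * cr d n)) := by
      simp only [cr, Prod.fst_add, Prod.snd_add, Prod.fst_sub, Prod.snd_sub, Prod.smul_fst,
        Prod.smul_snd, smul_eq_mul]; ring
    rw [e]; linarith

namespace SimplePolygon
variable (Q : SimplePolygon)

lemma mod_lt' (k : ℕ) : k % Q.n < Q.n := Nat.mod_lt _ (by have := Q.three_le; omega)

lemma chain_conn (a b : ℕ) : IsPreconnected (⋃ k ∈ Icc a b, Q.edge ⟨k % Q.n, Q.mod_lt' k⟩) := by
  apply IsPreconnected.biUnion_of_chain ordConnected_Icc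
  · intro k _; exact (convex_segment _ _).isPreconnected
  · intro k _ _
    refine ⟨Q.vtx (finNext ⟨k % Q.n, Q.mod_lt' k⟩), right_mem_segment ℝ _ _, ?_⟩
    have : finNext ⟨k % Q.n, Q.mod_lt' k⟩ = ⟨(Order.succ k) % Q.n, Q.mod_lt' _⟩ := by
      simp [finNext]
    rw [this]
    exact left_mem_segment ℝ _ _

lemma boundary_conn : IsPreconnected Q.boundary := by
  have h := Q.chain_conn 0 (Q.n - 1)
  convert h using 1
  ext x
  simp only [SimplePolygon.boundary, mem_iUnion, edge]
  constructor
  · rintro ⟨i, hi⟩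
    refine ⟨i.val, ⟨by omega, by omega⟩, ?_⟩
    have : (⟨i.val % Q.n, Q.mod_lt' _⟩ : Fin Q.n) = i := by ext; simp [Nat.mod_eq_of_lt i.2]
    rw [this]; exact hi
  · rintro ⟨k, _, hk⟩
    exact ⟨_, hk⟩

lemma boundary_nonempty : Q.boundary.Nonempty :=
  ⟨_, mem_iUnion.2 ⟨⟨0, by have := Q.three_le; omega⟩, left_mem_segment ℝ _ _⟩⟩

lemma boundary_sub_closure {y : ℝ × ℝ} (hy : y ∉ Q.boundary) :
    Q.boundary ⊆ closure (connectedComponentIn Q.boundaryᶜ y) := by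
  set D := connectedComponentIn Q.boundaryᶜ y with hDdef
  have hD : Swallow Q.boundary D := swallow_comp hy
  have hyD : y ∈ D := mem_connectedComponentIn hy
  have hmeet : ∃ m ∈ Q.boundary, m ∈ closure D := by
    by_contra hno
    push Not at hno
    have hopen : IsOpen D := Q.boundary_compact.isClosed.isOpen_compl.connectedComponentIn
    have hcl : closure D ⊆ D := by
      apply hD.2 _ isPreconnected_connectedComponentIn.closure
      · exact Set.disjoint_left.2 (fun x hx hb => hno x hb hx)
      · exact ⟨y, subset_closure hyD, hyD⟩
    have hclosed : IsClosed D := isClosed_of_closure_subset hcl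
    have huniv := IsClopen.eq_univ ⟨hclosed, hopen⟩ ⟨y, hyD⟩
    obtain ⟨b, hb⟩ := Q.boundary_nonempty
    exact hD.1 (huniv ▸ mem_univ b : b ∈ D) hb
  obtain ⟨m, hm, hmD⟩ := hmeet
  intro x hx
  have := Q.boundary_conn.induction₂ (fun x y => x ∈ closure D ↔ y ∈ closure D) ?_ ?_ ?_ hm hx
  · exact this.1 hmD
  · intro w hw
    by_cases hwD : w ∈ closure D
    · obtain ⟨d, n, h⟩ := Q.model hw
      have he : ∀ᶠ x in nhds w, x ∈ Q.boundary → x ∈ closure D := by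
        rcases h with h | h
        · exact straight_acc h hD hwD
        · exact corner_acc h hD hwD
      filter_upwards [nhdsWithin_le_nhds he, self_mem_nhdsWithin] with v hv hvB
      exact ⟨fun _ => hv hvB, fun _ => hwD⟩
    · filter_upwards [nhdsWithin_le_nhds (isClosed_closure.isOpen_compl.mem_nhds hwD)] with v hv
      exact ⟨fun h => absurd h hwD, fun h => absurd h hv⟩
  · intro _ _ _ _ _ _ h h'; exact h.trans h'
  · intro _ _ _ _ h; exact h.symm

lemma compl_nonempty : ∃ u, u ∉ Q.region := by
  by_contra hno
  push Not at hno
  have hb := Q.region_compact.isBounded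
  exact outside_unbounded 0 (hb.subset (fun x _ => hno x))

lemma comp_sub {y : ℝ × ℝ} (hy : y ∈ Q.region \ Q.boundary) :
    connectedComponentIn Q.boundaryᶜ y ⊆ Q.region \ Q.boundary := by
  intro x hx
  have hxb := connectedComponentIn_subset _ _ hx
  refine ⟨Q.region_conn isPreconnected_connectedComponentIn
    (Set.disjoint_left.2 (fun w hw => connectedComponentIn_subset _ _ hw))
    (mem_connectedComponentIn hy.2) hx hy.1, hxb⟩

set_option maxHeartbeats 1600000 in
lemma interior_nonempty : (Q.region \ Q.boundary).Nonempty := by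
  by_contra hno
  rw [not_nonempty_iff_eq_empty] at hno
  have hreg : Q.region = Q.boundary := by
    apply Subset.antisymm
    · exact sdiff_eq_empty.1 hno
    · exact subset_union_left
  have hUo : IsOpen Q.boundaryᶜ := Q.boundary_compact.isClosed.isOpen_compl
  have hUc : IsPreconnected Q.boundaryᶜ := hreg ▸ Q.compl_conn
  have hn3 := Q.three_le
  let i0 : Fin Q.n := ⟨0, by omega⟩
  set u := Q.vtx i0 with hu
  set v := Q.vtx (finNext i0) with hv
  obtain ⟨⟨hcr, ε, hε, hB⟩, hoth⟩ := Q.straight_edge i0 (r := 1/2) (by norm_num) (by norm_num)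
  rw [← hu, ← hv] at hcr hB hoth
  set d := v - u with hd
  set n := perp d with hn
  set m := u + (1/2 : ℝ) • d with hm
  obtain ⟨τ, hτ0, hτ1, hτ2⟩ : ∃ τ : ℝ, 0 < τ ∧ τ < ε ∧ τ < 1/2 :=
    ⟨min ε (1/2) / 2, by positivity, by have := min_le_left ε (1/2); linarith,
      by have := min_le_right ε (1/2); linarith⟩
  have hum : u = m + (-(1/2) : ℝ) • d := by rw [hm]; module
  have hvm : v = m + ((1/2) : ℝ) • d := by rw [hm, hd]; module
  have hE : Q.edge i0 = segment ℝ (m + (-(1/2) : ℝ) • d) (m + ((1/2) : ℝ) • d) := by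
    rw [← hum, ← hvm]; rfl
  set T1 := segment ℝ (m + (-(1/2) : ℝ) • d) (m + (-τ) • d) with hT1
  set T3 := segment ℝ (m + τ • d) (m + ((1/2) : ℝ) • d) with hT3
  set T2 := ⋃ k ∈ Icc 1 (Q.n - 1), Q.edge ⟨k % Q.n, Q.mod_lt' k⟩ with hT2
  have hT1E : T1 ⊆ Q.edge i0 := by
    rw [hE, hT1]
    apply (convex_segment _ _).segment_subset (left_mem_segment ℝ _ _)
    have := (mem_seg_coord hcr m (-(1/2)) (1/2) (by norm_num) (-τ) 0).2 ⟨rfl, by linarith, by linarith⟩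
    simpa only [zero_smul, add_zero] using this
  have hT3E : T3 ⊆ Q.edge i0 := by
    rw [hE, hT3]
    apply (convex_segment _ _).segment_subset _ (right_mem_segment ℝ _ _)
    have := (mem_seg_coord hcr m (-(1/2)) (1/2) (by norm_num) τ 0).2 ⟨rfl, by linarith, by linarith⟩
    simpa only [zero_smul, add_zero] using this
  have hEB : ∀ i, Q.edge i ⊆ Q.boundary := fun i => subset_iUnion (fun i => segment ℝ (Q.vtx i) (Q.vtx (finNext i))) i
  have hTB : T1 ∪ T2 ∪ T3 ⊆ Q.boundary := by
    refine union_subset (union_subset (hT1E.trans (hEB _)) ?_) (hT3E.trans (hEB _))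
    exact iUnion₂_subset (fun k _ => hEB _)
  have hvT2 : v ∈ T2 := by
    refine mem_iUnion₂.2 ⟨1, ⟨le_rfl, by omega⟩, ?_⟩
    have : (⟨1 % Q.n, Q.mod_lt' 1⟩ : Fin Q.n) = finNext i0 := by simp [finNext, i0]
    rw [this]; exact left_mem_segment ℝ _ _
  have huT2 : u ∈ T2 := by
    refine mem_iUnion₂.2 ⟨Q.n - 1, ⟨by omega, le_rfl⟩, ?_⟩
    have : finNext (⟨(Q.n - 1) % Q.n, Q.mod_lt' _⟩ : Fin Q.n) = i0 := by
      ext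
      simp only [finNext, i0]
      rw [Nat.mod_eq_of_lt (by omega : Q.n - 1 < Q.n), Nat.sub_add_cancel (by omega), Nat.mod_self]
    have h2 : u = Q.vtx (finNext (⟨(Q.n - 1) % Q.n, Q.mod_lt' _⟩ : Fin Q.n)) := by rw [this]
    rw [h2]; exact right_mem_segment ℝ _ _
  have hTc : IsPreconnected (T1 ∪ T2 ∪ T3) := by
    refine IsPreconnected.union v (Or.inr hvT2) ?_ (IsPreconnected.union u ?_ huT2
      (convex_segment _ _).isPreconnected (Q.chain_conn _ _)) (convex_segment _ _).isPreconnected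
    · rw [hvm]; exact right_mem_segment ℝ _ _
    · rw [hum]; exact left_mem_segment ℝ _ _
  have hmT : m ∉ T1 ∪ T2 ∪ T3 := by
    have hm0 : m = m + (0:ℝ) • d + (0:ℝ) • n := by module
    rintro ((h | h) | h)
    · have h' := (mem_seg_coord hcr m (-(1/2)) (-τ) (by linarith) 0 0).1
        (by rw [zero_smul, zero_smul, add_zero, add_zero]; exact h)
      linarith [h'.2.2]
    · obtain ⟨k, ⟨hk1, hk2⟩, hk⟩ := mem_iUnion₂.1 h
      refine hoth _ ?_ hk
      intro heq
      have := congrArg Fin.val heq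
      simp only [i0] at this
      rw [Nat.mod_eq_of_lt (by omega)] at this
      omega
    · have h' := (mem_seg_coord hcr m τ (1/2) (by linarith) 0 0).1
        (by rw [zero_smul, zero_smul, add_zero, add_zero]; exact h)
      linarith [h'.2.1]
  have habs : |τ| < ε := by rwa [abs_of_pos hτ0]
  have hzU : ∀ t : ℝ, |t| < ε → t ≠ 0 → m + t • n ∉ Q.boundary := by
    intro t ht h0 hb
    have := (hB 0 t (by simpa using hε) ht).1 (by simpa using hb)
    exact h0 this
  refine crossing hUo hUc (z := m + (-τ) • n) (z' := m + τ • n) (p := m + (-τ) • d) (p1 := m + τ • d)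
    (hzU (-τ) (by rwa [abs_neg]) (by linarith)) (hzU τ habs hτ0.ne') hTc
    (fun x hx hx' => hx' (hTB hx)) ?_ ?_ ?_ ?_ ?_ ?_
  · rw [Set.disjoint_left]
    intro x hxT hx
    rw [segment_eq_image'] at hx
    obtain ⟨r, ⟨hr0, hr1⟩, rfl⟩ := hx
    have he : m + (-τ) • n + r • (m + τ • n - (m + (-τ) • n)) = m + (τ * (2 * r - 1)) • n := by module
    simp only [he] at hxT
    by_cases h0 : τ * (2 * r - 1) = 0
    · rw [h0, zero_smul, add_zero] at hxT
      exact hmT hxT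
    · exact hzU _ (by rw [abs_lt]; constructor <;> nlinarith) h0 (hTB hxT)
  · left; left; exact right_mem_segment ℝ _ _
  · right; exact left_mem_segment ℝ _ _
  · rw [compl_compl]
    refine Subset.trans ?_ (hEB i0)
    exact (convex_segment _ _).segment_subset (hT1E (right_mem_segment ℝ _ _)) (hT3E (left_mem_segment ℝ _ _))
  · exact (x_signs m d n hτ0 hcr).1
  · exact (x_signs m d n hτ0 hcr).2

lemma boundary_sub_closure_interior : Q.boundary ⊆ closure (Q.region \ Q.boundary) := by
  obtain ⟨y, hy⟩ := Q.interior_nonempty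
  exact (Q.boundary_sub_closure hy.2).trans (closure_mono (Q.comp_sub hy))

lemma interior_conn : IsPreconnected (Q.region \ Q.boundary) := by
  apply isPreconnected_of_forall_pair
  intro y1 h1 y2 h2
  obtain ⟨u, hu⟩ := Q.compl_nonempty
  have hub : u ∉ Q.boundary := fun h => hu (Or.inl h)
  have hn3 := Q.three_le
  have hst := (Q.straight_edge ⟨0, by omega⟩ (r := 1/2) (by norm_num) (by norm_num)).1
  set m := Q.vtx ⟨0, by omega⟩ + (1/2 : ℝ) • (Q.vtx (finNext ⟨0, by omega⟩) - Q.vtx ⟨0, by omega⟩)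
  have hcr := hst.1
  obtain ⟨ε, hε, hB, hH⟩ := straight_halves hst
  have hmB : m ∈ Q.boundary := by
    have := (hB 0 0 (by simpa using hε) (by simpa using hε)).2 rfl
    simpa using this
  have hV := coord_nhds hcr m hε
  have key : ∀ y, y ∉ Q.boundary →
      m + (0:ℝ) • (Q.vtx (finNext ⟨0, by omega⟩) - Q.vtx ⟨0, by omega⟩) + (ε/2) • perp (Q.vtx (finNext ⟨0, by omega⟩) - Q.vtx ⟨0, by omega⟩) ∈ connectedComponentIn Q.boundaryᶜ y ∨
      m + (0:ℝ) • (Q.vtx (finNext ⟨0, by omega⟩) - Q.vtx ⟨0, by omega⟩) + (-(ε/2)) • perp (Q.vtx (finNext ⟨0, by omega⟩) - Q.vtx ⟨0, by omega⟩) ∈ connectedComponentIn Q.boundaryᶜ y := by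
    intro y hy
    have hc := Q.boundary_sub_closure hy hmB
    obtain ⟨w, ⟨s, t, hs, ht, rfl⟩, hwD⟩ := mem_closure_iff_nhds.1 hc _ hV
    have hab : |ε/2| < ε := by rw [abs_of_pos (by linarith)]; linarith
    rcases hH _ (swallow_comp hy) s t hs ht hwD with h | h
    · left; exact h 0 (ε/2) (by simpa using hε) hab (by linarith)
    · right; exact h 0 (-(ε/2)) (by simpa using hε) (by rwa [abs_neg]) (by linarith)
  have hno : ∀ y ∈ Q.region \ Q.boundary, ∀ w, w ∈ connectedComponentIn Q.boundaryᶜ y →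
      w ∈ connectedComponentIn Q.boundaryᶜ u → False := by
    intro y hy w hw hw'
    apply hu
    exact Q.region_conn isPreconnected_connectedComponentIn
      (Set.disjoint_left.2 (fun w hw => connectedComponentIn_subset _ _ hw)) hw'
      (mem_connectedComponentIn hub) (Q.comp_sub hy hw).1
  have hmeet : ∃ w, w ∈ connectedComponentIn Q.boundaryᶜ y1 ∧ w ∈ connectedComponentIn Q.boundaryᶜ y2 := by
    rcases key y1 h1.2 with a | a <;> rcases key y2 h2.2 with b | b
    · exact ⟨_, a, b⟩
    · rcases key u hub with c | c
      · exact (hno y1 h1 _ a c).elim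
      · exact (hno y2 h2 _ b c).elim
    · rcases key u hub with c | c
      · exact (hno y2 h2 _ b c).elim
      · exact (hno y1 h1 _ a c).elim
    · exact ⟨_, a, b⟩
  obtain ⟨w, hw1, hw2⟩ := hmeet
  exact ⟨_, union_subset (Q.comp_sub h1) (Q.comp_sub h2), Or.inl (mem_connectedComponentIn h1.2),
    Or.inr (mem_connectedComponentIn h2.2),
    isPreconnected_connectedComponentIn.union w hw1 hw2 isPreconnected_connectedComponentIn⟩

end SimplePolygon


/-- points seen from `a` inside `P` -/
def Vis (P : Set (ℝ × ℝ)) (a : ℝ × ℝ) : Set (ℝ × ℝ) :=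
  {x | ∀ t : ℝ, 0 ≤ t → t ≤ 1 → a + t • (x - a) ∈ P}

/-- The abstract setting in which the main argument takes place. -/
structure Setting (P O R : Set (ℝ × ℝ)) (a : ℝ × ℝ) : Prop where
  cpt : IsCompact P
  Uconn : IsPreconnected Pᶜ
  Oopen : IsOpen O
  Oconn : IsPreconnected O
  OP : O ⊆ P
  dense : P ⊆ closure O
  conic : ∀ p, ConicAt P p
  aP : a ∈ P
  aO : a ∉ O
  Rsub : R ⊆ P \ Vis P a
  Rconn : IsPreconnected R
  Rne : R.Nonempty
  Rsw : ∀ S : Set (ℝ × ℝ), IsPreconnected S → S ⊆ P \ Vis P a → (S ∩ R).Nonempty → S ⊆ R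

lemma vis_closed {P : Set (ℝ × ℝ)} (hP : IsClosed P) (a : ℝ × ℝ) : IsClosed (Vis P a) := by
  have : Vis P a = ⋂ t ∈ Icc (0:ℝ) 1, (fun x => a + t • (x - a)) ⁻¹' P := by
    ext x; simp [Vis]
  rw [this]
  exact isClosed_biInter (fun t _ => hP.preimage (by fun_prop))

lemma vis_sub (P : Set (ℝ × ℝ)) (a : ℝ × ℝ) : Vis P a ⊆ P := by
  intro x hx
  have := hx 1 zero_le_one le_rfl
  simpa using this

lemma seg_pt {x y w : ℝ × ℝ} (h : w ∈ segment ℝ x y) : ∃ t : ℝ, 0 ≤ t ∧ t ≤ 1 ∧ w = x + t • (y - x) := by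
  rw [segment_eq_image'] at h
  obtain ⟨t, ⟨h0, h1⟩, rfl⟩ := h
  exact ⟨t, h0, h1, rfl⟩

lemma pt_seg (x y : ℝ × ℝ) {t : ℝ} (h0 : 0 ≤ t) (h1 : t ≤ 1) : x + t • (y - x) ∈ segment ℝ x y := by
  rw [segment_eq_image']
  exact ⟨t, ⟨h0, h1⟩, rfl⟩

/-- affine coordinates -/
def Co (a d n : ℝ × ℝ) (s h : ℝ) : ℝ × ℝ := a + s • d + h • n

lemma Co_cont (a d n : ℝ × ℝ) : Continuous (fun q : ℝ × ℝ => Co a d n q.1 q.2) := by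
  unfold Co; fun_prop

lemma Co_surj {d n : ℝ × ℝ} (h : cr d n ≠ 0) (a x : ℝ × ℝ) : ∃ s t, x = Co a d n s t :=
  ⟨_, _, coord_eq h a x⟩

lemma Co_inj {a d n : ℝ × ℝ} (h : cr d n ≠ 0) {s t s' t' : ℝ}
    (he : Co a d n s t = Co a d n s' t') : s = s' ∧ t = t' := coord_unique h he

lemma Co_seg (a d n : ℝ × ℝ) (s h s' h' t : ℝ) :
    Co a d n s h + t • (Co a d n s' h' - Co a d n s h) = Co a d n (s + t * (s' - s)) (h + t * (h' - h)) := by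
  unfold Co; module

lemma Co_ray (a d n : ℝ × ℝ) (s h t : ℝ) :
    a + t • (Co a d n s h - a) = Co a d n (t * s) (t * h) := by
  unfold Co; module

lemma Co_seg_mem {a d n : ℝ × ℝ} {s h s' h' : ℝ} {w : ℝ × ℝ}
    (hw : w ∈ segment ℝ (Co a d n s h) (Co a d n s' h')) :
    ∃ t : ℝ, 0 ≤ t ∧ t ≤ 1 ∧ w = Co a d n (s + t * (s' - s)) (h + t * (h' - h)) := by
  obtain ⟨t, h0, h1, rfl⟩ := seg_pt hw
  exact ⟨t, h0, h1, Co_seg _ _ _ _ _ _ _ _⟩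

lemma good_or_bad {P : Set (ℝ × ℝ)} (hc : ∀ p, ConicAt P p) (a d n : ℝ × ℝ) (s : ℝ) :
    (∃ ε > 0, ∀ α β : ℝ, |α| < ε → 0 < β → β < ε → Co a d n (s + α) β ∈ P) ∨
    (∃ σ η : ℝ, 0 < η ∧ ∀ t : ℝ, 0 < t → t ≤ 1 → Co a d n (s + t * σ) (t * η) ∉ P) := by
  obtain ⟨ε, hε, h⟩ := hc (a + s • d)
  obtain ⟨δ, hδ, hb⟩ := nbhd_box (m := (0 : ℝ × ℝ)) (d := d) (n := n) (Metric.ball_mem_nhds 0 hε)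
  by_cases hg : ∀ α β : ℝ, |α| < δ → 0 < β → β < δ → Co a d n (s + α) β ∈ P
  · left; exact ⟨δ, hδ, hg⟩
  · right
    push Not at hg
    obtain ⟨α, β, h1, h2, h3, h4⟩ := hg
    refine ⟨α, β, h2, fun t ht0 ht1 hP => h4 ?_⟩
    have hn := hb α β h1 (by rwa [abs_of_pos h2])
    rw [mem_ball_zero_iff] at hn
    have := (h _ hn t ht0 ht1).2 (by
      convert hP using 1
      unfold Co; module)
    convert this using 1
    unfold Co; module

lemma conic_co {P : Set (ℝ × ℝ)} {a : ℝ × ℝ} (hc : ConicAt P a) (d n : ℝ × ℝ) :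
    ∃ ε > 0, ∀ s h : ℝ, |s| < ε → |h| < ε → ∀ t : ℝ, 0 < t → t ≤ 1 →
      (Co a d n s h ∈ P ↔ Co a d n (t * s) (t * h) ∈ P) := by
  obtain ⟨ε, hε, h⟩ := hc
  obtain ⟨δ, hδ, hb⟩ := nbhd_box (m := (0 : ℝ × ℝ)) (d := d) (n := n) (Metric.ball_mem_nhds 0 hε)
  refine ⟨δ, hδ, fun s k hs hk t h0 h1 => ?_⟩
  have hn := hb s k hs hk
  rw [mem_ball_zero_iff] at hn
  have := h _ hn t h0 h1
  have e1 : a + (0 + s • d + k • n) = Co a d n s k := by unfold Co; module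
  have e2 : a + t • (0 + s • d + k • n) = Co a d n (t * s) (t * k) := by unfold Co; module
  rwa [e1, e2] at this

lemma good_compact {P : Set (ℝ × ℝ)} {a d n : ℝ × ℝ} {s0 s1 : ℝ}
    (h : ∀ s ∈ Icc s0 s1, ∃ ε > 0, ∀ α β : ℝ, |α| < ε → 0 < β → β < ε → Co a d n (s + α) β ∈ P) :
    ∃ δ > 0, ∀ s ∈ Icc s0 s1, ∀ β : ℝ, 0 < β → β < δ → Co a d n s β ∈ P := by
  apply isCompact_Icc.induction_on
    (p := fun K => ∃ δ > 0, ∀ s ∈ K, ∀ β : ℝ, 0 < β → β < δ → Co a d n s β ∈ P)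
  · exact ⟨1, one_pos, by simp⟩
  · rintro K L hKL ⟨δ, hδ, hL⟩
    exact ⟨δ, hδ, fun s hs => hL s (hKL hs)⟩
  · rintro K L ⟨δ, hδ, hK⟩ ⟨δ', hδ', hL⟩
    refine ⟨min δ δ', lt_min hδ hδ', ?_⟩
    rintro s (hs | hs) β h0 h1
    · exact hK s hs β h0 (h1.trans_le (min_le_left _ _))
    · exact hL s hs β h0 (h1.trans_le (min_le_right _ _))
  · intro s hs
    obtain ⟨ε, hε, hg⟩ := h s hs
    refine ⟨Metric.ball s ε, mem_nhdsWithin_of_mem_nhds (Metric.ball_mem_nhds _ hε), ε, hε, ?_⟩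
    intro s' hs' β h0 h1
    have := hg (s' - s) β (by simpa [Real.dist_eq] using hs') h0 h1
    simpa using this

/-- a blocker at `b < 1` hides all points just above the ray beyond it -/
lemma block_hides {P : Set (ℝ × ℝ)} {a d n : ℝ × ℝ} {b σ η : ℝ} (hb0 : 0 < b) (hb1 : b < 1)
    (hη : 0 < η) (hU : ∀ t : ℝ, 0 < t → t ≤ 1 → Co a d n (b + t * σ) (t * η) ∉ P) :
    ∃ δ > 0, ∀ s β : ℝ, 1 - δ < s → 0 < β → β < δ → Co a d n s β ∉ Vis P a := by
  have hc : ContinuousAt (fun k : ℝ => b * k / (η - k * σ)) 0 := by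
    apply ContinuousAt.div <;> first | fun_prop | simpa using hη.ne'
  have hc2 : ContinuousAt (fun k : ℝ => η - k * σ) 0 := by fun_prop
  have hc3 : ContinuousAt (fun k : ℝ => b * k / (η - k * σ) * σ) 0 := hc.mul continuousAt_const
  have e1 := hc.eventually_lt (f := fun k : ℝ => b * k / (η - k * σ)) (g := fun _ => (1:ℝ)) continuousAt_const (by simp)
  have e2 := continuousAt_const.eventually_lt (f := fun _ : ℝ => (0:ℝ)) hc2 (by simpa using hη)
  have e3 := hc3.eventually_lt (f := fun k : ℝ => b * k / (η - k * σ) * σ) (g := fun _ => (1-b)/2) continuousAt_const (by simp; linarith)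
  have e4 := continuousAt_const.eventually_lt (f := fun _ : ℝ => -b) hc3 (by simp; linarith)
  obtain ⟨k0, hk0, hk⟩ := Metric.eventually_nhds_iff.1 (e1.and (e2.and (e3.and e4)))
  refine ⟨min (k0/2) ((1-b)/2), lt_min (by linarith) (by linarith), fun s β hs h0 h1 hv => ?_⟩
  have hs' : (1 + b)/2 < s := by have := min_le_right (k0/2) ((1-b)/2); linarith
  have hs0 : 0 < s := by linarith
  have hβ : β < k0/2 := h1.trans_le (min_le_left _ _)
  set k := β / s with hkdef
  have hkp : 0 < k := by positivity
  have hkk : k < k0 := by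
    rw [hkdef, div_lt_iff₀ hs0]; nlinarith
  obtain ⟨f1, f2, f3, f4⟩ := hk (y := k) (by rw [Real.dist_eq, sub_zero, abs_of_pos hkp]; exact hkk)
  set t := b * k / (η - k * σ) with ht
  have htp : 0 < t := by positivity
  have hte : t * η = (b + t * σ) * k := by
    have : t * (η - k * σ) = b * k := by rw [ht]; field_simp
    linarith
  apply hU t htp f1.le
  have := hv ((b + t * σ)/s) (div_nonneg (by linarith) hs0.le) (by rw [div_le_one hs0]; linarith)
  rw [Co_ray] at this
  convert this using 2
  · field_simp
  · rw [hte, hkdef]; field_simp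

/-- without blockers, points just above are visible -/
lemma noblock_sees {P O : Set (ℝ × ℝ)} {a d n : ℝ × ℝ} (hc : ∀ p, ConicAt P p) (hO : IsOpen O)
    (hOP : O ⊆ P) (haP : a ∈ P) (hp : a + d ∈ O)
    (hg : ∀ s : ℝ, 0 < s → s < 1 → ∃ ε > 0, ∀ α β : ℝ, |α| < ε → 0 < β → β < ε → Co a d n (s + α) β ∈ P) :
    ∃ δ > 0, ∀ α β : ℝ, |α| < δ → 0 < β → β < δ → Co a d n (1 + α) β ∈ Vis P a := by
  obtain ⟨ε, hε, hbox⟩ := nbhd_box (m := a + d) (d := d) (n := n) (hO.mem_nhds hp)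
  obtain ⟨ε', hε', hcon⟩ := conic_co (hc a) d n
  obtain ⟨s0, hs0, hs1, hs2⟩ : ∃ s0 : ℝ, 0 < s0 ∧ s0 < ε' ∧ s0 < 1/2 :=
    ⟨min ε' (1/2) / 2, by positivity, by have := min_le_left ε' (1/2); linarith,
      by have := min_le_right ε' (1/2); linarith⟩
  have hbox' : ∀ α β : ℝ, |α| < ε → |β| < ε → Co a d n (1 + α) β ∈ P := by
    intro α β h1 h2
    apply hOP
    convert hbox α β h1 h2 using 1
    unfold Co; module
  obtain ⟨δ, hδ, hP⟩ := good_compact (P := P) (a := a) (d := d) (n := n) (s0 := s0) (s1 := 1 + ε/2) (by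
    intro s hs
    by_cases h : s < 1
    · exact hg s (by linarith [hs.1]) h
    · push Not at h
      refine ⟨ε/2, by linarith, fun α β h1 h2 h3 => ?_⟩
      have := hbox' (s - 1 + α) β (by
        rw [abs_lt] at h1 ⊢; constructor <;> linarith [hs.2]) (by rw [abs_of_pos h2]; linarith)
      convert this using 2; ring)
  obtain ⟨δ', h1, h2, h3, h4, h5⟩ : ∃ δ' : ℝ, 0 < δ' ∧ δ' < δ ∧ δ' < ε/2 ∧ δ' < 1/2 ∧ δ' < ε' := by
    refine ⟨min (min δ (ε/2)) (min (1/2) ε') / 2, by positivity, ?_, ?_, ?_, ?_⟩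
    all_goals
      have m1 := min_le_left (min δ (ε/2)) (min (1/2) ε')
      have m2 := min_le_right (min δ (ε/2)) (min (1/2) ε')
      have m3 := min_le_left δ (ε/2)
      have m4 := min_le_right δ (ε/2)
      have m5 := min_le_left (1/2) ε'
      have m6 := min_le_right (1/2) ε'
      linarith
  refine ⟨δ', h1, fun α β ha hb hb' t ht0 ht1 => ?_⟩
  rw [Co_ray]
  rw [abs_lt] at ha
  rcases ht0.eq_or_lt with h0 | ht0
  · subst h0
    have hs : Co a d n (0 * (1 + α)) (0 * β) = a := by unfold Co; module
    rw [hs]; exact haP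
  by_cases hts : s0 ≤ t * (1 + α)
  · exact hP _ ⟨hts, by nlinarith⟩ _ (by positivity) (by nlinarith)
  · push Not at hts
    have hα : 0 < 1 + α := by linarith
    have hmem : Co a d n s0 (s0 * β / (1 + α)) ∈ P := by
      apply hP s0 ⟨le_rfl, by linarith⟩ _ (by positivity)
      rw [div_lt_iff₀ hα]; nlinarith
    have := (hcon s0 (s0 * β / (1 + α)) (by rw [abs_of_pos hs0]; exact hs1) (by
      rw [abs_of_pos (by positivity), div_lt_iff₀ hα]; nlinarith) (t * (1 + α) / s0) (by positivity)
      (by rw [div_le_one hs0]; exact hts.le)).1 hmem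
    convert this using 2 <;> field_simp


lemma cr_Co (a d n : ℝ × ℝ) (s1 h1 s2 h2 s3 h3 s4 h4 : ℝ) :
    cr (Co a d n s1 h1 - Co a d n s2 h2) (Co a d n s3 h3 - Co a d n s4 h4) =
      ((s1 - s2) * (h3 - h4) - (h1 - h2) * (s3 - s4)) * cr d n := by
  simp only [Co, cr, Prod.fst_add, Prod.snd_add, Prod.fst_sub, Prod.snd_sub, Prod.smul_fst,
        Prod.smul_snd, smul_eq_mul]; ring

lemma cross2 {P T : Set (ℝ × ℝ)} {a d n : ℝ × ℝ} (hP : IsClosed P) (hU : IsPreconnected Pᶜ)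
    (hcr : cr d n ≠ 0) {β s1 h1 s2 h2 : ℝ} (hs1 : s1 < 1) (hs2 : 1 < s2) (hh1 : 0 < h1)
    (hh1' : h1 < β) (hh2 : 0 ≤ h2) (hh2' : h2 < β)
    (hz : Co a d n s1 h1 ∉ P) (hz' : Co a d n s2 h2 ∉ P) (hT : IsPreconnected T) (hTP : T ⊆ P)
    (hTz : Disjoint T (segment ℝ (Co a d n s1 h1) (Co a d n s2 h2)))
    (hp : Co a d n 1 0 ∈ T) (hp1 : Co a d n 1 β ∈ T)
    (hseg : segment ℝ (Co a d n 1 0) (Co a d n 1 β) ⊆ P) : False := by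
  have hq : 0 < cr d n * cr d n := mul_self_pos.2 hcr
  refine crossing hP.isOpen_compl hU (z := Co a d n s1 h1) (z' := Co a d n s2 h2)
    (p := Co a d n 1 0) (p1 := Co a d n 1 β) hz hz' hT (by rwa [compl_compl]) hTz hp hp1
    (by rwa [compl_compl]) ?_ ?_
  · rw [cr_Co, cr_Co]
    have x1 : 0 < ((1 - s1) * (h2 - h1) - (0 - h1) * (s2 - s1)) := by nlinarith
    have x2 : 0 < -((1 - s1) * (h2 - h1) - (β - h1) * (s2 - s1)) := by nlinarith
    have := mul_pos (mul_pos x1 x2) hq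
    linarith
  · rw [cr_Co, cr_Co]
    have x1 : 0 < -((s1 - 1) * (β - 0) - (h1 - 0) * (1 - 1)) := by nlinarith
    have x2 : 0 < ((s2 - 1) * (β - 0) - (h2 - 0) * (1 - 1)) := by nlinarith
    have := mul_pos (mul_pos x1 x2) hq
    linarith

lemma near_axis {T : Set (ℝ × ℝ)} {a d n : ℝ × ℝ} (hT : IsClosed T) {b E : ℝ} (hbE : b ≤ E)
    (h : ∀ s ∈ Icc b E, Co a d n s 0 ∉ T) :
    ∃ δ > 0, ∀ s k : ℝ, b - δ < s → s < E + δ → |k| < δ → Co a d n s k ∉ T := by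
  have hK : IsCompact (Icc b E ×ˢ ({0} : Set ℝ)) := isCompact_Icc.prod isCompact_singleton
  have hO : IsOpen ((fun q : ℝ × ℝ => Co a d n q.1 q.2) ⁻¹' Tᶜ) :=
    hT.isOpen_compl.preimage (Co_cont a d n)
  obtain ⟨δ, hδ, hsub⟩ := hK.exists_thickening_subset_open hO (by
    rintro ⟨s, k⟩ ⟨hs, hk⟩
    simp only [mem_singleton_iff] at hk
    subst hk
    exact h s hs)
  refine ⟨δ, hδ, fun s k h1 h2 h3 => ?_⟩
  have : ((s, k) : ℝ × ℝ) ∈ Metric.thickening δ (Icc b E ×ˢ ({0} : Set ℝ)) := by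
    rw [Metric.mem_thickening_iff]
    refine ⟨(max b (min s E), 0), ⟨⟨le_max_left _ _, max_le hbE (min_le_right _ _)⟩, rfl⟩, ?_⟩
    rw [Prod.dist_eq]
    apply max_lt
    · simp only [Real.dist_eq]
      rw [abs_lt]
      rcases le_total s E with c | c
      · rw [min_eq_left c]
        rcases le_total b s with c' | c'
        · rw [max_eq_right c']; constructor <;> linarith
        · rw [max_eq_left c']; constructor <;> linarith
      · rw [min_eq_right c, max_eq_right hbE]; constructor <;> linarith
    · simpa [Real.dist_eq] using h3
  exact hsub this

lemma main_cross {P T T0 : Set (ℝ × ℝ)} {a d n : ℝ × ℝ} (hP : IsClosed P) (hU : IsPreconnected Pᶜ)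
    (hcr : cr d n ≠ 0) {β b σ η E : ℝ} (hβ : 0 < β) (hb : b < 1) (hη : 0 < η)
    (hbl : ∀ t : ℝ, 0 < t → t ≤ 1 → Co a d n (b + t * σ) (t * η) ∉ P) (hE1 : 1 < E)
    (hE : ∀ ε > 0, ∃ s' h' : ℝ, |s' - E| < ε ∧ 0 ≤ h' ∧ h' < ε ∧ Co a d n s' h' ∉ P)
    (hT : IsPreconnected T) (hTP : T ⊆ P) (hT0 : IsClosed T0)
    (hT0d : ∀ s ∈ Icc b E, Co a d n s 0 ∉ T0)
    (hTT : ∀ x ∈ T, x ∈ T0 ∨ ∃ s h : ℝ, h ≤ 0 ∧ x = Co a d n s h)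
    (hp : Co a d n 1 0 ∈ T) (hp1 : Co a d n 1 β ∈ T)
    (hseg : segment ℝ (Co a d n 1 0) (Co a d n 1 β) ⊆ P) : False := by
  obtain ⟨δ, hδ, hn⟩ := near_axis hT0 (by linarith : b ≤ E) hT0d
  obtain ⟨s2, h2, g1, g2, g3, g4⟩ := hE (min (min δ β) (E - 1)) (lt_min (lt_min hδ hβ) (by linarith))
  have m1 := min_le_left (min δ β) (E - 1)
  have m2 := min_le_right (min δ β) (E - 1)
  have m3 := min_le_left δ β
  have m4 := min_le_right δ β
  rw [abs_lt] at g1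
  obtain ⟨t, ht0, ht1, k1, k2, k3⟩ : ∃ t : ℝ, 0 < t ∧ t ≤ 1 ∧ |t * σ| < min δ (1 - b) ∧ t * η < δ ∧ t * η < β := by
    have c1 : ContinuousAt (fun t : ℝ => |t * σ|) 0 := by fun_prop
    have c2 : ContinuousAt (fun t : ℝ => t * η) 0 := by fun_prop
    have e1 := c1.eventually_lt (g := fun _ => min δ (1 - b)) continuousAt_const (by
      simp only [zero_mul, abs_zero]; exact lt_min hδ (by linarith))
    have e2 := c2.eventually_lt (g := fun _ => δ) continuousAt_const (by simpa using hδ)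
    have e3 := c2.eventually_lt (g := fun _ => β) continuousAt_const (by simpa using hβ)
    have e4 : ∀ᶠ t : ℝ in nhds 0, t < 1 := eventually_lt_nhds one_pos
    have := (nhdsWithin_le_nhds (s := Ioi (0:ℝ)) (e1.and (e2.and (e3.and e4))))
    obtain ⟨t, ⟨f1, f2, f3, f4⟩, f5⟩ := (Filter.Eventually.and this self_mem_nhdsWithin).exists
    exact ⟨t, f5, f4.le, f1, f2, f3⟩
  have k1' := k1.trans_le (min_le_left _ _)
  have k1'' := k1.trans_le (min_le_right _ _)
  rw [abs_lt] at k1' k1''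
  have hpos : 0 < t * η := mul_pos ht0 hη
  refine cross2 hP hU hcr (s1 := b + t * σ) (h1 := t * η) (s2 := s2) (h2 := h2) (β := β) (T := T)
    (by linarith) (by linarith) hpos k3 g2 (by linarith) (hbl t ht0 ht1) g4 hT hTP ?_ hp hp1 hseg
  rw [Set.disjoint_left]
  intro x hxT hx
  obtain ⟨r, r0, r1, rfl⟩ := Co_seg_mem hx
  rcases r1.eq_or_lt with rfl | r1
  · apply g4
    have := hTP hxT
    convert this using 2 <;> ring
  have hpp : 0 < t * η + r * (h2 - t * η) := by nlinarith [mul_nonneg r0 g2, mul_pos (sub_pos.2 r1) hpos]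
  rcases hTT _ hxT with h | ⟨s, h, hh, he⟩
  · refine hn _ _ ?_ ?_ ?_ h
    · nlinarith [mul_nonneg r0 (by linarith : 0 ≤ s2 - (b - δ)), mul_pos (sub_pos.2 r1) (by linarith : 0 < b + t * σ - (b - δ))]
    · nlinarith [mul_nonneg r0 (by linarith : 0 ≤ E + δ - s2), mul_pos (sub_pos.2 r1) (by linarith : 0 < E + δ - (b + t * σ))]
    · rw [abs_of_pos hpp]
      nlinarith [mul_nonneg r0 (by linarith : 0 ≤ δ - h2), mul_pos (sub_pos.2 r1) (by linarith : 0 < δ - t * η)]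
  · have := (Co_inj hcr he).2
    linarith


namespace Setting
variable {P O R : Set (ℝ × ℝ)} {a : ℝ × ℝ}

lemma Rlocal (H : Setting P O R a) {y : ℝ × ℝ} (hy : y ∈ R) :
    ∃ ε > 0, ∀ y' ∈ P, ‖y' - y‖ < ε → segment ℝ y y' ⊆ R := by
  have hyv := H.Rsub hy
  obtain ⟨ε1, h1, hb⟩ := Metric.isOpen_iff.1 (vis_closed H.cpt.isClosed a).isOpen_compl y hyv.2
  obtain ⟨ε2, h2, hc⟩ := H.conic y
  refine ⟨min ε1 ε2, lt_min h1 h2, fun y' hy' hd => ?_⟩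
  apply H.Rsw _ (convex_segment _ _).isPreconnected _ ⟨y, left_mem_segment ℝ _ _, hy⟩
  intro w hw
  obtain ⟨t, t0, t1, rfl⟩ := seg_pt hw
  rcases t0.eq_or_lt with rfl | t0
  · simpa using hyv
  constructor
  · exact (hc (y' - y) (hd.trans_le (min_le_right _ _)) t t0 t1).1 (by simpa using hy')
  · apply hb
    rw [mem_ball_iff_norm, add_sub_cancel_left, norm_smul, Real.norm_eq_abs, abs_of_pos t0]
    have := hd.trans_le (min_le_left _ _)
    nlinarith [norm_nonneg (y' - y)]

lemma Rpath (H : Setting P O R a) {x y : ℝ × ℝ} (hx : x ∈ R) (hy : y ∈ R) :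
    ∃ S, IsCompact S ∧ IsPreconnected S ∧ S ⊆ R ∧ x ∈ S ∧ y ∈ S := by
  refine H.Rconn.induction₂ (fun x y => ∃ S, IsCompact S ∧ IsPreconnected S ∧ S ⊆ R ∧ x ∈ S ∧ y ∈ S)
    ?_ ?_ ?_ hx hy
  · intro w hw
    obtain ⟨ε, hε, h⟩ := H.Rlocal hw
    filter_upwards [nhdsWithin_le_nhds (Metric.ball_mem_nhds w hε), self_mem_nhdsWithin] with v hv hvR
    exact ⟨segment ℝ w v, segment_isCompact _ _, (convex_segment _ _).isPreconnected,
      h v (H.Rsub hvR).1 (by rw [← mem_ball_iff_norm]; exact hv), left_mem_segment ℝ _ _, right_mem_segment ℝ _ _⟩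
  · rintro u v w _ _ _ ⟨S, h1, h2, h3, h4, h5⟩ ⟨S', g1, g2, g3, g4, g5⟩
    exact ⟨S ∪ S', h1.union g1, h2.union v h5 g4 g2, union_subset h3 g3, Or.inl h4, Or.inr g5⟩
  · rintro u v _ _ ⟨S, h1, h2, h3, h4, h5⟩
    exact ⟨S, h1, h2, h3, h5, h4⟩

end Setting

/-- contact data at `a + d` -/
structure Contact (P O R : Set (ℝ × ℝ)) (a d n : ℝ × ℝ) : Prop where
  hcr : cr d n ≠ 0
  pO : a + d ∈ O
  vis : a + d ∈ Vis P a
  block : ∃ b σ η : ℝ, 0 < b ∧ b < 1 ∧ 0 < η ∧ ∀ t : ℝ, 0 < t → t ≤ 1 → Co a d n (b + t * σ) (t * η) ∉ P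
  box : ∃ δ > 0, ∀ α β : ℝ, |α| < δ → 0 < β → β < δ → Co a d n (1 + α) β ∈ R

lemma vis_axis {P : Set (ℝ × ℝ)} {a d : ℝ × ℝ} (h : a + d ∈ Vis P a) (n : ℝ × ℝ) {s : ℝ} (h0 : 0 ≤ s) (h1 : s ≤ 1) :
    Co a d n s 0 ∈ P := by
  have := h s h0 h1
  convert this using 1
  unfold Co; module

/-- axis visible iff initial part in `P` -/
lemma axis_vis {P : Set (ℝ × ℝ)} {a d n : ℝ × ℝ} {E : ℝ} (h : ∀ s, 0 ≤ s → s ≤ E → Co a d n s 0 ∈ P)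
    {s : ℝ} (h0 : 0 ≤ s) (h1 : s ≤ E) : Co a d n s 0 ∈ Vis P a := by
  intro t t0 t1
  rw [Co_ray, mul_zero]
  exact h _ (by positivity) (by nlinarith)

lemma half_convex (a d n : ℝ × ℝ) (A B : Set ℝ) (hA : Convex ℝ A) (hB : Convex ℝ B) :
    IsPreconnected ((fun q : ℝ × ℝ => Co a d n q.1 q.2) '' (A ×ˢ B)) :=
  (hA.prod hB).isPreconnected.image _ (Co_cont a d n).continuousOn

namespace Setting
variable {P O R : Set (ℝ × ℝ)} {a : ℝ × ℝ}

lemma side (H : Setting P O R a) {d n : ℝ × ℝ} (hcr : cr d n ≠ 0) (hO : a + d ∈ O)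
    (hV : a + d ∈ Vis P a) : ∃ δ > 0, ∀ α β : ℝ, |α| < δ → 0 < β → β < δ → Co a d n (1 + α) β ∈ R →
      Contact P O R a d n := by
  by_cases hg : ∀ s : ℝ, 0 < s → s < 1 → ∃ ε > 0, ∀ α β : ℝ, |α| < ε → 0 < β → β < ε → Co a d n (s + α) β ∈ P
  · obtain ⟨δ, hδ, h⟩ := noblock_sees H.conic H.Oopen H.OP H.aP hO hg
    exact ⟨δ, hδ, fun α β h1 h2 h3 hR => absurd (h α β h1 h2 h3) (H.Rsub hR).2⟩
  · push Not at hg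
    obtain ⟨b, hb0, hb1, hb⟩ := hg
    rcases good_or_bad H.conic a d n b with ⟨ε, hε, h⟩ | ⟨σ, η, hη, h⟩
    · obtain ⟨α, β, g1, g2, g3, g4⟩ := hb ε hε
      exact absurd (h α β g1 g2 g3) g4
    obtain ⟨δ1, hδ1, hh⟩ := block_hides hb0 hb1 hη h
    obtain ⟨δ2, hδ2, hbox⟩ := nbhd_box (m := a + d) (d := d) (n := n) (H.Oopen.mem_nhds hO)
    refine ⟨min δ1 δ2, lt_min hδ1 hδ2, fun α β h1 h2 h3 hR => ⟨hcr, hO, hV, ⟨b, σ, η, hb0, hb1, hη, h⟩, ?_⟩⟩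
    refine ⟨min δ1 δ2, lt_min hδ1 hδ2, ?_⟩
    set δ := min δ1 δ2
    have m1 : δ ≤ δ1 := min_le_left _ _
    have m2 : δ ≤ δ2 := min_le_right _ _
    have hsub : (fun q : ℝ × ℝ => Co a d n q.1 q.2) '' (Ioo (1 - δ) (1 + δ) ×ˢ Ioo 0 δ) ⊆ R := by
      apply H.Rsw _ (half_convex _ _ _ _ _ (convex_Ioo _ _) (convex_Ioo _ _))
      · rintro _ ⟨⟨s, k⟩, ⟨⟨s1, s2⟩, ⟨k1, k2⟩⟩, rfl⟩
        simp only at s1 s2 k1 k2 ⊢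
        constructor
        · apply H.OP
          convert hbox (s - 1) k (by rw [abs_lt]; constructor <;> linarith) (by rw [abs_of_pos k1]; linarith) using 1
          unfold Co; module
        · exact hh s k (by linarith) k1 (by linarith)
      · refine ⟨_, ⟨(1 + α, β), ⟨?_, ⟨h2, h3⟩⟩, rfl⟩, hR⟩
        rw [abs_lt] at h1
        exact ⟨by simp only; linarith, by simp only; linarith⟩
    intro α' β' g1 g2 g3
    apply hsub
    rw [abs_lt] at g1
    exact ⟨(1 + α', β'), ⟨⟨by simp only; linarith, by simp only; linarith⟩, ⟨g2, g3⟩⟩, rfl⟩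

lemma axis_near (H : Setting P O R a) {d : ℝ × ℝ} (n : ℝ × ℝ) (hO : a + d ∈ O)
    (hV : a + d ∈ Vis P a) : ∃ δ > 0, ∀ α : ℝ, |α| < δ → Co a d n (1 + α) 0 ∈ Vis P a := by
  obtain ⟨δ2, hδ2, hbox⟩ := nbhd_box (m := a + d) (d := d) (n := n) (H.Oopen.mem_nhds hO)
  refine ⟨min δ2 1, lt_min hδ2 one_pos, fun α hα => ?_⟩
  have m1 := hα.trans_le (min_le_left _ _)
  have m2 := hα.trans_le (min_le_right _ _)
  rw [abs_lt] at m1 m2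
  apply axis_vis (E := 1 + α) _ (by linarith) le_rfl
  intro s s0 s1
  by_cases h : s ≤ 1
  · exact vis_axis hV n s0 h
  · push Not at h
    apply H.OP
    convert hbox (s - 1) 0 (by rw [abs_lt]; constructor <;> linarith) (by simpa using hδ2) using 1
    unfold Co; module

lemma contact (H : Setting P O R a) {d n : ℝ × ℝ} (hcr : cr d n ≠ 0) (hO : a + d ∈ O)
    (hV : a + d ∈ Vis P a) (hR : a + d ∈ closure R) : Contact P O R a d n ∨ Contact P O R a d (-n) := by
  have hcr' : cr d (-n) ≠ 0 := by
    have : cr d (-n) = - cr d n := by simp only [cr, Prod.fst_neg, Prod.snd_neg]; ring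
    rw [this]; exact neg_ne_zero.2 hcr
  obtain ⟨δ1, h1, g1⟩ := H.side hcr hO hV
  obtain ⟨δ2, h2, g2⟩ := H.side hcr' hO hV
  obtain ⟨δ3, h3, g3⟩ := H.axis_near n hO hV
  obtain ⟨w, ⟨s, t, hs, ht, rfl⟩, hw⟩ := mem_closure_iff_nhds.1 hR _
    (coord_nhds hcr (a + d) (lt_min h1 (lt_min h2 h3)))
  have m1 : min δ1 (min δ2 δ3) ≤ δ1 := min_le_left _ _
  have m2 : min δ1 (min δ2 δ3) ≤ δ2 := (min_le_right _ _).trans (min_le_left _ _)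
  have m3 : min δ1 (min δ2 δ3) ≤ δ3 := (min_le_right _ _).trans (min_le_right _ _)
  rcases lt_trichotomy t 0 with h | h | h
  · right
    rw [abs_of_neg h] at ht
    refine g2 s (-t) (by linarith) (by linarith) (by linarith) ?_
    convert hw using 1
    unfold Co; module
  · exfalso
    refine (H.Rsub hw).2 ?_
    convert g3 s (by linarith) using 1
    rw [h]; unfold Co; module
  · left
    rw [abs_of_pos h] at ht
    refine g1 s t (by linarith) h (by linarith) ?_
    convert hw using 1
    unfold Co; module

/-- exit point of a ray -/
lemma exit (H : Setting P O R a) {d n : ℝ × ℝ} (hcr : cr d n ≠ 0) {s : ℝ} (hs : 0 ≤ s)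
    (hv : Co a d n s 0 ∈ Vis P a) : ∃ E, s ≤ E ∧ (∀ r, 0 ≤ r → r ≤ E → Co a d n r 0 ∈ P) ∧
      ∀ ε > 0, ∃ s', E < s' ∧ s' < E + ε ∧ Co a d n s' 0 ∉ P := by
  set I := {r : ℝ | 0 ≤ r ∧ ∀ r', 0 ≤ r' → r' ≤ r → Co a d n r' 0 ∈ P} with hI
  have hsI : s ∈ I := by
    refine ⟨hs, fun r h0 h1 => ?_⟩
    rcases hs.eq_or_lt with h | h
    · have e : r = 0 := le_antisymm (h1.trans h.symm.le) h0
      have : Co a d n r 0 = a := by rw [e]; unfold Co; module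
      rw [this]; exact H.aP
    · have := hv (r / s) (by positivity) (by rw [div_le_one h]; exact h1)
      rw [Co_ray] at this
      convert this using 2
      · field_simp
      · ring
  have hbd : BddAbove I := by
    have hd : d ≠ 0 := by
      rintro rfl; apply hcr; simp [cr]
    obtain ⟨C, hC⟩ := H.cpt.isBounded.exists_norm_le
    refine ⟨(C + ‖a‖) / ‖d‖, fun r hr => ?_⟩
    have := hC _ (hr.2 r hr.1 le_rfl)
    rw [le_div_iff₀ (norm_pos_iff.2 hd)]
    have e : r • d = Co a d n r 0 - a := by unfold Co; module
    have h2 : ‖r • d‖ ≤ C + ‖a‖ := by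
      rw [e]; exact (norm_sub_le _ _).trans (by linarith)
    rwa [norm_smul, Real.norm_eq_abs, abs_of_nonneg hr.1] at h2
  have hlub := isLUB_csSup ⟨s, hsI⟩ hbd
  set E := sSup I
  have hsE : s ≤ E := hlub.1 hsI
  have hlt : ∀ r, 0 ≤ r → r < E → Co a d n r 0 ∈ P := by
    intro r h0 h1
    obtain ⟨r', hr', h2⟩ := (lt_isLUB_iff hlub).1 h1
    exact hr'.2 r h0 h2.le
  have hEP : Co a d n E 0 ∈ P := by
    rcases hsE.eq_or_lt with h | h
    · rw [← h]; exact hsI.2 s hs le_rfl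
    have hc : IsClosed {r : ℝ | Co a d n r 0 ∈ P} :=
      H.cpt.isClosed.preimage ((Co_cont a d n).comp (by fun_prop : Continuous fun r : ℝ => (r, (0:ℝ))))
    have : E ∈ closure (Ioo s E) := by rw [closure_Ioo h.ne]; exact ⟨h.le, le_rfl⟩
    exact closure_minimal (fun r hr => hlt r (hs.trans hr.1.le) hr.2) hc this
  have hall : ∀ r, 0 ≤ r → r ≤ E → Co a d n r 0 ∈ P := by
    intro r h0 h1
    rcases h1.eq_or_lt with h | h
    · rw [h]; exact hEP
    · exact hlt r h0 h
  refine ⟨E, hsE, hall, fun ε hε => ?_⟩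
  by_contra hno
  push Not at hno
  have : E + ε/2 ∈ I := by
    refine ⟨by linarith, fun r h0 h1 => ?_⟩
    by_cases h : r ≤ E
    · exact hall r h0 h
    · push Not at h
      exact hno r h (by linarith)
  have := hlub.1 this
  linarith

end Setting


namespace Contact
variable {P O R : Set (ℝ × ℝ)} {a d n : ℝ × ℝ}

lemma eq1 (a d n : ℝ × ℝ) : Co a d n 1 0 = a + d := by unfold Co; module

lemma stub (C : Contact P O R a d n) : ∃ β > 0, ∀ h : ℝ, 0 < h → h ≤ β → Co a d n 1 h ∈ R := by
  obtain ⟨δ, hδ, h⟩ := C.box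
  refine ⟨δ/2, by linarith, fun k h0 h1 => ?_⟩
  have := h 0 k (by simpa using hδ) h0 (by linarith)
  simpa using this

lemma inClosure (C : Contact P O R a d n) : a + d ∈ closure R := by
  obtain ⟨β, hβ, h⟩ := C.stub
  apply acc (e := n) hβ
  intro τ h0 h1
  have := h τ h0 h1.le
  convert this using 1
  unfold Co; module

end Contact

namespace Setting
variable {P O R : Set (ℝ × ℝ)} {a d n : ℝ × ℝ}

lemma stub_seg {q m : ℝ × ℝ} {β : ℝ} (hβ : 0 < β)
    (h : ∀ k : ℝ, 0 < k → k ≤ β → q + k • m ∈ R) {w : ℝ × ℝ} (hw : w ∈ segment ℝ q (q + β • m)) :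
    w = q ∨ w ∈ R := by
  obtain ⟨t, t0, t1, rfl⟩ := seg_pt hw
  rcases t0.eq_or_lt with rfl | t0
  · left; simp
  · right
    have := h (t * β) (by positivity) (by nlinarith)
    convert this using 1
    module

lemma caseA (H : Setting P O R a) (C : Contact P O R a d n) {q : ℝ × ℝ} (hqO : q ∈ O)
    (hqV : q ∈ Vis P a) (hqR : q ∈ closure R) (hq : ∀ s : ℝ, 0 < s → q ≠ a + s • d) : False := by
  have hqa : q - a ≠ 0 := by
    intro h; rw [sub_eq_zero] at h; exact H.aO (h ▸ hqO)
  have hq' : a + (q - a) = q := by simp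
  obtain ⟨n', C'⟩ : ∃ n', Contact P O R a (q - a) n' := by
    rcases H.contact (cr_perp hqa) (by rwa [hq']) (by rwa [hq']) (by rwa [hq']) with h | h
    · exact ⟨_, h⟩
    · exact ⟨_, h⟩
  have hd0 : d ≠ 0 := by
    rintro rfl; apply C.hcr; simp [cr]
  obtain ⟨β, hβ, hst⟩ := C.stub
  obtain ⟨β', hβ', hst'⟩ := C'.stub
  have hst2 : ∀ k : ℝ, 0 < k → k ≤ β' → q + k • n' ∈ R := by
    intro k h0 h1
    convert hst' k h0 h1 using 1
    unfold Co; rw [one_smul, hq']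
  have hst1 : ∀ k : ℝ, 0 < k → k ≤ β → Co a d n 1 0 + k • n ∈ R := by
    intro k h0 h1
    convert hst k h0 h1 using 1
    unfold Co; module
  obtain ⟨S, S1, S2, S3, S4, S5⟩ := H.Rpath (hst β hβ le_rfl) (hst2 β' hβ' le_rfl)
  obtain ⟨b, σ, η, hb0, hb1, hη, hbl⟩ := C.block
  have hpV : Co a d n 1 0 ∈ Vis P a := by rw [Contact.eq1]; exact C.vis
  obtain ⟨E, hE1, hEP, hEU⟩ := H.exit C.hcr zero_le_one hpV
  have hE1' : 1 < E := by
    rcases hE1.eq_or_lt with h | h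
    · exfalso
      obtain ⟨ε, hε, hbox⟩ := nbhd_box (m := a + d) (d := d) (n := n) (H.Oopen.mem_nhds C.pO)
      obtain ⟨s', g1, g2, g3⟩ := hEU ε hε
      apply g3
      apply H.OP
      convert hbox (s' - 1) 0 (by rw [abs_lt]; constructor <;> linarith) (by simpa using hε) using 1
      unfold Co; module
    · exact h
  have hPc := H.cpt.isClosed
  have hRP : R ⊆ P := fun x hx => (H.Rsub hx).1
  set q1 := q + β' • n' with hq1
  have hsq : segment ℝ q q1 ⊆ P := by
    intro w hw
    rcases stub_seg hβ' hst2 hw with rfl | h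
    · exact vis_sub _ _ hqV
    · exact hRP h
  have hsa : segment ℝ a q ⊆ P := by
    intro w hw
    obtain ⟨t, t0, t1, rfl⟩ := seg_pt hw
    exact hqV t t0 t1
  have hsp : segment ℝ a (Co a d n 1 0) ⊆ P := by
    intro w hw
    obtain ⟨t, t0, t1, rfl⟩ := seg_pt hw
    exact hpV t t0 t1
  refine main_cross (T := ((S ∪ segment ℝ q q1) ∪ segment ℝ a q) ∪ segment ℝ a (Co a d n 1 0))
    (T0 := (S ∪ segment ℝ q q1) ∪ segment ℝ a q) hPc H.Uconn C.hcr hβ hb1 hη hbl hE1' ?_ ?_ ?_ ?_ ?_ ?_ ?_ ?_ ?_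
  · intro ε hε
    obtain ⟨s', g1, g2, g3⟩ := hEU ε hε
    exact ⟨s', 0, by rw [abs_lt]; constructor <;> linarith, le_rfl, hε, g3⟩
  · refine IsPreconnected.union a (Or.inr (left_mem_segment ℝ _ _)) (left_mem_segment ℝ _ _)
      (IsPreconnected.union q (Or.inr (left_mem_segment ℝ _ _)) (right_mem_segment ℝ _ _)
      (IsPreconnected.union q1 S5 (right_mem_segment ℝ _ _) S2 (convex_segment _ _).isPreconnected)
      (convex_segment _ _).isPreconnected) (convex_segment _ _).isPreconnected
  · exact union_subset (union_subset (union_subset (S3.trans hRP) hsq) hsa) hsp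
  · exact ((S1.union (segment_isCompact _ _)).union (segment_isCompact _ _)).isClosed
  · intro s hs hw
    have hs0 : 0 < s := by linarith [hs.1]
    have hv : Co a d n s 0 ∈ Vis P a := axis_vis hEP hs0.le hs.2
    have hco : Co a d n s 0 = a + s • d := by unfold Co; module
    rcases hw with (hw | hw) | hw
    · exact (H.Rsub (S3 hw)).2 hv
    · rcases stub_seg hβ' hst2 hw with h | h
      · exact hq s hs0 (h.symm.trans hco)
      · exact (H.Rsub h).2 hv
    · obtain ⟨t, t0, t1, ht⟩ := seg_pt hw
      rw [hco] at ht
      have ht' : s • d = t • (q - a) := by simpa using ht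
      rcases t0.eq_or_lt with rfl | t0
      · rw [zero_smul, smul_eq_zero] at ht'
        rcases ht' with h | h
        · linarith
        · exact hd0 h
      · apply hq (s / t) (by positivity)
        have : (s/t) • d = q - a := by
          rw [div_eq_inv_mul, mul_smul, ht', smul_smul, inv_mul_cancel₀ t0.ne', one_smul]
        rw [this]; simp
  · rintro x (hx | hx)
    · exact Or.inl hx
    · right
      obtain ⟨t, t0, t1, rfl⟩ := seg_pt hx
      rw [Co_ray]
      exact ⟨_, _, by simp, rfl⟩
  · exact Or.inr (right_mem_segment ℝ _ _)
  · exact Or.inl (Or.inl (Or.inl S4))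
  · intro w hw
    have e : Co a d n 1 β = Co a d n 1 0 + β • n := by unfold Co; module
    rw [e] at hw
    rcases stub_seg hβ hst1 hw with rfl | h
    · exact vis_sub _ _ hpV
    · exact hRP h

/-- common part of the two collinear cases -/
lemma caseB (H : Setting P O R a) (C : Contact P O R a d n) {s : ℝ} (hs : 1 < s)
    (hV : Co a d n s 0 ∈ Vis P a) {m : ℝ} {β' : ℝ} (hβ' : 0 < β')
    (hst2 : ∀ k : ℝ, 0 < k → k ≤ β' → Co a d n s 0 + k • (m • n) ∈ R) {E : ℝ} (hE1 : 1 < E)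
    (hEP : ∀ r, 0 ≤ r → r ≤ E → Co a d n r 0 ∈ P)
    (hE : ∀ ε > 0, ∃ s' h' : ℝ, |s' - E| < ε ∧ 0 ≤ h' ∧ h' < ε ∧ Co a d n s' h' ∉ P)
    (hm : m ≤ 0 ∨ E < s) : False := by
  obtain ⟨β, hβ, hst⟩ := C.stub
  have hst1 : ∀ k : ℝ, 0 < k → k ≤ β → Co a d n 1 0 + k • n ∈ R := by
    intro k h0 h1
    convert hst k h0 h1 using 1
    unfold Co; module
  obtain ⟨S, S1, S2, S3, S4, S5⟩ := H.Rpath (hst β hβ le_rfl) (hst2 β' hβ' le_rfl)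
  obtain ⟨b, σ, η, hb0, hb1, hη, hbl⟩ := C.block
  have hPc := H.cpt.isClosed
  have hRP : R ⊆ P := fun x hx => (H.Rsub hx).1
  set q := Co a d n s 0 with hq
  set q1 := q + β' • (m • n) with hq1
  have hsq : segment ℝ q q1 ⊆ P := by
    intro w hw
    rcases stub_seg hβ' hst2 hw with rfl | h
    · exact vis_sub _ _ hV
    · exact hRP h
  have hsP : ∀ r, 0 ≤ r → r ≤ s → Co a d n r 0 ∈ P := by
    intro r h0 h1
    have := hV (r / s) (div_nonneg h0 (by linarith)) (by rw [div_le_one (by linarith)]; exact h1)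
    rw [hq, Co_ray] at this
    convert this using 2
    · field_simp
    · ring
  have hpq : ∀ w ∈ segment ℝ (Co a d n 1 0) q, w ∈ P ∧ ∃ s h : ℝ, h ≤ 0 ∧ w = Co a d n s h := by
    intro w hw
    obtain ⟨t, t0, t1, rfl⟩ := Co_seg_mem hw
    have e : (0:ℝ) + t * (0 - 0) = 0 := by ring
    rw [e]
    exact ⟨hsP _ (by nlinarith) (by nlinarith), _, _, le_rfl, rfl⟩
  have hwq : ∀ w ∈ segment ℝ q q1, ∃ t : ℝ, 0 ≤ t ∧ w = Co a d n s (t * m) := by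
    intro w hw
    obtain ⟨t, t0, t1, rfl⟩ := seg_pt hw
    refine ⟨t * β', by positivity, ?_⟩
    rw [hq1, hq]; unfold Co; module
  have hpr : IsPreconnected ((S ∪ segment ℝ q q1) ∪ segment ℝ (Co a d n 1 0) q) := by
    refine IsPreconnected.union q (Or.inr (left_mem_segment ℝ _ _)) (right_mem_segment ℝ _ _)
      (IsPreconnected.union q1 S5 (right_mem_segment ℝ _ _) S2 (convex_segment _ _).isPreconnected)
      (convex_segment _ _).isPreconnected
  have hTP : ((S ∪ segment ℝ q q1) ∪ segment ℝ (Co a d n 1 0) q) ⊆ P :=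
    union_subset (union_subset (S3.trans hRP) hsq) (fun w hw => (hpq w hw).1)
  have hstubP : segment ℝ (Co a d n 1 0) (Co a d n 1 β) ⊆ P := by
    intro w hw
    have e : Co a d n 1 β = Co a d n 1 0 + β • n := by unfold Co; module
    rw [e] at hw
    rcases stub_seg hβ hst1 hw with rfl | h
    · exact hsP _ zero_le_one hs.le
    · exact hRP h
  have hSd : ∀ s ∈ Icc b E, Co a d n s 0 ∉ S := fun s' hs' hw =>
    (H.Rsub (S3 hw)).2 (axis_vis hEP (by linarith [hs'.1]) hs'.2)
  rcases hm with hm | hm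
  · refine main_cross (T := (S ∪ segment ℝ q q1) ∪ segment ℝ (Co a d n 1 0) q) (T0 := S)
      hPc H.Uconn C.hcr hβ hb1 hη hbl hE1 hE hpr hTP S1.isClosed hSd ?_
      (Or.inr (left_mem_segment ℝ _ _)) (Or.inl (Or.inl S4)) hstubP
    rintro x ((hx | hx) | hx)
    · exact Or.inl hx
    · right
      obtain ⟨t, t0, rfl⟩ := hwq x hx
      exact ⟨_, _, mul_nonpos_of_nonneg_of_nonpos t0 hm, rfl⟩
    · exact Or.inr (hpq x hx).2
  · refine main_cross (T := (S ∪ segment ℝ q q1) ∪ segment ℝ (Co a d n 1 0) q) (T0 := S ∪ segment ℝ q q1)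
      hPc H.Uconn C.hcr hβ hb1 hη hbl hE1 hE hpr hTP (S1.union (segment_isCompact _ _)).isClosed ?_ ?_
      (Or.inr (left_mem_segment ℝ _ _)) (Or.inl (Or.inl S4)) hstubP
    · rintro s' hs' (hw | hw)
      · exact hSd s' hs' hw
      · obtain ⟨t, t0, he⟩ := hwq _ hw
        have := (Co_inj C.hcr he).1
        linarith [hs'.2]
    · rintro x (hx | hx)
      · exact Or.inl hx
      · exact Or.inr (hpq x hx).2

lemma Co_scale (s α β : ℝ) (a d n : ℝ × ℝ) : Co a (s • d) n α β = Co a d n (α * s) β := by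
  unfold Co; module

lemma B_neg (H : Setting P O R a) (C : Contact P O R a d n) {s : ℝ} (hs : 1 < s)
    (C' : Contact P O R a (s • d) (-n)) : False := by
  have e : Co a d n s 0 = a + s • d := by unfold Co; module
  have hV : Co a d n s 0 ∈ Vis P a := by rw [e]; exact C'.vis
  obtain ⟨β', hβ', hst'⟩ := C'.stub
  obtain ⟨E, hE1, hEP, hEU⟩ := H.exit C.hcr (by linarith) hV
  refine H.caseB C hs hV (m := -1) hβ' ?_ (by linarith : 1 < E) hEP ?_ (Or.inl (by norm_num))
  · intro k h0 h1
    convert hst' k h0 h1 using 1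
    unfold Co; module
  · intro ε hε
    obtain ⟨s', g1, g2, g3⟩ := hEU ε hε
    exact ⟨s', 0, by rw [abs_lt]; constructor <;> linarith, le_rfl, hε, g3⟩

lemma B_pos (H : Setting P O R a) (C : Contact P O R a d n) {s : ℝ} (hs : 1 < s)
    (C' : Contact P O R a (s • d) n) : ∀ r ∈ Icc 1 s, a + r • d ∈ closure R ∩ Vis P a := by
  have e : Co a d n s 0 = a + s • d := by unfold Co; module
  have hV : Co a d n s 0 ∈ Vis P a := by rw [e]; exact C'.vis
  have hsP : ∀ r, 0 ≤ r → r ≤ s → Co a d n r 0 ∈ P := by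
    intro r h0 h1
    have := hV (r / s) (div_nonneg h0 (by linarith)) (by rw [div_le_one (by linarith)]; exact h1)
    rw [Co_ray] at this
    convert this using 2
    · field_simp
    · ring
  have hRP : R ⊆ P := fun x hx => (H.Rsub hx).1
  have hgood : ∀ r ∈ Icc 1 s, ∃ ε > 0, ∀ α β : ℝ, |α| < ε → 0 < β → β < ε → Co a d n (r + α) β ∈ P := by
    intro r hr
    rcases hr.1.eq_or_lt with h | h
    · obtain ⟨δ, hδ, hb⟩ := C.box
      exact ⟨δ, hδ, fun α β h1 h2 h3 => h ▸ hRP (hb α β h1 h2 h3)⟩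
    rcases hr.2.eq_or_lt with h' | h'
    · obtain ⟨δ, hδ, hb⟩ := C'.box
      refine ⟨δ, hδ, fun α β h1 h2 h3 => ?_⟩
      have := hRP (hb (α / s) β (by
        rw [abs_div, abs_of_pos (by linarith : 0 < s), div_lt_iff₀ (by linarith)]; nlinarith) h2 h3)
      rw [Co_scale] at this
      convert this using 2
      rw [h']; field_simp
    rcases good_or_bad H.conic a d n r with hg | ⟨σ, η, hη, hbad⟩
    · exact hg
    exfalso
    obtain ⟨β', hβ', hst'⟩ := C'.stub
    refine H.caseB C hs hV (m := 1) hβ' ?_ (E := r) h (fun r' h0 h1 => hsP r' h0 (by linarith)) ?_ (Or.inr h')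
    · intro k h0 h1
      convert hst' k h0 h1 using 1
      unfold Co; module
    · intro ε hε
      have c1 : ContinuousAt (fun t : ℝ => |t * σ|) 0 := by fun_prop
      have c2 : ContinuousAt (fun t : ℝ => t * η) 0 := by fun_prop
      have e1 := c1.eventually_lt (g := fun _ => ε) continuousAt_const (by simpa using hε)
      have e2 := c2.eventually_lt (g := fun _ => ε) continuousAt_const (by simpa using hε)
      have e4 : ∀ᶠ t : ℝ in nhds 0, t < 1 := eventually_lt_nhds one_pos
      have := (nhdsWithin_le_nhds (s := Ioi (0:ℝ)) (e1.and (e2.and e4)))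
      obtain ⟨t, ⟨f1, f2, f4⟩, f5⟩ := (Filter.Eventually.and this self_mem_nhdsWithin).exists
      have f5' : 0 < t := f5
      exact ⟨r + t * σ, t * η, by simpa using f1, by positivity, f2, hbad t f5 f4.le⟩
  obtain ⟨δ1, hδ1, hP1⟩ := good_compact hgood
  obtain ⟨b, σ, η, hb0, hb1, hη, hbl⟩ := C.block
  obtain ⟨δ2, hδ2, hh⟩ := block_hides hb0 hb1 hη hbl
  obtain ⟨δ3, hδ3, hb⟩ := C.box
  set δ := min δ1 (min δ2 δ3)
  have hδ : 0 < δ := lt_min hδ1 (lt_min hδ2 hδ3)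
  have m1 : δ ≤ δ1 := min_le_left _ _
  have m2 : δ ≤ δ2 := (min_le_right _ _).trans (min_le_left _ _)
  have m3 : δ ≤ δ3 := (min_le_right _ _).trans (min_le_right _ _)
  have hsub : (fun q : ℝ × ℝ => Co a d n q.1 q.2) '' (Icc 1 s ×ˢ Ioo 0 δ) ⊆ R := by
    apply H.Rsw _ (half_convex _ _ _ _ _ (convex_Icc _ _) (convex_Ioo _ _))
    · rintro _ ⟨⟨s', k⟩, ⟨hs', ⟨k1, k2⟩⟩, rfl⟩
      simp only at hs' k1 k2 ⊢
      exact ⟨hP1 s' hs' k k1 (by linarith), hh s' k (by linarith [hs'.1]) k1 (by linarith)⟩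
    · refine ⟨_, ⟨(1, δ/2), ⟨⟨le_rfl, hs.le⟩, ⟨by simp only; linarith, by simp only; linarith⟩⟩, rfl⟩, ?_⟩
      have := hb 0 (δ/2) (by simpa using hδ3) (by linarith) (by linarith)
      simpa using this
  intro r hr
  constructor
  · apply acc (e := n) hδ
    intro τ h0 h1
    exact hsub ⟨(r, τ), ⟨hr, ⟨h0, h1⟩⟩, rfl⟩
  · have := axis_vis hsP (s := r) (by linarith [hr.1]) hr.2
    convert this using 1
    unfold Co; module

lemma M2 (H : Setting P O R a) {q : ℝ × ℝ} (hpO : a + d ∈ O) (hpV : a + d ∈ Vis P a)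
    (hpR : a + d ∈ closure R) (hqO : q ∈ O) (hqV : q ∈ Vis P a) (hqR : q ∈ closure R) :
    ∃ s : ℝ, q = a + s • d ∧ ∀ r ∈ uIcc 1 s, a + r • d ∈ closure R ∩ Vis P a := by
  have hd0 : d ≠ 0 := by
    rintro rfl; rw [add_zero] at hpO; exact H.aO hpO
  obtain ⟨n, C⟩ : ∃ n', Contact P O R a d n' := by
    rcases H.contact (cr_perp hd0) hpO hpV hpR with h | h
    · exact ⟨_, h⟩
    · exact ⟨_, h⟩
  by_cases hq : ∀ s : ℝ, 0 < s → q ≠ a + s • d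
  · exact (H.caseA C hqO hqV hqR hq).elim
  push Not at hq
  obtain ⟨s, hs, rfl⟩ := hq
  refine ⟨s, rfl, ?_⟩
  have hcr' : cr (s • d) n ≠ 0 := by
    have : cr (s • d) n = s * cr d n := by simp only [cr, Prod.smul_fst, Prod.smul_snd, smul_eq_mul]; ring
    rw [this]; exact mul_ne_zero hs.ne' C.hcr
  have hC' := H.contact hcr' hqO hqV hqR
  have hdd : s⁻¹ • (s • d) = d := by rw [smul_smul, inv_mul_cancel₀ hs.ne', one_smul]
  rcases lt_trichotomy s 1 with h | h | h
  · have h1 : 1 < s⁻¹ := (one_lt_inv₀ hs).2 h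
    rcases hC' with C' | C'
    · have := H.B_pos C' h1 (by rw [hdd]; exact C)
      intro r hr
      rw [uIcc_of_ge h.le] at hr
      have := this (r / s) ⟨by rw [le_div_iff₀ hs]; linarith [hr.1], by rw [div_le_iff₀ hs, inv_mul_cancel₀ hs.ne']; exact hr.2⟩
      rwa [smul_smul, div_mul_cancel₀ _ hs.ne'] at this
    · exact (H.B_neg C' h1 (by rw [hdd, neg_neg]; exact C)).elim
  · subst h
    intro r hr
    simp only [uIcc_self, mem_singleton_iff] at hr
    rw [hr, one_smul]; exact ⟨hpR, hpV⟩
  · rcases hC' with C' | C'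
    · rw [uIcc_of_le h.le]; exact H.B_pos C h C'
    · exact (H.B_neg C h C').elim

end Setting


namespace Setting
variable {P O R : Set (ℝ × ℝ)} {a d n : ℝ × ℝ}

lemma M0 (H : Setting P O R a) : ∃ p ∈ O, p ∈ Vis P a ∧ p ∈ closure R := by
  by_contra hno
  push Not at hno
  have hu : IsOpen (R ∩ O) := by
    rw [Metric.isOpen_iff]
    rintro y ⟨hyR, hyO⟩
    obtain ⟨ε, hε, h⟩ := H.Rlocal hyR
    obtain ⟨ε', hε', h'⟩ := Metric.isOpen_iff.1 H.Oopen y hyO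
    refine ⟨min ε ε', lt_min hε hε', fun w hw => ?_⟩
    have hwO := h' (Metric.ball_subset_ball (min_le_right _ _) hw)
    refine ⟨h w (H.OP hwO) ?_ (right_mem_segment ℝ _ _), hwO⟩
    rw [← mem_ball_iff_norm]
    exact Metric.ball_subset_ball (min_le_left _ _) hw
  have hv : IsOpen (closure R)ᶜ := isClosed_closure.isOpen_compl
  have hcov : O ⊆ (R ∩ O) ∪ (closure R)ᶜ := by
    intro y hy
    by_cases hyc : y ∈ closure R
    · left
      refine ⟨?_, hy⟩
      have hyV : y ∉ Vis P a := fun h => hno y hy h hyc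
      have hpre : IsPreconnected (insert y R) :=
        H.Rconn.subset_closure (subset_insert _ _) (insert_subset hyc subset_closure)
      obtain ⟨z, hz⟩ := H.Rne
      exact H.Rsw _ hpre (insert_subset ⟨H.OP hy, hyV⟩ H.Rsub) ⟨z, Or.inr hz, hz⟩ (mem_insert _ _)
    · exact Or.inr hyc
  have h1 : (O ∩ (R ∩ O)).Nonempty := by
    obtain ⟨z, hz⟩ := H.Rne
    obtain ⟨ε, hε, h⟩ := H.Rlocal hz
    obtain ⟨w, hwO, hw⟩ := Metric.mem_closure_iff.1 (H.dense (H.Rsub hz).1) ε hε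
    refine ⟨w, hwO, h w (H.OP hwO) ?_ (right_mem_segment ℝ _ _), hwO⟩
    rwa [← dist_eq_norm, dist_comm]
  have h2 : (O ∩ (closure R)ᶜ).Nonempty := by
    obtain ⟨ε, hε, h⟩ := H.conic a
    obtain ⟨w, hwO, hw⟩ := Metric.mem_closure_iff.1 (H.dense H.aP) ε hε
    refine ⟨w, hwO, hno w hwO ?_⟩
    intro t t0 t1
    rcases t0.eq_or_lt with rfl | t0
    · simpa using H.aP
    · exact (h (w - a) (by rwa [← dist_eq_norm, dist_comm]) t t0 t1).1 (by simpa using H.OP hwO)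
  obtain ⟨y, _, ⟨hyR, _⟩, hyc⟩ := H.Oconn _ _ hu hv hcov h1 h2
  exact hyc (subset_closure hyR)

lemma M1 (H : Setting P O R a) (hpO : a + d ∈ O) (hpV : a + d ∈ Vis P a)
    (hpR : a + d ∈ closure R) : ∃ δ > 0, ∀ α : ℝ, |α| < δ → a + (1 + α) • d ∈ closure R ∩ Vis P a := by
  have hd0 : d ≠ 0 := by
    rintro rfl; rw [add_zero] at hpO; exact H.aO hpO
  obtain ⟨n, C⟩ : ∃ n', Contact P O R a d n' := by
    rcases H.contact (cr_perp hd0) hpO hpV hpR with h | h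
    · exact ⟨_, h⟩
    · exact ⟨_, h⟩
  obtain ⟨δ1, h1, hb⟩ := C.box
  obtain ⟨δ2, h2, hv⟩ := H.axis_near n hpO hpV
  refine ⟨min δ1 δ2, lt_min h1 h2, fun α hα => ⟨?_, ?_⟩⟩
  · apply acc (e := n) h1
    intro τ g0 g1
    exact hb α τ (hα.trans_le (min_le_left _ _)) g0 g1
  · have := hv α (hα.trans_le (min_le_right _ _))
    convert this using 1
    unfold Co; module

/-- qualifying segments -/
def Qual (P O R : Set (ℝ × ℝ)) (a : ℝ × ℝ) (W : Set (ℝ × ℝ)) : Prop :=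
  (∃ u v : ℝ × ℝ, u ≠ v ∧ W = segment ℝ u v) ∧ W ⊆ closure R ∩ Vis P a ∧ (W ∩ O).Nonempty

lemma greatest (H : Setting P O R a) :
    ∃ W0, Qual P O R a W0 ∧ ∀ W, Qual P O R a W → W ⊆ W0 := by
  obtain ⟨p, hpO, hpV, hpR⟩ := H.M0
  obtain ⟨d, rfl⟩ : ∃ d, p = a + d := ⟨p - a, by simp⟩
  have hd0 : d ≠ 0 := by
    rintro rfl; rw [add_zero] at hpO; exact H.aO hpO
  set J := {s : ℝ | a + s • d ∈ closure R ∩ Vis P a} with hJ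
  have hJc : IsClosed J :=
    (isClosed_closure.inter (vis_closed H.cpt.isClosed a)).preimage (by fun_prop)
  have hJb : Bornology.IsBounded J := by
    obtain ⟨C, hC⟩ := H.cpt.isBounded.exists_norm_le
    rw [isBounded_iff_forall_norm_le]
    refine ⟨(C + ‖a‖) / ‖d‖, fun r hr => ?_⟩
    have := hC _ (vis_sub _ _ hr.2)
    rw [le_div_iff₀ (norm_pos_iff.2 hd0), ← norm_smul]
    have e : r • d = (a + r • d) - a := by module
    rw [e]; exact (norm_sub_le _ _).trans (by linarith)
  have h1J : (1:ℝ) ∈ J := by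
    show a + (1:ℝ) • d ∈ closure R ∩ Vis P a
    rw [one_smul]; exact ⟨hpR, hpV⟩
  set I := connectedComponentIn J 1 with hI
  have h1I : (1:ℝ) ∈ I := mem_connectedComponentIn h1J
  have hIJ : I ⊆ J := connectedComponentIn_subset _ _
  have hstep : ∀ s ∈ I, ∀ s', (∀ r ∈ uIcc s s', r ∈ J) → s' ∈ I := by
    intro s hs s' h
    rw [hI, connectedComponentIn_eq hs]
    exact isPreconnected_uIcc.subset_connectedComponentIn left_mem_uIcc h right_mem_uIcc
  have hIcl : IsClosed I := by
    apply isClosed_of_closure_subset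
    apply isPreconnected_connectedComponentIn.closure.subset_connectedComponentIn (subset_closure h1I)
    exact closure_minimal hIJ hJc
  have hIcp : IsCompact I := Metric.isCompact_of_isClosed_isBounded hIcl (hJb.subset hIJ)
  have hIconn : IsConnected I := ⟨⟨1, h1I⟩, isPreconnected_connectedComponentIn⟩
  have hIcc := eq_Icc_of_connected_compact hIconn hIcp
  set α := sInf I
  set β := sSup I
  obtain ⟨δ, hδ, hM1⟩ := H.M1 hpO hpV hpR
  have hnear : ∀ τ : ℝ, |τ| < δ → 1 + τ ∈ I := by
    intro τ hτ
    apply hstep 1 h1I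
    intro r hr
    have := hM1 (r - 1) (by
      rw [abs_lt] at hτ ⊢
      rcases mem_uIcc.1 hr with h | h
      · constructor <;> linarith
      · constructor <;> linarith)
    show a + r • d ∈ closure R ∩ Vis P a
    convert this using 3; ring
  have hab : α < β := by
    have x1 := hnear (δ/2) (by rw [abs_of_pos (by linarith)]; linarith)
    rw [hIcc] at x1 h1I
    linarith [h1I.1, x1.2]
  have hW : ∀ w, w ∈ segment ℝ (a + α • d) (a + β • d) ↔ ∃ s ∈ I, w = a + s • d := by
    intro w
    constructor
    · intro hw
      obtain ⟨t, t0, t1, rfl⟩ := seg_pt hw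
      refine ⟨α + t * (β - α), ?_, by module⟩
      rw [hIcc]; constructor <;> nlinarith
    · rintro ⟨s, hs, rfl⟩
      rw [hIcc] at hs
      have hba : 0 < β - α := by linarith
      have := pt_seg (a + α • d) (a + β • d) (t := (s - α) / (β - α))
        (div_nonneg (by linarith [hs.1]) hba.le) (by rw [div_le_one hba]; linarith [hs.2])
      convert this using 1
      have e : a + β • d - (a + α • d) = (β - α) • d := by module
      rw [e, smul_smul, div_mul_cancel₀ _ hba.ne']; module
  refine ⟨segment ℝ (a + α • d) (a + β • d), ⟨⟨_, _, ?_, rfl⟩, ?_, ?_⟩, ?_⟩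
  · intro h
    have h2 : (β - α) • d = 0 := by
      have e : (β - α) • d = (a + β • d) - (a + α • d) := by module
      rw [e, h, sub_self]
    rcases smul_eq_zero.1 h2 with h3 | h3
    · linarith
    · exact hd0 h3
  · intro w hw
    obtain ⟨s, hs, rfl⟩ := (hW w).1 hw
    exact hIJ hs
  · exact ⟨a + d, (hW _).2 ⟨1, h1I, by rw [one_smul]⟩, hpO⟩
  · rintro W ⟨⟨u, v, huv, hWs⟩, hWK, q, hqW, hqO⟩ w hw
    have hconv : Convex ℝ W := by rw [hWs]; exact convex_segment _ _
    obtain ⟨s, hqs, hs⟩ := H.M2 hpO hpV hpR hqO (hWK hqW).2 (hWK hqW).1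
    have hsI : s ∈ I := hstep 1 h1I s hs
    have hmem : ∀ t : ℝ, 0 ≤ t → t ≤ 1 → q + t • (w - q) ∈ W := fun t t0 t1 =>
      hconv.segment_subset hqW hw (pt_seg q w t0 t1)
    obtain ⟨t, t0, t1, htO⟩ : ∃ t : ℝ, 0 < t ∧ t ≤ 1 ∧ q + t • (w - q) ∈ O := by
      have c : ContinuousAt (fun t : ℝ => q + t • (w - q)) 0 := by fun_prop
      have e1 : ∀ᶠ t in nhds (0:ℝ), q + t • (w - q) ∈ O :=
        c (H.Oopen.mem_nhds (by simpa using hqO))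
      have e4 : ∀ᶠ t : ℝ in nhds 0, t < 1 := eventually_lt_nhds one_pos
      obtain ⟨t, ⟨f1, f2⟩, f3⟩ := (Filter.Eventually.and
        (nhdsWithin_le_nhds (s := Ioi (0:ℝ)) (e1.and e4)) self_mem_nhdsWithin).exists
      exact ⟨t, f3, f2.le, f1⟩
    have hK := hWK (hmem t t0.le t1)
    obtain ⟨s', hs'e, _⟩ := H.M2 hpO hpV hpR htO hK.2 hK.1
    have hdiff : w - q = ((s' - s) / t) • d := by
      have : t • (w - q) = (s' - s) • d := by
        have e : t • (w - q) = (q + t • (w - q)) - q := by module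
        rw [e, hs'e, hqs]; module
      rw [div_eq_inv_mul, mul_smul, ← this, smul_smul, inv_mul_cancel₀ t0.ne', one_smul]
    set k := (s' - s) / t
    refine (hW w).2 ⟨s + k, ?_, ?_⟩
    · apply hstep s hsI
      intro r hr
      rw [← segment_eq_uIcc] at hr
      rw [segment_eq_image'] at hr
      obtain ⟨τ, ⟨τ0, τ1⟩, rfl⟩ := hr
      have := hWK (hmem τ τ0 τ1)
      show a + (s + τ • (s + k - s)) • d ∈ closure R ∩ Vis P a
      convert this using 1
      rw [hdiff, hqs]
      simp only [smul_eq_mul]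
      module
    · have : w = q + (w - q) := by module
      rw [this, hdiff, hqs]; module

end Setting

lemma vis_eq (Q : SimplePolygon) (a : ℝ × ℝ) : Q.visPoly a = Vis Q.region a := by
  ext x
  constructor
  · rintro ⟨_, h⟩ t t0 t1
    exact h (pt_seg a x t0 t1)
  · intro h
    refine ⟨vis_sub _ _ h, fun w hw => ?_⟩
    obtain ⟨t, t0, t1, rfl⟩ := seg_pt hw
    exact h t t0 t1

lemma setting_of (Q : SimplePolygon) (a : ℝ × ℝ) (ha : a ∈ Q.boundary)
    (x : ℝ × ℝ) (hx : x ∈ Q.region \ Q.visPoly a) :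
    Setting Q.region (Q.region \ Q.boundary) (connectedComponentIn (Q.region \ Q.visPoly a) x) a := by
  have hBP : Q.boundary ⊆ Q.region := subset_union_left
  refine ⟨Q.region_compact, Q.compl_conn, Q.interior_open, Q.interior_conn, sdiff_subset, ?_,
    Q.conic_region, hBP ha, fun h => h.2 ha, ?_, isPreconnected_connectedComponentIn,
    ⟨x, mem_connectedComponentIn hx⟩, ?_⟩
  · intro y hy
    by_cases h : y ∈ Q.boundary
    · exact Q.boundary_sub_closure_interior h
    · exact subset_closure ⟨hy, h⟩
  · rw [← vis_eq]; exact connectedComponentIn_subset _ _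
  · rw [← vis_eq]
    rintro S hS hsub ⟨w, hwS, hwR⟩
    rw [connectedComponentIn_eq hwR]
    exact hS.subset_connectedComponentIn hwS hsub

lemma qual_iff (Q : SimplePolygon) (a : ℝ × ℝ) (R W : Set (ℝ × ℝ)) :
    ((∃ u v : ℝ × ℝ, u ≠ v ∧ W = segment ℝ u v) ∧
        W ⊆ closure R ∧ W ⊆ closure (Q.visPoly a) ∧ ¬ W ⊆ Q.boundary) ↔
    Setting.Qual Q.region (Q.region \ Q.boundary) R a W := by
  rw [vis_eq, (vis_closed Q.region_compact.isClosed a).closure_eq]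
  constructor
  · rintro ⟨h1, h2, h3, h4⟩
    refine ⟨h1, subset_inter h2 h3, ?_⟩
    obtain ⟨w, hw, hwb⟩ := not_subset.1 h4
    exact ⟨w, hw, vis_sub _ _ (h3 hw), hwb⟩
  · rintro ⟨h1, h2, w, hw, hwO⟩
    exact ⟨h1, fun y hy => (h2 hy).1, fun y hy => (h2 hy).2, fun h => hwO.2 (h hw)⟩

/--
Each pocket of a visibility polygon has exactly one window: for a
point `a` on the boundary of a simple polygon `P`, every connected component `R` of
`P \ VP(P,a)` is attached to the visibility polygon along exactly one line segment
(window).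
-/
theorem pocket_has_unique_window (Q : SimplePolygon) (a : ℝ × ℝ)
    (ha : a ∈ Q.boundary)
    (x : ℝ × ℝ) (hx : x ∈ Q.region \ Q.visPoly a)
    (R : Set (ℝ × ℝ)) (hR : R = connectedComponentIn (Q.region \ Q.visPoly a) x) :
    ∃! W : Set (ℝ × ℝ), IsWindow Q a R W := by
  obtain ⟨W0, hW0, hmax⟩ := (setting_of Q a ha x hx).greatest
  rw [← hR] at hW0 hmax
  refine ⟨W0, ?_, ?_⟩
  · obtain ⟨h1, h2, h3, h4⟩ := (qual_iff Q a R W0).2 hW0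
    exact ⟨h1, h2, h3, h4, fun W' hW' hsub =>
      Subset.antisymm (hmax W' ((qual_iff Q a R W').1 hW')) hsub⟩
  · rintro W ⟨h1, h2, h3, h4, h5⟩
    have hsub := hmax W ((qual_iff Q a R W).1 ⟨h1, h2, h3, h4⟩)
    exact (h5 W0 ((qual_iff Q a R W0).2 hW0) hsub).symm
end
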